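/- arXiv:2410.10191 — 2 statements merged into one kernel-verified Lean document; each statement's English description precedes it below -/
import Mathlib

section
/- Let G be an edge-weighted graph admitting a tree decomposition in which every bag has size at most k. Then for every real ε with 0 < ε ≤ 1 and every real r > 0, G admits an r-cover 𝒟 such that every member of 𝒟 has weak diameter at most (4+ε)·r and the overlap of 𝒟 is at most (2⌈12/ε⌉+k+1)^(3⌈12/ε⌉+4). -/
open scoped ENNReal

namespace ScatterDim

variable {V : Type}





/-- Total weight of a walk in an edge-weighted graph. -/
noncomputable def walkWeight {G : SimpleGraph V} (w : Sym2 V → ℝ≥0∞)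
    {u v : V} (p : G.Walk u v) : ℝ≥0∞ :=
  (p.edges.map w).sum

/-- Shortest-path metric of an edge-weighted graph: the infimum of the total
weights of walks between the two vertices. -/
noncomputable def gdist (G : SimpleGraph V) (w : Sym2 V → ℝ≥0∞) (u v : V) : ℝ≥0∞ :=
  ⨅ p : G.Walk u v, walkWeight w p

/-- Shortest-path distance measured within the subgraph induced on `S`
(`⊤` if one of the endpoints is not in `S`). -/
noncomputable def distOn (G : SimpleGraph V) (w : Sym2 V → ℝ≥0∞) (S : Set V)
    (u v : V) : ℝ≥0∞ :=
  ⨅ (hu : u ∈ S), ⨅ (hv : v ∈ S), ⨅ (p : (G.induce S).Walk ⟨u, hu⟩ ⟨v, hv⟩),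
    (p.edges.map (fun e => w (e.map Subtype.val))).sum

/-- Distance between two sets of vertices inside the subgraph induced on `S`. -/
noncomputable def setDistOn (G : SimpleGraph V) (w : Sym2 V → ℝ≥0∞) (S : Set V)
    (A B : Set V) : ℝ≥0∞ :=
  ⨅ a ∈ A, ⨅ b ∈ B, distOn G w S a b

/-- Distance from a point to a set. -/
noncomputable def pdist (G : SimpleGraph V) (w : Sym2 V → ℝ≥0∞) (u : V) (X : Set V) : ℝ≥0∞ :=
  ⨅ x ∈ X, gdist G w u x

/-- `Y` is weakly `r`-reachable from `X` (with respect to the partition `P`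
ordered by `le`): there is a path of total weight at most `r` from a vertex of `X`
to a vertex of `Y` in the subgraph induced on the union of the parts `Z` with `Y ⪯ Z`. -/
def WReach (G : SimpleGraph V) (w : Sym2 V → ℝ≥0∞) (P : Set (Set V))
    (le : Set V → Set V → Prop) (r : ℝ) (X Y : Set V) : Prop :=
  setDistOn G w (⋃₀ {Z | Z ∈ P ∧ le Y Z}) X Y ≤ ENNReal.ofReal r

/-- The weak coloring number of `G` with respect to the partition `P`
and the order `le`: the maximum over `X ∈ P` of the number of parts weakly
`r`-reachable from `X`. -/
noncomputable def wcol (G : SimpleGraph V) (w : Sym2 V → ℝ≥0∞) (P : Set (Set V))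
    (le : Set V → Set V → Prop) (r : ℝ) : ℕ :=
  ⨆ X ∈ P, {Y | Y ∈ P ∧ WReach G w P le r X Y}.ncard

/-- `le` is a total (linear) order on the collection `P`. -/
def IsLinearOrderOn {α : Type} (P : Set α) (le : α → α → Prop) : Prop :=
  (∀ X ∈ P, le X X) ∧
  (∀ X ∈ P, ∀ Y ∈ P, le X Y → le Y X → X = Y) ∧
  (∀ X ∈ P, ∀ Y ∈ P, ∀ Z ∈ P, le X Y → le Y Z → le X Z) ∧
  (∀ X ∈ P, ∀ Y ∈ P, le X Y ∨ le Y X)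

/-- An `ε`-ladder of width `r` and length `ℓ` in the metric `dist`. -/
def IsLadder (dist : V → V → ℝ≥0∞) (ε r : ℝ) (ℓ : ℕ) (x p : Fin ℓ → V) : Prop :=
  (∀ i j : Fin ℓ, j < i → dist (p j) (x i) ≤ ENNReal.ofReal r) ∧
  (∀ i : Fin ℓ, ENNReal.ofReal ((1 + ε) * r) < dist (p i) (x i))

/-- `G` contains the complete graph on `h` vertices as a minor, witnessed by
pairwise disjoint connected nonempty branch sets that are pairwise adjacent. -/
def HasCompleteMinor (G : SimpleGraph V) (h : ℕ) : Prop :=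
  ∃ B : Fin h → Set V,
    (∀ i, (G.induce (B i)).Connected) ∧
    (∀ i j, i ≠ j → Disjoint (B i) (B j)) ∧
    (∀ i j, i ≠ j → ∃ u ∈ B i, ∃ v ∈ B j, G.Adj u v)

/-- `(T, bag)` is a tree decomposition of `G`. -/
def IsTreeDecompOf {ι : Type} (G : SimpleGraph V) (T : SimpleGraph ι) (bag : ι → Set V) : Prop :=
  T.IsTree ∧
  (∀ u v : V, G.Adj u v → ∃ t, u ∈ bag t ∧ v ∈ bag t) ∧
  (∀ v : V, (T.induce {t | v ∈ bag t}).Connected)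

/-- `G` has treewidth at most `n`. -/
def TreewidthAtMost (G : SimpleGraph V) (n : ℕ) : Prop :=
  ∃ (ι : Type) (T : SimpleGraph ι) (bag : ι → Set V),
    IsTreeDecompOf G T bag ∧ ∀ t, (bag t).ncard ≤ n + 1

/-- `D` is an `r`-cover of the edge-weighted graph `(G, w)`. -/
def IsCover (G : SimpleGraph V) (w : Sym2 V → ℝ≥0∞) (r : ℝ) (D : Set (Set V)) : Prop :=
  ∀ v : V, ∃ A ∈ D, ∀ u : V, gdist G w v u ≤ ENNReal.ofReal r → u ∈ A

/-!
Root the tree decomposition. The members of the cover are clusters grown around cores, where a core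
is a vertex together with a region, lying below some node, inside which distances are measured.
Cores are found by induction on the bag size. Going down from the root, select a node unless its bag
comes within distance less than `δ` of the bag of a selected ancestor, that is, meets its halo. The
vertices in the bag of a selected node become centres of cores, and these serve every connected set
meeting its halo. A skipped node loses a vertex of its bag when the halo of the selected ancestor is
deleted, so the induction hypothesis applies to what is left.

For the overlap, let `m` be the lowest selected ancestor of a vertex `y` whose halo misses `y`.
A walk from `y` to a core belonging to a higher selected node has to cross the bag of `m`, and
reaching that bag costs at least `δ`. Inducting on both the bag size and the distance measured in
units of `δ`, this bounds the number of clusters through `y`.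
-/

section Dominators

variable {ι : Type*} {T : SimpleGraph ι} {o a b n : ι}

/-- `a` dominates `n` from the root `o`: every walk from `o` to `n` passes through `a`. In a tree
rooted at `o` this is the ancestor relation; quantifying over all walks rather than using the unique
path makes its order properties valid in every connected graph. -/
def Dominates (T : SimpleGraph ι) (o a n : ι) : Prop :=
  ∀ p : T.Walk o n, a ∈ p.support

theorem Dominates.refl (a : ι) : Dominates T o a a :=
  fun p => p.end_mem_support

theorem Dominates.trans (hab : Dominates T o a b) (hbn : Dominates T o b n) :
    Dominates T o a n := by
  classical
  intro p
  exact p.support_takeUntil_subset_support (hbn p) (hab (p.takeUntil b (hbn p)))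

theorem Dominates.antisymm (hT : T.Connected) (hab : Dominates T o a b)
    (hba : Dominates T o b a) : a = b := by
  classical
  by_contra hne
  obtain ⟨p, hp⟩ := hT.exists_isPath o a
  exact p.endpoint_notMem_support_takeUntil hp (hba p) hne (hab (p.takeUntil b (hba p)))

theorem Dominates.total (hT : T.Connected) (ha : Dominates T o a n) (hb : Dominates T o b n) :
    Dominates T o a b ∨ Dominates T o b a := by
  classical
  by_contra! ⟨hab, hba⟩
  obtain ⟨p, hap⟩ := not_forall.1 hab
  obtain ⟨q, hbq⟩ := not_forall.1 hba
  obtain ⟨r, hr⟩ := hT.exists_isPath o n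
  have hbr : b ∈ (r.dropUntil a (ha r)).support :=
    ((SimpleGraph.Walk.mem_support_append_iff ..).1 (hb (q.append _))).resolve_left hbq
  have har : a ∈ ((r.dropUntil a (ha r)).dropUntil b hbr).support :=
    ((SimpleGraph.Walk.mem_support_append_iff ..).1 (ha (p.append _))).resolve_left hap
  have hne : a ≠ b := fun h => hap (h ▸ p.end_mem_support)
  have hpath := hr.dropUntil (ha r)
  rw [← SimpleGraph.Walk.take_spec _ hbr] at hpath
  exact hpath.ne_of_mem_support_of_append hne (SimpleGraph.Walk.start_mem_support _) har rfl

/-- The dominator order of a connected graph with root `o`, with the root as its least element. -/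
abbrev dominatorOrder (hT : T.Connected) (o : ι) : PartialOrder ι where
  le := Dominates T o
  le_refl := Dominates.refl
  le_trans _ _ _ := Dominates.trans
  le_antisymm _ _ := Dominates.antisymm hT

theorem finite_setOf_dominates (hT : T.Connected) (o n : ι) : {a | Dominates T o a n}.Finite := by
  obtain ⟨p⟩ := hT.preconnected o n
  exact p.support.finite_toSet.subset fun a ha => ha p

theorem Dominates.eq_of_adj {m : ι} (hn : Dominates T o a n) (hm : ¬ Dominates T o a m)
    (h : T.Adj n m) : a = n := by
  obtain ⟨p, hp⟩ := not_forall.1 hm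
  have ha := hn (p.concat h.symm)
  rw [SimpleGraph.Walk.support_concat, List.mem_append] at ha
  exact List.mem_singleton.1 (ha.resolve_left hp)

theorem Dominates.mem_of_preconnected_induce {N : Set ι} (hN : (T.induce N).Preconnected)
    {m : ι} (hnN : n ∈ N) (hmN : m ∈ N) (hn : Dominates T o a n) (hm : ¬ Dominates T o a m) :
    a ∈ N := by
  obtain ⟨p⟩ := hN ⟨n, hnN⟩ ⟨m, hmN⟩
  obtain ⟨x, y, hxy, hx, hy⟩ : ∃ x y : N, (T.induce N).Adj x y ∧
      Dominates T o a x ∧ ¬ Dominates T o a y := by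
    obtain ⟨d, -, hd⟩ := p.exists_boundary_dart {x | Dominates T o a x} hn hm
    exact ⟨d.fst, d.snd, d.adj, hd⟩
  exact hx.eq_of_adj hy hxy ▸ x.2

theorem dominates_of_mem_support_isPath (hT : T.IsAcyclic) {p : T.Walk o n} (hp : p.IsPath)
    (ha : a ∈ p.support) : Dominates T o a n := by
  classical
  intro q
  have hpq : (⟨p, hp⟩ : T.Path o n) = q.toPath := (hT.subsingleton_path o n).elim _ _
  exact q.support_toPath_subset_support (hpq ▸ ha)

theorem dominates_or_dominates_of_adj (hT : T.IsTree) (o : ι) {x y : ι} (h : T.Adj x y) :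
    Dominates T o x y ∨ Dominates T o y x := by
  obtain ⟨p, hp⟩ := hT.connected.exists_isPath o x
  by_cases hy : y ∈ p.support
  · exact .inr (dominates_of_mem_support_isPath hT.isAcyclic hp hy)
  · exact .inl (dominates_of_mem_support_isPath hT.isAcyclic (hp.concat hy h) (by simp))

end Dominators

section Order

theorem wellFoundedLT_of_finite_Iic {α : Type*} [PartialOrder α]
    (h : ∀ a : α, (Set.Iic a).Finite) : WellFoundedLT α :=
  StrictMono.wellFoundedLT (f := fun a => (Set.Iic a).ncard) fun _ b hab =>
    Set.ncard_lt_ncard (Set.Iic_ssubset_Iic.2 hab) (h b)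

theorem exists_isGreatest_of_isChain {α : Type*} [PartialOrder α] {s : Set α} (hfin : s.Finite)
    (hne : s.Nonempty) (hs : IsChain (· ≤ ·) s) : ∃ a, IsGreatest s a := by
  obtain ⟨a, ha⟩ := hfin.exists_maximal hne
  exact ⟨a, ha.prop, fun b hb => (hs.total hb ha.prop).elim id (ha.le_of_ge hb)⟩

theorem exists_kernel_of_wellFounded {α : Type*} {R : α → α → Prop} (hR : WellFounded R)
    (X : Set α) : ∃ K : Set α, ∀ t, t ∈ K ↔ t ∈ X ∧ ∀ a ∈ K, ¬ R a t := by
  let inKernel : α → Prop := hR.fix fun t ih => t ∈ X ∧ ∀ a, ∀ h : R a t, ¬ ih a h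
  refine ⟨{t | inKernel t}, fun t => ?_⟩
  have h_fix : inKernel t = (t ∈ X ∧ ∀ a, R a t → ¬ inKernel a) := hR.fix_eq _ t
  simp only [Set.mem_ofPred_eq, h_fix]
  tauto

theorem exists_forall_le_of_connected {α β : Type*} [PartialOrder α] [WellFoundedLT α]
    (hchain : ∀ a : α, IsChain (· ≤ ·) (Set.Iic a)) {H : SimpleGraph β} (hH : H.Connected)
    {f : β → α} (hf : ∀ x y, H.Adj x y → f x ≤ f y ∨ f y ≤ f x) : ∃ x, ∀ y, f x ≤ f y := by
  obtain ⟨_, ⟨x, rfl⟩, hmin⟩ :=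
    exists_minimal_of_wellFoundedLT (· ∈ Set.range f) ⟨_, hH.nonempty.some, rfl⟩
  refine ⟨x, fun y => ?_⟩
  by_contra hxy
  obtain ⟨p⟩ := hH.preconnected x y
  obtain ⟨d, -, hfst, hsnd⟩ := p.exists_boundary_dart {z | f x ≤ f z} le_rfl hxy
  have hle : f d.snd ≤ f d.fst := (hf _ _ d.adj).resolve_left fun h => hsnd (le_trans hfst h)
  exact hsnd (((hchain (f d.fst)).total hfst hle).elim id (hmin ⟨_, rfl⟩))

theorem encard_biUnion_le_mul {α β : Type*} {s : Set α} {f : α → Set β} {n : ℕ∞}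
    (hf : ∀ a ∈ s, (f a).encard ≤ n) : (⋃ a ∈ s, f a).encard ≤ s.encard * n := by
  rcases s.finite_or_infinite with hs | hs
  · lift s to Finset α using hs
    calc (⋃ a ∈ s, f a).encard ≤ ∑ a ∈ s, (f a).encard := s.set_encard_biUnion_le f
      _ ≤ s.card • n := Finset.sum_le_card_nsmul _ _ _ hf
      _ = (s : Set α).encard * n := by rw [nsmul_eq_mul, Set.encard_coe_eq_coe_finsetCard]
  · rcases eq_or_ne n 0 with rfl | hn
    · have h_empty : ∀ a ∈ s, f a = ∅ := by simpa using hf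
      simp +contextual [h_empty]
    · simp [hs.encard_eq, ENat.top_mul hn]

end Order

section WeightedWalks

variable {G : SimpleGraph V} {w : Sym2 V → ℝ≥0∞} {E E' : Set V} {x y z : V} {ρ σ : ℝ≥0∞}

theorem walkWeight_append (w : Sym2 V → ℝ≥0∞) (p : G.Walk x y) (q : G.Walk y z) :
    walkWeight w (p.append q) = walkWeight w p + walkWeight w q := by
  simp [walkWeight]

theorem walkWeight_reverse (w : Sym2 V → ℝ≥0∞) (p : G.Walk x y) :
    walkWeight w p.reverse = walkWeight w p := by
  simp [walkWeight, List.sum_reverse]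

theorem walkWeight_takeUntil_le [DecidableEq V] (w : Sym2 V → ℝ≥0∞) (p : G.Walk x y)
    (hz : z ∈ p.support) : walkWeight w (p.takeUntil z hz) ≤ walkWeight w p := by
  conv_rhs => rw [← p.take_spec hz, walkWeight_append]
  exact le_self_add

theorem gdist_lt_iff : gdist G w x y < ρ ↔ ∃ p : G.Walk x y, walkWeight w p < ρ :=
  iInf_lt_iff

theorem gdist_lt_of_mem_support {p : G.Walk x y} (hp : walkWeight w p < ρ) (hz : z ∈ p.support) :
    gdist G w x z < ρ := by
  classical
  exact gdist_lt_iff.2 ⟨_, (walkWeight_takeUntil_le w p hz).trans_lt hp⟩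

theorem connected_induce_ball (hρ : 0 < ρ) (x : V) :
    (G.induce {y | gdist G w x y < ρ}).Connected := by
  have hx : gdist G w x x < ρ := gdist_lt_iff.2 ⟨.nil, by simpa [walkWeight] using hρ⟩
  refine G.induce_connected_of_patches x hx fun {y} hy => ?_
  obtain ⟨p, hp⟩ := gdist_lt_iff.1 hy
  exact ⟨{z | z ∈ p.support}, fun z hz => gdist_lt_of_mem_support hp hz, p.start_mem_support,
    p.end_mem_support, p.connected_induce_support.preconnected _ _⟩

/-- Some walk from `x` to `y` inside `E` has total weight less than `ρ`. The strict inequality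
survives passing to the infimum over walks, and makes the relation empty for `ρ = 0`. -/
def ReachableIn (G : SimpleGraph V) (w : Sym2 V → ℝ≥0∞) (E : Set V) (ρ : ℝ≥0∞) (x y : V) :
    Prop :=
  ∃ p : G.Walk x y, (∀ z ∈ p.support, z ∈ E) ∧ walkWeight w p < ρ

namespace ReachableIn

theorem refl (hx : x ∈ E) (hρ : 0 < ρ) : ReachableIn G w E ρ x x :=
  ⟨.nil, by simpa using hx, by simpa [walkWeight] using hρ⟩

theorem symm (h : ReachableIn G w E ρ x y) : ReachableIn G w E ρ y x := by
  obtain ⟨p, hpE, hp⟩ := h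
  exact ⟨p.reverse, by simpa using hpE, by rwa [walkWeight_reverse]⟩

theorem trans (hxy : ReachableIn G w E ρ x y) (hyz : ReachableIn G w E σ y z) :
    ReachableIn G w E (ρ + σ) x z := by
  obtain ⟨p, hpE, hp⟩ := hxy
  obtain ⟨q, hqE, hq⟩ := hyz
  refine ⟨p.append q, fun v hv => ?_, ?_⟩
  · exact ((SimpleGraph.Walk.mem_support_append_iff ..).1 hv).elim (hpE v) (hqE v)
  · rw [walkWeight_append]
    exact ENNReal.add_lt_add hp hq

theorem mono (h : ReachableIn G w E ρ x y) (hE : E ⊆ E') (hρ : ρ ≤ σ) :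
    ReachableIn G w E' σ x y := by
  obtain ⟨p, hpE, hp⟩ := h
  exact ⟨p, fun z hz => hE (hpE z hz), hp.trans_le hρ⟩

theorem left_mem (h : ReachableIn G w E ρ x y) : x ∈ E := by
  obtain ⟨p, hpE, -⟩ := h
  exact hpE x p.start_mem_support

theorem gdist_lt (h : ReachableIn G w E ρ x y) : gdist G w x y < ρ := by
  obtain ⟨p, -, hp⟩ := h
  exact gdist_lt_iff.2 ⟨p, hp⟩

theorem of_gdist_lt (h : gdist G w x y < ρ) : ReachableIn G w {z | gdist G w x z < ρ} ρ x y := by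
  obtain ⟨p, hp⟩ := gdist_lt_iff.1 h
  exact ⟨p, fun z hz => gdist_lt_of_mem_support hp hz, hp⟩

end ReachableIn

end WeightedWalks

section RootedDecomposition

variable {ι : Type*} [PartialOrder ι] {G : SimpleGraph V} {bag : ι → Set V} {a b q t : ι}

/-- A rooted tree decomposition, recorded through the ancestor order on its nodes: `a ≤ t` means
that `a` is an ancestor of `t`. The field `mem_bag_of_le_of_not_le` says that a vertex occurring
both inside and outside the subtree of `a` lies in the bag of `a`. -/
structure IsRootedDecomp (G : SimpleGraph V) (bag : ι → Set V) : Prop where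
  finite_Iic (t : ι) : (Set.Iic t).Finite
  isChain_Iic (t : ι) : IsChain (· ≤ ·) (Set.Iic t)
  exists_mem_bag_of_adj {u v : V} : G.Adj u v → ∃ t, u ∈ bag t ∧ v ∈ bag t
  exists_isLeast (v : V) : ∃ t, IsLeast {t | v ∈ bag t} t
  mem_bag_of_le_of_not_le {v : V} {a q t : ι} :
    v ∈ bag q → v ∈ bag t → a ≤ q → ¬ a ≤ t → v ∈ bag a

theorem IsTreeDecompOf.exists_isRootedDecomp {ι : Type} {T : SimpleGraph ι} {bag : ι → Set V}
    (h : IsTreeDecompOf G T bag) : ∃ _ : PartialOrder ι, IsRootedDecomp G bag := by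
  obtain ⟨hT, hadj, hconn⟩ := h
  obtain ⟨o⟩ := hT.connected.nonempty
  let := dominatorOrder hT.connected o
  have hfin : ∀ t : ι, (Set.Iic t).Finite := finite_setOf_dominates hT.connected o
  have hchain : ∀ t : ι, IsChain (· ≤ ·) (Set.Iic t) :=
    fun t a ha b hb _ => Dominates.total hT.connected ha hb
  have := wellFoundedLT_of_finite_Iic hfin
  refine ⟨inferInstance, hfin, hchain, hadj _ _, fun v => ?_, fun {v} _ _ _ hq ht => ?_⟩
  · obtain ⟨m, hm⟩ := exists_forall_le_of_connected hchain (hconn v) (f := Subtype.val)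
      fun s t hst => dominates_or_dominates_of_adj hT o hst
    exact ⟨m, m.2, fun t ht => hm ⟨t, ht⟩⟩
  · exact Dominates.mem_of_preconnected_induce (hconn v).preconnected hq ht

/-- The vertices occurring in the bags of the subtree of `a`. -/
def below (bag : ι → Set V) (a : ι) : Set V :=
  {v | ∃ t, a ≤ t ∧ v ∈ bag t}

theorem below_anti (hab : a ≤ b) : below bag b ⊆ below bag a := by
  rintro v ⟨t, hbt, hv⟩
  exact ⟨t, hab.trans hbt, hv⟩

theorem bag_subset_below (a : ι) : bag a ⊆ below bag a :=
  fun _ hv => ⟨a, le_rfl, hv⟩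

namespace IsRootedDecomp

theorem mem_bag_of_mem_below {v : V} (hG : IsRootedDecomp G bag) (hv : v ∈ below bag a)
    (hvt : v ∈ bag t) (hat : ¬ a ≤ t) : v ∈ bag a := by
  obtain ⟨q, haq, hvq⟩ := hv
  exact hG.mem_bag_of_le_of_not_le hvq hvt haq hat

theorem exists_append_eq_of_not_le (hG : IsRootedDecomp G bag) {x c : V} (p : G.Walk x c)
    (hx : x ∈ below bag a) (hc : c ∈ bag t) (hat : ¬ a ≤ t) :
    ∃ y ∈ bag a, ∃ (p₁ : G.Walk x y) (p₂ : G.Walk y c),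
      p₁.append p₂ = p ∧ ∀ z ∈ p₁.support, z ∈ below bag a := by
  induction p with
  | nil => exact ⟨_, hG.mem_bag_of_mem_below hx hc hat, .nil, .nil, rfl, by simpa using hx⟩
  | @cons x z c h p ih =>
    by_cases hxa : x ∈ bag a
    · exact ⟨x, hxa, .nil, .cons h p, rfl, by simpa using hx⟩
    obtain ⟨s, hxs, hzs⟩ := hG.exists_mem_bag_of_adj h
    have has : a ≤ s := by
      by_contra has
      exact hxa (hG.mem_bag_of_mem_below hx hxs has)
    obtain ⟨y, hy, p₁, p₂, rfl, hp₁⟩ := ih ⟨s, has, hzs⟩ hc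
    exact ⟨y, hy, .cons h p₁, p₂, rfl, by simpa using ⟨hx, hp₁⟩⟩

/-- The node closest to the root among those whose bag contains `v`. -/
noncomputable def top (hG : IsRootedDecomp G bag) (v : V) : ι :=
  (hG.exists_isLeast v).choose

theorem mem_bag_top (hG : IsRootedDecomp G bag) (v : V) : v ∈ bag (hG.top v) :=
  (hG.exists_isLeast v).choose_spec.1

theorem top_le (hG : IsRootedDecomp G bag) {v : V} (hv : v ∈ bag t) : hG.top v ≤ t :=
  (hG.exists_isLeast v).choose_spec.2 hv

theorem exists_forall_top_le (hG : IsRootedDecomp G bag) {Z : Set V}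
    (hZ : (G.induce Z).Connected) : ∃ z ∈ Z, ∀ u ∈ Z, hG.top z ≤ hG.top u := by
  have := wellFoundedLT_of_finite_Iic hG.finite_Iic
  obtain ⟨z, hz⟩ := exists_forall_le_of_connected hG.isChain_Iic hZ (f := fun u => hG.top u.1)
    fun u v huv => by
      obtain ⟨t, hut, hvt⟩ := hG.exists_mem_bag_of_adj huv
      exact (hG.isChain_Iic t).total (hG.top_le hut) (hG.top_le hvt)
  exact ⟨z, z.2, fun u hu => hz ⟨u, hu⟩⟩

end IsRootedDecomp

end RootedDecomposition

section CoreFamilies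

variable {ι : Type*} [PartialOrder ι] {G : SimpleGraph V} {w : Sym2 V → ℝ≥0∞} {bag : ι → Set V}
  {δ : ℝ≥0∞} {S : Set V} {X K : Set ι} {a b q t : ι} {j s : ℕ} {y : V}

theorem IsRootedDecomp.reachableIn_or_reachableIn_of_not_le (hG : IsRootedDecomp G bag)
    {E : Set V} {σ τ : ℝ≥0∞} {x c : V} (h : ReachableIn G w E (σ + τ) x c)
    (hx : x ∈ below bag a) (hc : c ∈ bag t) (hat : ¬ a ≤ t) :
    ∃ y ∈ bag a, ReachableIn G w (E ∩ below bag a) σ x y ∨ ReachableIn G w E τ y c := by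
  obtain ⟨p, hpE, hp⟩ := h
  obtain ⟨y, hy, p₁, p₂, rfl, hp₁⟩ := hG.exists_append_eq_of_not_le p hx hc hat
  simp only [SimpleGraph.Walk.mem_support_append_iff] at hpE
  refine ⟨y, hy, (lt_or_ge (walkWeight w p₁) σ).imp (fun h₁ => ?_) (fun h₁ => ?_)⟩
  · exact ⟨p₁, fun z hz => ⟨hpE z (.inl hz), hp₁ z hz⟩, h₁⟩
  · rw [walkWeight_append] at hp
    have h₂ : σ + walkWeight w p₂ < σ + τ := lt_of_le_of_lt (by gcongr) hp
    exact ⟨p₂, fun z hz => hpE z (.inr hz), lt_of_add_lt_add_left h₂⟩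

/-- A potential cluster of a cover: the vertices of `region` close to `center`, where distances are
measured inside `region`, and `node` is a node of the decomposition whose bag contains `center`. -/
structure Core (V : Type*) (ι : Type*) where
  center : V
  node : ι
  region : Set V

/-- The core `f` fits the problem of covering `S` from the nodes of `X`. -/
structure Core.IsAdapted (bag : ι → Set V) (S : Set V) (X : Set ι) (f : Core V ι) : Prop where
  node_mem : f.node ∈ X
  center_mem : f.center ∈ bag f.node
  region_subset : f.region ⊆ S ∩ below bag f.node

/-- The cores of `F` at ancestors of `q` that see `y` within distance `ρ` of their centre. -/
def coresNear (G : SimpleGraph V) (w : Sym2 V → ℝ≥0∞) (F : Set (Core V ι)) (q : ι) (y : V)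
    (ρ : ℝ≥0∞) : Set (Core V ι) :=
  {f | f ∈ F ∧ f.node ≤ q ∧ ReachableIn G w f.region ρ y f.center}

/-- A bound for the number of cores seen within distance `s * δ` when every bag has at most `j`
vertices; see `overlapBound_succ_succ` for the recursion it is designed to satisfy. -/
def overlapBound (j s : ℕ) : ℕ :=
  j * (j + 1) ^ (2 * s)

theorem overlapBound_succ_succ (j s : ℕ) :
    2 * (j + 1) + overlapBound j (s + 1) + (j + 1) * overlapBound (j + 1) s ≤
      overlapBound (j + 1) (s + 1) := by
  have h_pow : (j + 1) ^ (2 * s) ≤ (j + 2) ^ (2 * s) := Nat.pow_le_pow_left (by lia) _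
  have h_pos : 1 ≤ (j + 2) ^ (2 * s) := Nat.one_le_pow _ _ (by lia)
  calc 2 * (j + 1) + overlapBound j (s + 1) + (j + 1) * overlapBound (j + 1) s
      = 2 * (j + 1) * 1 + j * (j + 1) ^ 2 * (j + 1) ^ (2 * s)
        + (j + 1) ^ 2 * (j + 2) ^ (2 * s) := by
        simp only [overlapBound]
        ring
    _ ≤ 2 * (j + 1) * (j + 2) ^ (2 * s) + j * (j + 1) ^ 2 * (j + 2) ^ (2 * s)
        + (j + 1) ^ 2 * (j + 2) ^ (2 * s) := by gcongr
    _ = (j + 1) * ((j + 1) ^ 2 + 2) * (j + 2) ^ (2 * s) := by ring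
    _ ≤ (j + 1) * (j + 2) ^ 2 * (j + 2) ^ (2 * s) := by
        gcongr
        lia
    _ = overlapBound (j + 1) (s + 1) := by
        simp only [overlapBound]
        ring

/-- A family of cores solving, at scale `δ`, the problem of covering `S` from the nodes of `X`:
a set `Z` in the subtree of a node of `X` and touching its bag is contained in the region of some
core and comes `δ`-close to its centre, while every vertex sees few cores. -/
structure IsCoreFamily (G : SimpleGraph V) (w : Sym2 V → ℝ≥0∞) (bag : ι → Set V) (δ : ℝ≥0∞)
    (S : Set V) (X : Set ι) (j : ℕ) (F : Set (Core V ι)) : Prop where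
  isAdapted {f : Core V ι} : f ∈ F → f.IsAdapted bag S X
  exists_core {t : ι} {Z : Set V} : t ∈ X → Z ⊆ S ∩ below bag t → (bag t ∩ Z).Nonempty →
    ∃ f ∈ F, f.node ≤ t ∧ Z ⊆ f.region ∧ ∃ z ∈ Z, ReachableIn G w f.region δ z f.center
  encard_coresNear_le (s : ℕ) {q : ι} {y : V} : y ∈ bag q →
    (coresNear G w F q y (s * δ)).encard ≤ overlapBound j s

/-- The vertices of `S` below `a` at distance less than `δ` from the bag of `a`, where distances are
measured inside `S ∩ below bag a`. -/
def halo (G : SimpleGraph V) (w : Sym2 V → ℝ≥0∞) (bag : ι → Set V) (δ : ℝ≥0∞) (S : Set V)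
    (a : ι) : Set V :=
  {u | ∃ c ∈ bag a ∩ S, ReachableIn G w (S ∩ below bag a) δ u c}

theorem halo_subset : halo G w bag δ S a ⊆ S ∩ below bag a := by
  rintro u ⟨c, -, hu⟩
  exact hu.left_mem

theorem bag_inter_subset_halo (hδ : 0 < δ) (a : ι) : bag a ∩ S ⊆ halo G w bag δ S a :=
  fun u hu => ⟨u, hu, .refl ⟨hu.2, bag_subset_below a hu.1⟩ hδ⟩

theorem encard_bag_inter_sdiff_halo_le (ht : (bag t ∩ S).encard ≤ j + 1)
    (hne : (bag t ∩ halo G w bag δ S a).Nonempty) :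
    (bag t ∩ (S \ halo G w bag δ S a)).encard ≤ j := by
  obtain ⟨u, hut, hu⟩ := hne
  rw [← Set.inter_sdiff_assoc]
  have h_one : 1 ≤ (bag t ∩ S ∩ halo G w bag δ S a).encard :=
    Set.one_le_encard_iff_nonempty.2 ⟨u, ⟨hut, (halo_subset hu).1⟩, hu⟩
  rw [← ENat.add_le_add_iff_right ENat.one_ne_top]
  calc ((bag t ∩ S) \ halo G w bag δ S a).encard + 1
      ≤ ((bag t ∩ S) \ halo G w bag δ S a).encard + (bag t ∩ S ∩ halo G w bag δ S a).encard := by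
        gcongr
    _ = (bag t ∩ S).encard := Set.encard_sdiff_add_encard_inter _ _
    _ ≤ j + 1 := ht

/-- The nodes of `X` in the subtree of `a` whose bag meets the halo of `a`. -/
def haloNodes (G : SimpleGraph V) (w : Sym2 V → ℝ≥0∞) (bag : ι → Set V) (δ : ℝ≥0∞) (S : Set V)
    (X : Set ι) (a : ι) : Set ι :=
  {t | t ∈ X ∧ a ≤ t ∧ (bag t ∩ halo G w bag δ S a).Nonempty}

/-- A set of nodes obtained by going through `X` from the root down and selecting a node unless
its bag meets the halo of a selected ancestor. -/
def IsHaloKernel (G : SimpleGraph V) (w : Sym2 V → ℝ≥0∞) (bag : ι → Set V) (δ : ℝ≥0∞) (S : Set V)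
    (X K : Set ι) : Prop :=
  ∀ t, t ∈ K ↔ t ∈ X ∧ ∀ a ∈ K, ¬ (a < t ∧ (bag t ∩ halo G w bag δ S a).Nonempty)

theorem IsRootedDecomp.exists_isHaloKernel (hG : IsRootedDecomp G bag) (w : Sym2 V → ℝ≥0∞)
    (δ : ℝ≥0∞) (S : Set V) (X : Set ι) : ∃ K, IsHaloKernel G w bag δ S X K := by
  have := wellFoundedLT_of_finite_Iic hG.finite_Iic
  exact exists_kernel_of_wellFounded
    (R := fun a t => a < t ∧ (bag t ∩ halo G w bag δ S a).Nonempty)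
    (Subrelation.wf And.left wellFounded_lt) X

namespace IsHaloKernel

theorem subset (hK : IsHaloKernel G w bag δ S X K) : K ⊆ X :=
  fun t ht => ((hK t).1 ht).1

theorem disjoint_halo_below (hK : IsHaloKernel G w bag δ S X K) (hG : IsRootedDecomp G bag)
    (ha : a ∈ K) (hb : b ∈ K) (hab : a < b) : Disjoint (halo G w bag δ S a) (below bag b) := by
  rw [Set.disjoint_left]
  rintro u ⟨c, hc, huc⟩ hu
  rw [← zero_add δ] at huc
  obtain ⟨y, hy, ⟨p, -, hp⟩ | hyc⟩ :=
    hG.reachableIn_or_reachableIn_of_not_le huc hu hc.1 hab.not_ge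
  · exact not_lt_zero hp
  · exact ((hK b).1 hb).2 a ha ⟨hab, y, hy, c, hc, hyc⟩

theorem exists_mem_haloNodes (hK : IsHaloKernel G w bag δ S X K) (hδ : 0 < δ) (ht : t ∈ X)
    (hS : (bag t ∩ S).Nonempty) : ∃ a ∈ K, t ∈ haloNodes G w bag δ S X a := by
  by_cases htK : t ∈ K
  · exact ⟨t, htK, ht, le_rfl, hS.mono fun u hu => ⟨hu.1, bag_inter_subset_halo hδ t hu⟩⟩
  · obtain ⟨a, ha, hat, h⟩ : ∃ a ∈ K, a < t ∧ (bag t ∩ halo G w bag δ S a).Nonempty := by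
      simpa [hK t, ht] using htK
    exact ⟨a, ha, ht, hat.le, h⟩

end IsHaloKernel

/-- The cores centred at the vertices of `S` in the bag of `a`. -/
def rootCores (bag : ι → Set V) (S : Set V) (a : ι) : Set (Core V ι) :=
  (fun c => ⟨c, a, S ∩ below bag a⟩) '' (bag a ∩ S)

theorem encard_rootCores_le (bag : ι → Set V) (S : Set V) (a : ι) :
    (rootCores bag S a).encard ≤ (bag a ∩ S).encard :=
  Set.encard_image_le _ _

/-- The root cores of the nodes of `K`, together with families `F a` for what remains outside the
halos. -/
def gluedCores (bag : ι → Set V) (S : Set V) (K : Set ι) (F : ι → Set (Core V ι)) :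
    Set (Core V ι) :=
  ⋃ a ∈ K, rootCores bag S a ∪ F a

section Gluing

variable {F : ι → Set (Core V ι)} {f : Core V ι}

theorem exists_mem_gluedCores (hK : IsHaloKernel G w bag δ S X K)
    (hF : ∀ a, IsCoreFamily G w bag δ (S \ halo G w bag δ S a) (haloNodes G w bag δ S X a) j (F a))
    (hδ : 0 < δ) {Z : Set V} (ht : t ∈ X) (hZ : Z ⊆ S ∩ below bag t)
    (htZ : (bag t ∩ Z).Nonempty) :
    ∃ f ∈ gluedCores bag S K F,
      f.node ≤ t ∧ Z ⊆ f.region ∧ ∃ z ∈ Z, ReachableIn G w f.region δ z f.center := by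
  obtain ⟨a, ha, hta⟩ := hK.exists_mem_haloNodes hδ ht
    (htZ.mono (Set.inter_subset_inter_right _ fun z hz => (hZ hz).1))
  by_cases hdisj : Disjoint Z (halo G w bag δ S a)
  · have hZ' : Z ⊆ (S \ halo G w bag δ S a) ∩ below bag t :=
      fun z hz => ⟨⟨(hZ hz).1, hdisj.notMem_of_mem_left hz⟩, (hZ hz).2⟩
    obtain ⟨f, hf, h⟩ := (hF a).exists_core hta hZ' htZ
    exact ⟨f, Set.mem_biUnion ha (.inr hf), h⟩
  · obtain ⟨z, hz, c, hc, hzc⟩ := Set.not_disjoint_iff.1 hdisj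
    exact ⟨⟨c, a, S ∩ below bag a⟩, Set.mem_biUnion ha (.inl ⟨c, hc, rfl⟩), hta.2.1,
      hZ.trans (Set.inter_subset_inter_right _ (below_anti hta.2.1)), z, hz, hzc⟩

theorem isAdapted_haloNodes
    (hF : IsCoreFamily G w bag δ (S \ halo G w bag δ S a) (haloNodes G w bag δ S X a) j (F a))
    (hδ : 0 < δ) (ha : a ∈ X) (hf : f ∈ rootCores bag S a ∪ F a) :
    f.IsAdapted bag S (haloNodes G w bag δ S X a) := by
  rcases hf with ⟨c, hc, rfl⟩ | hf
  · exact ⟨⟨ha, le_rfl, c, hc.1, bag_inter_subset_halo hδ a hc⟩, hc.1, subset_rfl⟩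
  · obtain ⟨hnode, hcenter, hregion⟩ := hF.isAdapted hf
    exact ⟨hnode, hcenter, hregion.trans (Set.inter_subset_inter_left _ Set.sdiff_subset)⟩

theorem coresNear_gluedCores_subset (hK : IsHaloKernel G w bag δ S X K)
    (hF : ∀ a, IsCoreFamily G w bag δ (S \ halo G w bag δ S a) (haloNodes G w bag δ S X a) j (F a))
    (hδ : 0 < δ) {ρ : ℝ≥0∞} :
    coresNear G w (gluedCores bag S K F) q y ρ ⊆
      (⋃ a ∈ {a | a ∈ K ∧ a ≤ q ∧ y ∈ halo G w bag δ S a}, rootCores bag S a) ∪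
      ⋃ a ∈ {a | a ∈ K ∧ a ≤ q ∧ y ∉ halo G w bag δ S a},
        coresNear G w (rootCores bag S a ∪ F a) q y ρ := by
  rintro f ⟨hf, hfq, hyf⟩
  obtain ⟨a, ha, hfa⟩ := Set.mem_iUnion₂.1 hf
  have hfS := isAdapted_haloNodes (hF a) hδ (hK.subset ha) hfa
  have haq : a ≤ q := hfS.node_mem.2.1.trans hfq
  by_cases hy : y ∈ halo G w bag δ S a
  · refine .inl (Set.mem_biUnion ⟨ha, haq, hy⟩ (hfa.resolve_right fun hfF => ?_))
    exact (((hF a).isAdapted hfF).region_subset hyf.left_mem).1.2 hy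
  · exact .inr (Set.mem_biUnion ⟨ha, haq, hy⟩ ⟨hfa, hfq, hyf⟩)

theorem exists_mem_coresNear_of_lt (hK : IsHaloKernel G w bag δ S X K) (hG : IsRootedDecomp G bag)
    (hF : ∀ a, IsCoreFamily G w bag δ (S \ halo G w bag δ S a) (haloNodes G w bag δ S X a) j (F a))
    (hδ : 0 < δ) (ha : a ∈ K) (hb : b ∈ K) (hab : a < b) (hbq : b ≤ q) (hyq : y ∈ bag q)
    (hyb : y ∉ halo G w bag δ S b) {σ : ℝ≥0∞}
    (hf : f ∈ coresNear G w (rootCores bag S a ∪ F a) q y (δ + σ)) :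
    ∃ z ∈ bag b ∩ S, f ∈ coresNear G w (gluedCores bag S K F) b z σ := by
  obtain ⟨hfa, hfq, hyf⟩ := hf
  have hfS := isAdapted_haloNodes (hF a) hδ (hK.subset ha) hfa
  obtain ⟨-, -, u, huf, hua⟩ := hfS.node_mem
  have hbf : ¬ b ≤ f.node := fun h =>
    (hK.disjoint_halo_below hG ha hb hab).notMem_of_mem_left hua ⟨_, h, huf⟩
  have hfb : f.node ≤ b := ((hG.isChain_Iic q).total hfq hbq).resolve_right hbf
  obtain ⟨z, hz, hyz | hzf⟩ := hG.reachableIn_or_reachableIn_of_not_le hyf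
    (below_anti hbq (bag_subset_below q hyq)) hfS.center_mem hbf
  · have hyz' := hyz.mono
      (Set.inter_subset_inter_left _ (hfS.region_subset.trans Set.inter_subset_left)) le_rfl
    exact absurd ⟨z, ⟨hz, hyz'.symm.left_mem.1⟩, hyz'⟩ hyb
  · exact ⟨z, ⟨hz, (hfS.region_subset hzf.left_mem).1⟩, Set.mem_biUnion ha hfa, hfb, hzf⟩

theorem encard_biUnion_rootCores_le (hK : IsHaloKernel G w bag δ S X K)
    (hG : IsRootedDecomp G bag) (hX : ∀ t ∈ X, (bag t ∩ S).encard ≤ j + 1) (q : ι) (y : V) :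
    (⋃ a ∈ {a | a ∈ K ∧ a ≤ q ∧ y ∈ halo G w bag δ S a}, rootCores bag S a).encard ≤ j + 1 := by
  have h_not_lt : ∀ a ∈ K, ∀ b ∈ K, y ∈ halo G w bag δ S a → y ∈ halo G w bag δ S b → ¬ a < b :=
    fun a ha b hb hya hyb hab =>
      (hK.disjoint_halo_below hG ha hb hab).notMem_of_mem_left hya (halo_subset hyb).2
  have h_subsingleton : {a | a ∈ K ∧ a ≤ q ∧ y ∈ halo G w bag δ S a}.Subsingleton := by
    rintro a ⟨ha, haq, hya⟩ b ⟨hb, hbq, hyb⟩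
    rcases (hG.isChain_Iic q).total haq hbq with h | h
    · exact h.eq_of_not_lt (h_not_lt a ha b hb hya hyb)
    · exact (h.eq_of_not_lt (h_not_lt b hb a ha hyb hya)).symm
  calc _ ≤ _ * ((j : ℕ∞) + 1) := encard_biUnion_le_mul fun a ha =>
        (encard_rootCores_le bag S a).trans (hX a (hK.subset ha.1))
    _ ≤ 1 * ((j : ℕ∞) + 1) := by
        gcongr
        exact Set.encard_le_one_iff_subsingleton.2 h_subsingleton
    _ = j + 1 := one_mul _

/-- All but the lowest selected ancestor `m` whose halo misses `y` are seen only through the bag of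
`m`, and reaching that bag from outside the halo of `m` costs at least `δ`. -/
theorem encard_biUnion_coresNear_le (hK : IsHaloKernel G w bag δ S X K)
    (hG : IsRootedDecomp G bag) (hX : ∀ t ∈ X, (bag t ∩ S).encard ≤ j + 1)
    (hF : ∀ a, IsCoreFamily G w bag δ (S \ halo G w bag δ S a) (haloNodes G w bag δ S X a) j (F a))
    (hδ : 0 < δ) (hyq : y ∈ bag q) (ih : ∀ {t : ι} {z : V}, z ∈ bag t →
      (coresNear G w (gluedCores bag S K F) t z (s * δ)).encard ≤ overlapBound (j + 1) s) :
    (⋃ a ∈ {a | a ∈ K ∧ a ≤ q ∧ y ∉ halo G w bag δ S a},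
      coresNear G w (rootCores bag S a ∪ F a) q y ((s + 1 : ℕ) * δ)).encard ≤
      (j + 1) + overlapBound j (s + 1) + (j + 1) * overlapBound (j + 1) s := by
  rcases Set.eq_empty_or_nonempty {a | a ∈ K ∧ a ≤ q ∧ y ∉ halo G w bag δ S a} with h | hne
  · simp [h]
  obtain ⟨m, ⟨hm, hmq, hym⟩, h_max⟩ := exists_isGreatest_of_isChain
    ((hG.finite_Iic q).subset fun a ha => ha.2.1) hne
    ((hG.isChain_Iic q).mono fun a ha => ha.2.1)
  have h_succ : ((s + 1 : ℕ) : ℝ≥0∞) * δ = δ + s * δ := by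
    push_cast
    ring
  have h_subset : (⋃ a ∈ {a | a ∈ K ∧ a ≤ q ∧ y ∉ halo G w bag δ S a},
      coresNear G w (rootCores bag S a ∪ F a) q y ((s + 1 : ℕ) * δ)) ⊆
      rootCores bag S m ∪ coresNear G w (F m) q y ((s + 1 : ℕ) * δ) ∪
      ⋃ z ∈ bag m ∩ S, coresNear G w (gluedCores bag S K F) m z (s * δ) := by
    refine Set.iUnion₂_subset fun a ha f hf => ?_
    rcases (h_max ha).eq_or_lt with rfl | ham
    · exact .inl (hf.1.imp_right fun hfF => ⟨hfF, hf.2⟩)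
    · rw [h_succ] at hf
      obtain ⟨z, hz, hfz⟩ :=
        exists_mem_coresNear_of_lt hK hG hF hδ ha.1 hm ham hmq hyq hym hf
      exact .inr (Set.mem_biUnion hz hfz)
  refine (Set.encard_le_encard h_subset).trans <| (Set.encard_union_le _ _).trans <|
    add_le_add ((Set.encard_union_le _ _).trans <| add_le_add ?_ ?_) ?_
  · exact (encard_rootCores_le bag S m).trans (hX m (hK.subset hm))
  · exact (hF m).encard_coresNear_le (s + 1) hyq
  · refine (encard_biUnion_le_mul fun z hz => ih hz.1).trans ?_
    gcongr
    exact hX m (hK.subset hm)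

theorem encard_coresNear_gluedCores_le (hK : IsHaloKernel G w bag δ S X K)
    (hG : IsRootedDecomp G bag) (hX : ∀ t ∈ X, (bag t ∩ S).encard ≤ j + 1)
    (hF : ∀ a, IsCoreFamily G w bag δ (S \ halo G w bag δ S a) (haloNodes G w bag δ S X a) j (F a))
    (hδ : 0 < δ) (s : ℕ) (hyq : y ∈ bag q) :
    (coresNear G w (gluedCores bag S K F) q y (s * δ)).encard ≤ overlapBound (j + 1) s := by
  induction s generalizing q y with
  | zero => simp [coresNear, ReachableIn]
  | succ s ih =>
    calc _ ≤ _ := Set.encard_le_encard (coresNear_gluedCores_subset hK hF hδ)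
      _ ≤ _ := Set.encard_union_le _ _
      _ ≤ ((j : ℕ∞) + 1) + ((j + 1) + overlapBound j (s + 1) + (j + 1) * overlapBound (j + 1) s) :=
        add_le_add (encard_biUnion_rootCores_le hK hG hX q y)
          (encard_biUnion_coresNear_le hK hG hX hF hδ hyq ih)
      _ = (2 * (j + 1) + overlapBound j (s + 1) + (j + 1) * overlapBound (j + 1) s : ℕ) := by
        push_cast
        ring
      _ ≤ overlapBound (j + 1) (s + 1) := by exact_mod_cast overlapBound_succ_succ j s

end Gluing

theorem IsRootedDecomp.exists_isCoreFamily (hG : IsRootedDecomp G bag) (w : Sym2 V → ℝ≥0∞)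
    (hδ : 0 < δ) (hX : ∀ t ∈ X, (bag t ∩ S).encard ≤ j) :
    ∃ F, IsCoreFamily G w bag δ S X j F := by
  induction j generalizing S X with
  | zero =>
    refine ⟨∅, fun hf => hf.elim, fun {t Z} ht hZ htZ => ?_, fun s q y _ => by simp [coresNear]⟩
    have h_empty : bag t ∩ S = ∅ := by simpa using hX t ht
    obtain ⟨z, hzt, hz⟩ := htZ
    exact absurd ⟨hzt, (hZ hz).1⟩ (Set.eq_empty_iff_forall_notMem.1 h_empty z)
  | succ j ih =>
    replace hX : ∀ t ∈ X, (bag t ∩ S).encard ≤ j + 1 := by simpa using hX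
    obtain ⟨K, hK⟩ := hG.exists_isHaloKernel w δ S X
    choose F hF using fun a => ih (S := S \ halo G w bag δ S a) (X := haloNodes G w bag δ S X a)
      fun t ht => encard_bag_inter_sdiff_halo_le (hX t ht.1) ht.2.2
    refine ⟨gluedCores bag S K F, fun hf => ?_, exists_mem_gluedCores hK hF hδ,
      fun s => encard_coresNear_gluedCores_le hK hG hX hF hδ s⟩
    obtain ⟨a, ha, hfa⟩ := Set.mem_iUnion₂.1 hf
    have hfS := isAdapted_haloNodes (hF a) hδ (hK.subset ha) hfa
    exact ⟨hfS.node_mem.1, hfS.center_mem, hfS.region_subset⟩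

end CoreFamilies

section Cover

variable {ι : Type*} [PartialOrder ι] {G : SimpleGraph V} {w : Sym2 V → ℝ≥0∞} {bag : ι → Set V}
  {F : Set (Core V ι)} {f : Core V ι} {ρ R δ : ℝ≥0∞} {k m : ℕ} {r θ : ℝ}

/-- The cluster of radius `ρ` of the core `f`: the vertices at distance less than `ρ` from the
centre, measured inside the region, all of whose bags lie in the subtree of the node. -/
def IsRootedDecomp.cluster (hG : IsRootedDecomp G bag) (w : Sym2 V → ℝ≥0∞) (ρ : ℝ≥0∞)
    (f : Core V ι) : Set V :=
  {u | f.node ≤ hG.top u ∧ ReachableIn G w f.region ρ u f.center}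

theorem IsRootedDecomp.gdist_le_of_mem_cluster (hG : IsRootedDecomp G bag) {u v : V}
    (hu : u ∈ hG.cluster w ρ f) (hv : v ∈ hG.cluster w ρ f) : gdist G w u v ≤ 2 * ρ := by
  rw [two_mul]
  exact (hu.2.trans hv.2.symm).gdist_lt.le

theorem IsRootedDecomp.exists_ball_subset_cluster (hG : IsRootedDecomp G bag)
    (hF : IsCoreFamily G w bag δ Set.univ Set.univ k F) (hR : 0 < R) (v : V) :
    ∃ f ∈ F, {u | gdist G w v u < R} ⊆ hG.cluster w (2 * R + δ) f := by
  obtain ⟨x, hx, hx_top⟩ := hG.exists_forall_top_le (connected_induce_ball (w := w) hR v)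
  have h_below : {u | gdist G w v u < R} ⊆ Set.univ ∩ below bag (hG.top x) :=
    fun u hu => ⟨trivial, hG.top u, hx_top u hu, hG.mem_bag_top u⟩
  obtain ⟨f, hf, hfx, hregion, z, hz, hzf⟩ :=
    hF.exists_core (Set.mem_univ _) h_below ⟨x, hG.mem_bag_top x, hx⟩
  refine ⟨f, hf, fun u hu => ⟨hfx.trans (hx_top u hu), ?_⟩⟩
  have huz := (ReachableIn.of_gdist_lt hu).symm.trans (ReachableIn.of_gdist_lt hz)
  rw [two_mul]
  exact (huz.mono hregion le_rfl).trans hzf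

theorem IsRootedDecomp.encard_setOf_mem_cluster_le (hG : IsRootedDecomp G bag)
    (hF : IsCoreFamily G w bag δ Set.univ Set.univ k F) (hρ : ρ ≤ m * δ) (v : V) :
    {A | A ∈ hG.cluster w ρ '' F ∧ v ∈ A}.encard ≤ overlapBound k m := by
  have h_subset : {A | A ∈ hG.cluster w ρ '' F ∧ v ∈ A} ⊆
      hG.cluster w ρ '' coresNear G w F (hG.top v) v (m * δ) := by
    rintro _ ⟨⟨f, hf, rfl⟩, hv⟩
    exact ⟨f, ⟨hf, hv.1, hv.2.mono subset_rfl hρ⟩, rfl⟩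
  exact (Set.encard_le_encard h_subset).trans <| (Set.encard_image_le _ _).trans <|
    hF.encard_coresNear_le m (hG.mem_bag_top v)

theorem IsRootedDecomp.exists_cover (hG : IsRootedDecomp G bag) (w : Sym2 V → ℝ≥0∞)
    (hbag : ∀ t, (bag t).encard ≤ k) (hR : 0 < R) (hδ : 0 < δ) (hRδ : 2 * R ≤ m * δ) :
    ∃ 𝒟 : Set (Set V),
      (∀ v, ∃ A ∈ 𝒟, {u | gdist G w v u < R} ⊆ A) ∧
      (∀ A ∈ 𝒟, ∀ u ∈ A, ∀ v ∈ A, gdist G w u v ≤ 2 * (2 * R + δ)) ∧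
      ∀ v, {A | A ∈ 𝒟 ∧ v ∈ A}.encard ≤ overlapBound k (m + 1) := by
  obtain ⟨F, hF⟩ := hG.exists_isCoreFamily (S := Set.univ) (X := Set.univ) w hδ
    fun t _ => by simpa using hbag t
  have h_radius : 2 * R + δ ≤ (m + 1 : ℕ) * δ := by
    push_cast
    rw [add_mul, one_mul]
    gcongr
  refine ⟨hG.cluster w (2 * R + δ) '' F, fun v => ?_, ?_,
    hG.encard_setOf_mem_cluster_le hF h_radius⟩
  · obtain ⟨f, hf, hv⟩ := hG.exists_ball_subset_cluster hF hR v
    exact ⟨_, ⟨f, hf, rfl⟩, hv⟩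
  · rintro _ ⟨f, -, rfl⟩ u hu v hv
    exact hG.gdist_le_of_mem_cluster hu hv

theorem IsRootedDecomp.exists_isCover (hG : IsRootedDecomp G bag) (w : Sym2 V → ℝ≥0∞)
    (hbag : ∀ t, (bag t).encard ≤ k) (hr : 0 ≤ r) (hθ : 0 < θ) (hm : r + θ ≤ 2 * m * θ) :
    ∃ 𝒟 : Set (Set V),
      IsCover G w r 𝒟 ∧
      (∀ A ∈ 𝒟, ∀ u ∈ A, ∀ v ∈ A, gdist G w u v ≤ ENNReal.ofReal (4 * r + 12 * θ)) ∧
      ∀ v, {A | A ∈ 𝒟 ∧ v ∈ A}.encard ≤ overlapBound k (m + 1) := by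
  -- Take `R = r + θ` and `δ = 4 θ`, so that `2 (2 R + δ) = 4 r + 12 θ`.
  have h_mul_le : 2 * ENNReal.ofReal (r + θ) ≤ m * ENNReal.ofReal (4 * θ) := by
    rw [← ENNReal.ofReal_natCast m, ← ENNReal.ofReal_mul m.cast_nonneg, two_mul,
      ← ENNReal.ofReal_add (by positivity) (by positivity)]
    exact ENNReal.ofReal_le_ofReal (by linarith)
  have h_diam : 2 * (2 * ENNReal.ofReal (r + θ) + ENNReal.ofReal (4 * θ)) =
      ENNReal.ofReal (4 * r + 12 * θ) := by
    rw [← ENNReal.ofReal_ofNat 2, ← ENNReal.ofReal_mul (by positivity),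
      ← ENNReal.ofReal_add (by positivity) (by positivity), ← ENNReal.ofReal_mul (by positivity)]
    ring_nf
  obtain ⟨𝒟, h_cover, h_dist, h_overlap⟩ := hG.exists_cover w hbag
    (ENNReal.ofReal_pos.2 (by positivity)) (ENNReal.ofReal_pos.2 (by positivity)) h_mul_le
  refine ⟨𝒟, fun v => ?_, h_diam ▸ h_dist, h_overlap⟩
  obtain ⟨A, hA, hvA⟩ := h_cover v
  have h_lt : ENNReal.ofReal r < ENNReal.ofReal (r + θ) :=
    (ENNReal.ofReal_lt_ofReal_iff (by positivity)).2 (by linarith)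
  exact ⟨A, hA, fun u hu => hvA (hu.trans_lt h_lt)⟩

theorem overlapBound_le_pow (k m : ℕ) :
    overlapBound k (m + 1) ≤ (2 * m + k + 1) ^ (3 * m + 4) :=
  calc overlapBound k (m + 1)
      = k * (k + 1) ^ (2 * (m + 1)) := rfl
    _ ≤ (2 * m + k + 1) * (2 * m + k + 1) ^ (2 * (m + 1)) := by gcongr <;> lia
    _ = (2 * m + k + 1) ^ (2 * m + 3) := by ring
    _ ≤ (2 * m + k + 1) ^ (3 * m + 4) := Nat.pow_le_pow_right (by lia) (by lia)

end Cover

theorem stmt_10_general (G : SimpleGraph V) (w : Sym2 V → ℝ≥0∞) (k : ℕ) {ι : Type}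
    (T : SimpleGraph ι) (bag : ι → Set V) (htd : IsTreeDecompOf G T bag)
    (hbag : ∀ t, (bag t).encard ≤ k) (ε : ℝ) (hε : 0 < ε) (r : ℝ) (hr : 0 < r) :
    ∃ 𝒟 : Set (Set V),
      IsCover G w r 𝒟 ∧
      (∀ A ∈ 𝒟, ∀ u ∈ A, ∀ v ∈ A, gdist G w u v ≤ ENNReal.ofReal ((4 + ε) * r)) ∧
      ∀ v : V, {A | A ∈ 𝒟 ∧ v ∈ A}.encard ≤
        ((2 * ⌈12 / ε⌉₊ + k + 1) ^ (3 * ⌈12 / ε⌉₊ + 4) : ℕ) := by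
  obtain ⟨_, hG⟩ := htd.exists_isRootedDecomp
  have hm : (1 : ℝ) ≤ ⌈12 / ε⌉₊ := mod_cast Nat.ceil_pos.2 (by positivity)
  have h_eps : 12 / ε ≤ ⌈12 / ε⌉₊ := Nat.le_ceil _
  generalize ⌈12 / ε⌉₊ = m at *
  have h_scale : r + r / m ≤ 2 * m * (r / m) := by
    rw [mul_assoc, mul_div_cancel₀ r (by positivity)]
    linarith [div_le_self hr.le hm]
  have h_diam : 4 * r + 12 * (r / m) ≤ (4 + ε) * r := by
    have h_twelve : 12 * (r / m) ≤ ε * r := by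
      rw [div_le_comm₀ hε (by positivity)] at h_eps
      calc 12 * (r / m) = 12 / m * r := by ring
        _ ≤ ε * r := by gcongr
    linarith
  obtain ⟨𝒟, h_cover, h_dist, h_overlap⟩ :=
    hG.exists_isCover w hbag hr.le (by positivity) h_scale
  exact ⟨𝒟, h_cover,
    fun A hA u hu v hv => (h_dist A hA u hu v hv).trans (ENNReal.ofReal_le_ofReal h_diam),
    fun v => (h_overlap v).trans (mod_cast overlapBound_le_pow k m)⟩

theorem stmt_10 {V : Type} [Fintype V] (G : SimpleGraph V) (w : Sym2 V → ℝ≥0∞)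
    (k : ℕ) {ι : Type} (T : SimpleGraph ι) (bag : ι → Set V)
    (htd : IsTreeDecompOf G T bag) (hbag : ∀ t, (bag t).ncard ≤ k)
    (ε : ℝ) (hε0 : 0 < ε) (hε1 : ε ≤ 1) (r : ℝ) (hr : 0 < r) :
    ∃ 𝒟 : Set (Set V),
      IsCover G w r 𝒟 ∧
      (∀ A ∈ 𝒟, ∀ u ∈ A, ∀ v ∈ A, gdist G w u v ≤ ENNReal.ofReal ((4 + ε) * r)) ∧
      (∀ v : V, {A | A ∈ 𝒟 ∧ v ∈ A}.ncard ≤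
        (2 * ⌈12 / ε⌉₊ + k + 1) ^ (3 * ⌈12 / ε⌉₊ + 4)) := by
  simpa only [Set.encard_le_coe_iff_finite_ncard_le, Set.toFinite, true_and] using
    stmt_10_general G w k T bag htd
      (fun t => Set.encard_le_coe_iff_finite_ncard_le.2 ⟨Set.toFinite _, hbag t⟩) ε hε0 r hr

end ScatterDim
end

section
/- Let h ≥ 1 and k ≥ 1 be integers, let G be an edge-weighted K_h-minor-free graph, let P ⊆ V(G) be a nonempty set of clients and F ⊆ V(G) a set of potential centers, and let ε be a real with 0 < ε < 1. Set c = C(h−2+2·⌈36h/ε⌉, h−1)·(12+72/ε)·(h−1) (with C(·,·) the binomial coefficient) and Γ = 3(c+1)·[2k + c·(4 + 3/ε + 2k)]. Then there exists a subset S ⊆ P with |S| ≤ k + (9/ε³)·(2c·(Γk+2)·(3/ε+2)^c)^(c+1) such that for every nonempty set X ⊆ F with |X| ≤ k it holds that max_{p∈P} dist_G(p,X) ≤ (1+ε) · max_{p∈S} dist_G(p,X). -/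
open scoped ENNReal

namespace ScatterDim

variable {V : Type}





/-!
Fix a scale `r`. Decompose the graph by a cop strategy: a supernode consists of geodesics that grow,
inside a component of the remaining vertices, from a common root to all older supernodes adjacent
to this component, and it later absorbs the vertices close to it. These older supernodes are
pairwise adjacent, so that with the component they form a complete minor, and there are fewer than
`h - 1` of them. A component is separated by a buffer of width `γ = Θ(ε r / h)` from every older
supernode to which it is not adjacent. Hence a walk of length `r` descends through the order of the
supernodes in `O(h / ε)` hops, and counting the hops as in a chordal graph bounds the number of
supernodes weakly reachable from a vertex by a binomial coefficient.

A walk of length `r` passes near the skeleton of the oldest supernode it meets. Cutting the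
geodesics of the skeletons into segments of length `Θ(ε r)` thus gives every vertex a bounded number
of hubs such that any two vertices at distance at most `r` share a hub with a detour of at most
`ε r / 6`.
Once the distances to the hubs are rounded, a set of centers covers a client at scale `r` iff it
hits a set of bounded size. A family of sets of bounded size has a small subfamily that is hit by
the same sets of at most a given size, by a sunflower-type branching argument; this is a coreset for
the scale `r`.

Finally, take `k + 1` points of a farthest-first traversal. Two of them have the same nearest
center, so their separation bounds the cost from below up to a factor `2`, and unless the cost
exceeds the separation by a factor `1 / ε` it falls between two consecutive scales of an arithmetic
progression of length `O(1 / ε ^ 2)`.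
-/


open scoped NNReal

section Walks

variable {V : Type*} {G : SimpleGraph V} {w : Sym2 V → ℝ≥0} {A B H : Set V} {u v x : V} {L M : ℝ}

/-- The total weight of a walk for finite edge weights. -/
noncomputable def walkLength (w : Sym2 V → ℝ≥0) (p : G.Walk u v) : ℝ≥0 :=
  (p.edges.map w).sum

/-- Some walk from `u` to `v` has all its vertices in `A` and length at most `L`. -/
def HasWalkIn (G : SimpleGraph V) (w : Sym2 V → ℝ≥0) (A : Set V) (u v : V) (L : ℝ) : Prop :=
  ∃ p : G.Walk u v, (∀ x ∈ p.support, x ∈ A) ∧ (walkLength w p : ℝ) ≤ L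

/-- The vertices outside `A` that have a neighbour in `A`. -/
def outerBoundary (G : SimpleGraph V) (A : Set V) : Set V := {u | u ∉ A ∧ ∃ v ∈ A, G.Adj v u}

theorem walkLength_append (p : G.Walk u v) (q : G.Walk v x) :
    walkLength w (p.append q) = walkLength w p + walkLength w q := by
  simp [walkLength, SimpleGraph.Walk.edges_append]

theorem walkLength_reverse (p : G.Walk u v) : walkLength w p.reverse = walkLength w p := by
  simp [walkLength, SimpleGraph.Walk.edges_reverse, List.sum_reverse]

theorem walkLength_cons (h : G.Adj u v) (p : G.Walk v x) :
    walkLength w (p.cons h) = w s(u, v) + walkLength w p := by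
  simp [walkLength]

theorem walkLength_bypass_le [DecidableEq V] (p : G.Walk u v) :
    walkLength w p.bypass ≤ walkLength w p :=
  ((p.edges_bypass_sublist_edges).map w).sum_le_sum fun _ _ => zero_le

namespace HasWalkIn

theorem refl (hu : u ∈ A) (hL : 0 ≤ L) : HasWalkIn G w A u u L :=
  ⟨.nil, by simpa using hu, by simpa [walkLength] using hL⟩

theorem of_adj (hu : u ∈ A) (hv : v ∈ A) (h : G.Adj u v) : HasWalkIn G w A u v (w s(u, v)) :=
  ⟨h.toWalk, by simp [hu, hv], by simp [walkLength]⟩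

theorem mono (h : HasWalkIn G w A u v L) (hAB : A ⊆ B) (hLM : L ≤ M) : HasWalkIn G w B u v M := by
  obtain ⟨p, hp, hL⟩ := h
  exact ⟨p, fun x hx => hAB (hp x hx), hL.trans hLM⟩

theorem trans (h : HasWalkIn G w A u v L) (h' : HasWalkIn G w A v x M) :
    HasWalkIn G w A u x (L + M) := by
  obtain ⟨p, hp, hL⟩ := h
  obtain ⟨q, hq, hM⟩ := h'
  refine ⟨p.append q, fun y hy => ?_, by rw [walkLength_append]; push_cast; gcongr⟩
  exact ((p.mem_support_append_iff q).1 hy).elim (hp y) (hq y)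

theorem symm (h : HasWalkIn G w A u v L) : HasWalkIn G w A v u L := by
  obtain ⟨p, hp, hL⟩ := h
  exact ⟨p.reverse, by simpa using hp, by rwa [walkLength_reverse]⟩

theorem left_mem (h : HasWalkIn G w A u v L) : u ∈ A := by
  obtain ⟨p, hp, -⟩ := h
  exact hp u p.start_mem_support

theorem right_mem (h : HasWalkIn G w A u v L) : v ∈ A :=
  h.symm.left_mem

theorem nonneg (h : HasWalkIn G w A u v L) : 0 ≤ L := by
  obtain ⟨p, -, hL⟩ := h
  exact p |> walkLength w |>.coe_nonneg.trans hL

theorem cons (hu : u ∈ A) (huv : G.Adj u v) (h : HasWalkIn G w A v x L) :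
    HasWalkIn G w A u x (w s(u, v) + L) :=
  (of_adj hu h.left_mem huv).trans h

theorem exists_exit (h : HasWalkIn G w B u v L) (hu : u ∈ H) (hv : v ∉ H) :
    ∃ x ∈ H, ∃ y ∉ H, ∃ L₁ L₂, G.Adj x y ∧ HasWalkIn G w (H ∩ B) u x L₁ ∧
      HasWalkIn G w B y v L₂ ∧ L₁ + w s(x, y) + L₂ ≤ L := by
  obtain ⟨p, hp, hL⟩ := h
  induction p generalizing L with
  | nil => exact absurd hu hv
  | @cons a b c hab q ih =>
    simp only [SimpleGraph.Walk.support_cons, List.mem_cons, forall_eq_or_imp] at hp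
    rw [walkLength_cons] at hL
    push_cast at hL
    by_cases hb : b ∈ H
    · obtain ⟨x, hx, y, hy, L₁, L₂, hxy, h₁, h₂, hsum⟩ := ih hb hv hp.2 le_rfl
      exact ⟨x, hx, y, hy, _, L₂, hxy, h₁.cons ⟨hu, hp.1⟩ hab, h₂, by linarith⟩
    · exact ⟨a, hu, b, hb, 0, _, hab, refl ⟨hu, hp.1⟩ le_rfl, ⟨q, hp.2, le_rfl⟩, by linarith⟩

theorem inter_of_disjoint_outerBoundary (h : HasWalkIn G w B u v L) (hu : u ∈ H)
    (hHB : Disjoint (outerBoundary G H) B) : HasWalkIn G w (H ∩ B) u v L := by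
  obtain ⟨p, hp, hL⟩ := h
  refine ⟨p, ?_, hL⟩
  clear hL
  induction p with
  | nil => simpa using ⟨hu, hp _ (by simp)⟩
  | @cons a b c hab q ih =>
    simp only [SimpleGraph.Walk.support_cons, List.mem_cons, forall_eq_or_imp] at hp ⊢
    have hbB : b ∈ B := hp.2 b q.start_mem_support
    have hb : b ∈ H := by_contra fun hb => hHB.notMem_of_mem_right hbB ⟨hb, a, hu, hab⟩
    exact ⟨⟨hu, hp.1⟩, ih hb hp.2⟩

theorem exists_split_min {α : Type*} [LinearOrder α] (f : V → α) (h : HasWalkIn G w A u v L) :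
    ∃ y L₁ L₂, HasWalkIn G w {z ∈ A | f y ≤ f z} u y L₁ ∧
      HasWalkIn G w {z ∈ A | f y ≤ f z} y v L₂ ∧ L₁ + L₂ ≤ L := by
  classical
  obtain ⟨p, hp, hL⟩ := h
  obtain ⟨y, hy, hmin⟩ := p.support.toFinset.exists_min_image f ⟨u, by simp⟩
  simp only [List.mem_toFinset] at hy hmin
  obtain ⟨q, q', rfl⟩ := p.mem_support_iff_exists_append.1 hy
  simp only [SimpleGraph.Walk.mem_support_append_iff, or_imp, forall_and] at hp hmin
  rw [walkLength_append, NNReal.coe_add] at hL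
  exact ⟨y, _, _, ⟨q, fun z hz => ⟨hp.1 z hz, hmin.1 z hz⟩, le_rfl⟩,
    ⟨q', fun z hz => ⟨hp.2 z hz, hmin.2 z hz⟩, le_rfl⟩, hL⟩

end HasWalkIn

theorem exists_eq_append_append {p : G.Walk u v} {y : V} (hx : x ∈ p.support)
    (hy : y ∈ p.support) :
    (∃ (a : G.Walk u x) (b : G.Walk x y) (c : G.Walk y v), p = (a.append b).append c) ∨
      ∃ (a : G.Walk u y) (b : G.Walk y x) (c : G.Walk x v), p = (a.append b).append c := by
  obtain ⟨q, q', rfl⟩ := p.mem_support_iff_exists_append.1 hx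
  rcases (q.mem_support_append_iff q').1 hy with hy | hy
  · obtain ⟨a, b, rfl⟩ := q.mem_support_iff_exists_append.1 hy
    exact .inr ⟨a, b, q', rfl⟩
  · obtain ⟨b, c, rfl⟩ := q'.mem_support_iff_exists_append.1 hy
    exact .inl ⟨q, b, c, q.append_assoc b c⟩

theorem connected_induce_iff_hasWalkIn (w : Sym2 V → ℝ≥0) :
    (G.induce A).Connected ↔ A.Nonempty ∧ ∀ u ∈ A, ∀ v ∈ A, ∃ L, HasWalkIn G w A u v L := by
  rw [SimpleGraph.connected_iff, and_comm, Set.nonempty_coe_sort]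
  refine and_congr_right fun _ => ⟨fun h u hu v hv => ?_, ?_⟩
  · obtain ⟨p⟩ := h ⟨u, hu⟩ ⟨v, hv⟩
    refine ⟨_, p.map (SimpleGraph.Embedding.induce A).toHom, fun x hx => ?_, le_rfl⟩
    obtain ⟨y, -, rfl⟩ := List.mem_map.1 (p.support_map _ ▸ hx)
    exact y.2
  · rintro h ⟨u, hu⟩ ⟨v, hv⟩
    obtain ⟨_, p, hp, -⟩ := h u hu v hv
    exact ⟨p.induce A hp⟩

theorem exists_hasWalkIn_of_connected (w : Sym2 V → ℝ≥0) (h : (G.induce A).Connected) (hu : u ∈ A)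
    (hv : v ∈ A) : ∃ L, HasWalkIn G w A u v L :=
  ((connected_induce_iff_hasWalkIn w).1 h).2 u hu v hv

theorem connected_induce_of_hasWalkIn (hu : u ∈ A) (h : ∀ v ∈ A, ∃ L, HasWalkIn G w A u v L) :
    (G.induce A).Connected := by
  refine (connected_induce_iff_hasWalkIn w).2 ⟨⟨u, hu⟩, fun x hx y hy => ?_⟩
  obtain ⟨L, hL⟩ := h x hx
  obtain ⟨M, hM⟩ := h y hy
  exact ⟨_, hL.symm.trans hM⟩

/-- The length of a shortest walk from `u` to `v` inside `A`; it is `0` if there is no such walk. -/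
noncomputable def distIn (G : SimpleGraph V) (w : Sym2 V → ℝ≥0) (A : Set V) (u v : V) : ℝ :=
  sInf {L | HasWalkIn G w A u v L}

theorem distIn_le (h : HasWalkIn G w A u v L) : distIn G w A u v ≤ L :=
  csInf_le ⟨0, fun _ => HasWalkIn.nonneg⟩ h

section Finite

variable [Finite V]

theorem exists_walkLength_eq_distIn (h : HasWalkIn G w A u v L) :
    ∃ p : G.Walk u v, (∀ x ∈ p.support, x ∈ A) ∧ walkLength w p = distIn G w A u v := by
  classical
  have := Fintype.ofFinite V
  let paths : Finset (G.Path u v) := {p | ∀ x ∈ p.1.support, x ∈ A}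
  have exists_path {M : ℝ} (hM : HasWalkIn G w A u v M) :
      ∃ p ∈ paths, (walkLength w p.1 : ℝ) ≤ M := by
    obtain ⟨p, hp, hpM⟩ := hM
    refine ⟨p.toPath, ?_, le_trans (NNReal.coe_le_coe.2 (walkLength_bypass_le p)) hpM⟩
    exact Finset.mem_filter.2
      ⟨Finset.mem_univ _, fun x hx => hp x (p.support_bypass_subset_support hx)⟩
  obtain ⟨p₀, hp₀, -⟩ := exists_path h
  obtain ⟨p, hp, hmin⟩ := paths.exists_min_image (fun p => walkLength w p.1) ⟨p₀, hp₀⟩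
  have hpA := (Finset.mem_filter.1 hp).2
  refine ⟨p.1, hpA, le_antisymm (le_csInf ⟨L, h⟩ fun M hM => ?_) (distIn_le ⟨p.1, hpA, le_rfl⟩)⟩
  obtain ⟨q, hq, hqM⟩ := exists_path hM
  exact le_trans (NNReal.coe_le_coe.2 (hmin q hq)) hqM

theorem hasWalkIn_distIn (h : HasWalkIn G w A u v L) : HasWalkIn G w A u v (distIn G w A u v) := by
  obtain ⟨p, hp, hlen⟩ := exists_walkLength_eq_distIn h
  exact ⟨p, hp, hlen.le⟩

theorem distIn_le_distIn_add (hu : HasWalkIn G w A x u L) (h : HasWalkIn G w A u v M) :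
    distIn G w A x v ≤ distIn G w A x u + M :=
  distIn_le ((hasWalkIn_distIn hu).trans h)

theorem abs_distIn_sub_distIn_le (hu : HasWalkIn G w A x u L) (h : HasWalkIn G w A u v M) :
    |distIn G w A x u - distIn G w A x v| ≤ M := by
  have h₁ := distIn_le_distIn_add hu h
  have h₂ := distIn_le_distIn_add (hu.trans h) h.symm
  exact abs_sub_le_iff.2 ⟨by linarith, by linarith⟩

theorem hasWalkIn_abs_distIn_sub {y : V} {a : G.Walk u x} {b : G.Walk x y} {c : G.Walk y v}
    (hA : ∀ z ∈ ((a.append b).append c).support, z ∈ A)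
    (hlen : walkLength w ((a.append b).append c) = distIn G w A u v) :
    HasWalkIn G w A x y |distIn G w A u x - distIn G w A u y| := by
  simp only [SimpleGraph.Walk.mem_support_append_iff, or_imp, forall_and] at hA
  rw [walkLength_append, walkLength_append] at hlen
  push_cast at hlen
  have ha : HasWalkIn G w A u x (walkLength w a) := ⟨a, hA.1.1, le_rfl⟩
  have hb : HasWalkIn G w A x y (walkLength w b) := ⟨b, hA.1.2, le_rfl⟩
  have hux := distIn_le ha
  have huv := distIn_le_distIn_add (ha.trans hb) ⟨c, hA.2, le_rfl⟩
  refine hb.mono subset_rfl ?_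
  rw [abs_sub_comm]
  exact le_trans (by linarith) (le_abs_self _)

theorem exists_geodesic (h : HasWalkIn G w A u v L) :
    ∃ T ⊆ A, u ∈ T ∧ v ∈ T ∧ (G.induce T).Connected ∧
      ∀ x ∈ T, ∀ y ∈ T, HasWalkIn G w A x y |distIn G w A u x - distIn G w A u y| := by
  obtain ⟨p, hpA, hp⟩ := exists_walkLength_eq_distIn h
  refine ⟨{x | x ∈ p.support}, hpA, p.start_mem_support, p.end_mem_support,
    p.connected_induce_support, fun x hx y hy => ?_⟩
  rcases exists_eq_append_append hx hy with ⟨a, b, c, rfl⟩ | ⟨a, b, c, rfl⟩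
  · exact hasWalkIn_abs_distIn_sub hpA hp
  · rw [abs_sub_comm]
    exact (hasWalkIn_abs_distIn_sub hpA hp).symm

end Finite

end Walks

section Counting

/-- `Y` is reached from `Z` in at most `m` hops, each of which leads from the current index to the
least element of its set in `K` that is not below the target `Y`. -/
inductive HopReach (K : ℕ → Set ℕ) : ℕ → ℕ → ℕ → Prop
  | refl (m Z : ℕ) : HopReach K m Z Z
  | hop {m Z Z' Y : ℕ} (hZ' : IsLeast (K Z ∩ Set.Ici Y) Z') (h : HopReach K m Z' Y) :
      HopReach K (m + 1) Z Y

/-- `K` lists for each index below `n` at most `d` smaller indices that form a clique, as in a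
perfect elimination order of a chordal graph. -/
structure IsEliminationOrder (K : ℕ → Set ℕ) (n d : ℕ) : Prop where
  lt : ∀ Z < n, ∀ a ∈ K Z, a < Z
  mem_of_lt : ∀ Z < n, ∀ a ∈ K Z, ∀ b ∈ K Z, a < b → a ∈ K b
  ncard_le : ∀ Z < n, (K Z).ncard ≤ d

/-- The indices reached from `Z` in at most `m` hops that lie above at least `j` elements of
`K Z`. -/
def hopReachSet (K : ℕ → Set ℕ) (m Z j : ℕ) : Set ℕ :=
  {Y | HopReach K m Z Y ∧ j ≤ (K Z ∩ Set.Iio Y).ncard}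

namespace IsEliminationOrder

variable {K : ℕ → Set ℕ} {n d m Z j e : ℕ}

theorem subset_Iio (hK : IsEliminationOrder K n d) (hZ : Z < n) : K Z ⊆ Set.Iio Z :=
  hK.lt Z hZ

theorem finite (hK : IsEliminationOrder K n d) (hZ : Z < n) : (K Z).Finite :=
  (Set.finite_Iio Z).subset (hK.subset_Iio hZ)

theorem hopReachSet_subset_singleton (hK : IsEliminationOrder K n d) (hZ : Z < n)
    (hj : (K Z).ncard ≤ j) : hopReachSet K m Z j ⊆ {Z} := by
  rintro Y ⟨h, hjY⟩
  cases h with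
  | refl => rfl
  | @hop m _ Z' _ hZ' h =>
    have hss : K Z ∩ Set.Iio Y ⊂ K Z :=
      ⟨Set.inter_subset_left, fun h => (Set.mem_Iio.1 (h hZ'.1.1).2).not_ge hZ'.1.2⟩
    exact absurd (Set.ncard_lt_ncard hss (hK.finite hZ)) (hj.trans hjY).not_gt

/-- Targets above the same number of elements of `K Z` are above the same elements, so the first
hop towards them is the same. -/
theorem exists_setOf_hopReach_subset (hK : IsEliminationOrder K n d) (hZ : Z < n)
    (hj : j < (K Z).ncard) :
    ∃ Z' < n, {Y | HopReach K (m + 1) Z Y ∧ (K Z ∩ Set.Iio Y).ncard = j} ⊆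
      hopReachSet K m Z' j := by
  have first_hop : ∀ Y, HopReach K (m + 1) Z Y → (K Z ∩ Set.Iio Y).ncard = j →
      ∃ Z', IsLeast (K Z ∩ Set.Ici Y) Z' ∧ HopReach K m Z' Y := by
    intro Y h hY
    cases h with
    | refl =>
      rw [Set.inter_eq_left.2 (hK.subset_Iio hZ)] at hY
      exact absurd hY hj.ne'
    | hop hZ' h => exact ⟨_, hZ', h⟩
  have below_eq : ∀ Y₁ Y₂, (K Z ∩ Set.Iio Y₁).ncard = j → (K Z ∩ Set.Iio Y₂).ncard = j →
      K Z ∩ Set.Ici Y₁ = K Z ∩ Set.Ici Y₂ := by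
    intro Y₁ Y₂ h₁ h₂
    wlog hle : Y₁ ≤ Y₂ generalizing Y₁ Y₂
    · exact (this Y₂ Y₁ h₂ h₁ (le_of_not_ge hle)).symm
    have heq : K Z ∩ Set.Iio Y₁ = K Z ∩ Set.Iio Y₂ :=
      Set.eq_of_subset_of_ncard_le (Set.inter_subset_inter_right _ (Set.Iio_subset_Iio hle))
        (h₂.trans h₁.symm).le ((hK.finite hZ).inter_of_left _)
    rw [← Set.compl_Iio, ← Set.compl_Iio, ← Set.sdiff_eq, ← Set.sdiff_eq,
      ← Set.sdiff_self_inter, heq, Set.sdiff_self_inter]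
  rcases Set.eq_empty_or_nonempty {Y | HopReach K (m + 1) Z Y ∧ (K Z ∩ Set.Iio Y).ncard = j}
    with hempty | ⟨Y₀, h₀, hY₀⟩
  · exact ⟨Z, hZ, hempty ▸ Set.empty_subset _⟩
  obtain ⟨Z', hZ', -⟩ := first_hop Y₀ h₀ hY₀
  have hZ'n : Z' < n := (hK.lt Z hZ Z' hZ'.1.1).trans hZ
  refine ⟨Z', hZ'n, ?_⟩
  rintro Y ⟨h, hY⟩
  obtain ⟨Z₁, hZ₁, hreach⟩ := first_hop Y h hY
  obtain rfl : Z₁ = Z' := (below_eq Y Y₀ hY hY₀ ▸ hZ₁).unique hZ'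
  refine ⟨hreach, hY.symm.le.trans (Set.ncard_le_ncard ?_ ((hK.finite hZ'n).inter_of_left _))⟩
  rintro a ⟨ha, haY⟩
  exact ⟨hK.mem_of_lt Z hZ a ha Z₁ hZ'.1.1 (haY.trans_le hZ₁.1.2), haY⟩

theorem encard_hopReachSet_le (hd : IsEliminationOrder K n (e + j)) (hZ : Z < n) :
    (hopReachSet K m Z j).encard ≤ ((m + e).choose e : ℕ) := by
  have of_subset_singleton {m e Z j : ℕ} (h : hopReachSet K m Z j ⊆ {Z}) :
      (hopReachSet K m Z j).encard ≤ ((m + e).choose e : ℕ) := by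
    refine (Set.encard_le_encard h).trans ?_
    rw [Set.encard_singleton]
    exact_mod_cast Nat.choose_pos (Nat.le_add_left e m)
  induction m generalizing e j Z with
  | zero =>
    refine of_subset_singleton ?_
    rintro Y ⟨h, -⟩
    cases h
    rfl
  | succ m ihm =>
    induction e generalizing j Z with
    | zero =>
      have hj : (K Z).ncard ≤ j := (hd.ncard_le Z hZ).trans (zero_add j).le
      exact of_subset_singleton (hd.hopReachSet_subset_singleton hZ hj)
    | succ e ihe =>
      rcases le_or_gt (K Z).ncard j with hj | hj
      · exact of_subset_singleton (hd.hopReachSet_subset_singleton hZ hj)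
      obtain ⟨Z', hZ', hsub⟩ := hd.exists_setOf_hopReach_subset (m := m) hZ hj
      have hsplit : hopReachSet K (m + 1) Z j ⊆ hopReachSet K (m + 1) Z (j + 1) ∪
          {Y | HopReach K (m + 1) Z Y ∧ (K Z ∩ Set.Iio Y).ncard = j} := fun Y hY =>
        hY.2.lt_or_eq.imp (fun h => ⟨hY.1, h⟩) fun h => ⟨hY.1, h.symm⟩
      have pascal : (m + 1 + (e + 1)).choose (e + 1) =
          (m + 1 + e).choose e + (m + (e + 1)).choose (e + 1) := by
        rw [← add_assoc, Nat.choose_succ_succ, add_right_comm m 1 e, add_assoc m e 1]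
      rw [pascal, Nat.cast_add]
      refine (Set.encard_le_encard (hsplit.trans (Set.union_subset_union_right _ hsub))).trans
        ((Set.encard_union_le _ _).trans (add_le_add (ihe ?_ hZ) (ihm hd hZ')))
      rwa [add_comm j 1, ← add_assoc]

end IsEliminationOrder

end Counting

section Voronoi

variable {V : Type*} {G : SimpleGraph V} {w : Sym2 V → ℝ≥0} {C Q : Set V} {γ : ℝ} {x y : V}
  {label : V → ℕ}

/-- The vertices of `C` from which a walk of length less than `γ` stays in `C` until it leaves `C`
along its last edge and arrives in `Q`. -/
def nearSet (G : SimpleGraph V) (w : Sym2 V → ℝ≥0) (C Q : Set V) (γ : ℝ) : Set V :=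
  {x | ∃ z ∈ C, ∃ u ∈ Q, G.Adj z u ∧ ∃ L, HasWalkIn G w C x z L ∧ L + w s(z, u) < γ}

/-- The edges leading from `C` to `Q`, as ordered pairs. -/
def gates (G : SimpleGraph V) (C Q : Set V) : Set (V × V) :=
  {q | q.1 ∈ C ∧ q.2 ∈ Q ∧ G.Adj q.1 q.2}

/-- The distance inside `C` from `x` to the far end of the gate `q`. -/
noncomputable def gateDist (G : SimpleGraph V) (w : Sym2 V → ℝ≥0) (C : Set V) (x : V)
    (q : V × V) : ℝ :=
  distIn G w C x q.1 + w s(q.1, q.2)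

/-- The gates at minimal distance from `x`. -/
def nearestGates (G : SimpleGraph V) (w : Sym2 V → ℝ≥0) (C Q : Set V) (x : V) : Set (V × V) :=
  {q ∈ gates G C Q | ∀ q' ∈ gates G C Q, gateDist G w C x q ≤ gateDist G w C x q'}

/-- The Voronoi labelling of `C` by nearest gates, ties being broken in favour of the least
label. -/
noncomputable def voronoiLabel (G : SimpleGraph V) (w : Sym2 V → ℝ≥0) (C Q : Set V)
    (label : V → ℕ) (x : V) : ℕ :=
  sInf ((fun q => label q.2) '' nearestGates G w C Q x)

theorem nearSet_subset : nearSet G w C Q γ ⊆ C := by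
  rintro x ⟨z, -, u, -, -, L, hL, -⟩
  exact hL.left_mem

theorem voronoiLabel_le {q : V × V} (hq : q ∈ nearestGates G w C Q x) :
    voronoiLabel G w C Q label x ≤ label q.2 :=
  Nat.sInf_le ⟨q, hq, rfl⟩

variable [Finite V]

theorem exists_nearestGates_voronoiLabel_eq (label : V → ℕ) (h : (gates G C Q).Nonempty) :
    ∃ q ∈ nearestGates G w C Q x, label q.2 = voronoiLabel G w C Q label x := by
  obtain ⟨q, hq⟩ := (gates G C Q).exists_min_image (gateDist G w C x) (Set.toFinite _) h
  have : (nearestGates G w C Q x).Nonempty := ⟨q, hq⟩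
  exact Nat.sInf_mem (this.image _)

/-- The nearest gates of a point on a shortest walk to a nearest gate of `x` are nearest gates of
`x` as well, so the labels stay constant along that walk. -/
theorem voronoiLabel_eq_of_hasWalkIn {q : V × V} {a b : ℝ} (hC : (G.induce C).Connected)
    (hq : q ∈ nearestGates G w C Q x) (hlabel : label q.2 = voronoiLabel G w C Q label x)
    (hxy : HasWalkIn G w C x y a) (hyq : HasWalkIn G w C y q.1 b)
    (hab : a + b = distIn G w C x q.1) :
    voronoiLabel G w C Q label y = voronoiLabel G w C Q label x := by
  have hx_le {q'} (hq' : q' ∈ gates G C Q) : gateDist G w C x q' ≤ a + gateDist G w C y q' := by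
    obtain ⟨_, hL⟩ := exists_hasWalkIn_of_connected w hC hyq.left_mem hq'.1
    have := distIn_le (hxy.trans (hasWalkIn_distIn hL))
    simp only [gateDist]
    linarith
  have hy_le : a + gateDist G w C y q ≤ gateDist G w C x q := by
    have := distIn_le hyq
    simp only [gateDist]
    linarith
  have hqy : q ∈ nearestGates G w C Q y :=
    ⟨hq.1, fun q' hq' => by linarith [hq.2 q' hq', hx_le hq']⟩
  obtain ⟨q', hq', hlabel'⟩ :=
    exists_nearestGates_voronoiLabel_eq (w := w) (x := y) label ⟨q, hq.1⟩
  have hq'x : q' ∈ nearestGates G w C Q x :=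
    ⟨hq'.1, fun q'' hq'' => by linarith [hq'.2 q hq.1, hx_le hq'.1, hq.2 q'' hq'']⟩
  exact le_antisymm ((voronoiLabel_le hqy).trans_eq hlabel)
    ((voronoiLabel_le hq'x).trans_eq hlabel')

theorem exists_hasWalkIn_voronoi_cell (hC : (G.induce C).Connected) (label : V → ℕ)
    (hx : x ∈ nearSet G w C Q γ) :
    ∃ z ∈ C, ∃ u ∈ Q, G.Adj z u ∧ label u = voronoiLabel G w C Q label x ∧
      ∃ L, L + w s(z, u) < γ ∧ HasWalkIn G w
        {y ∈ nearSet G w C Q γ | voronoiLabel G w C Q label y = voronoiLabel G w C Q label x}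
        x z L := by
  obtain ⟨z, hz, u, hu, hzu, L, hL, hLγ⟩ := hx
  obtain ⟨q, hq, hlabel⟩ :=
    exists_nearestGates_voronoiLabel_eq (w := w) (x := x) label ⟨(z, u), hz, hu, hzu⟩
  have hqγ : distIn G w C x q.1 + w s(q.1, q.2) < γ := by
    have := hq.2 (z, u) ⟨hz, hu, hzu⟩
    have := distIn_le hL
    simp only [gateDist] at *
    linarith
  obtain ⟨_, hxq⟩ := exists_hasWalkIn_of_connected w hC hL.left_mem hq.1.1
  obtain ⟨p, hpC, hp⟩ := exists_walkLength_eq_distIn hxq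
  refine ⟨q.1, hq.1.1, q.2, hq.1.2.1, hq.1.2.2, hlabel, _, hqγ, p, fun y hy => ?_, hp.le⟩
  obtain ⟨a, b, rfl⟩ := p.mem_support_iff_exists_append.1 hy
  simp only [SimpleGraph.Walk.mem_support_append_iff, or_imp, forall_and] at hpC
  have ha : HasWalkIn G w C x y (walkLength w a) := ⟨a, hpC.1, le_rfl⟩
  have hb : HasWalkIn G w C y q.1 (walkLength w b) := ⟨b, hpC.2, le_rfl⟩
  rw [walkLength_append, NNReal.coe_add] at hp
  refine ⟨⟨q.1, hq.1.1, q.2, hq.1.2.1, hq.1.2.2, _, hb, ?_⟩,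
    voronoiLabel_eq_of_hasWalkIn hC hq hlabel ha hb hp⟩
  linarith [ha.nonneg]

end Voronoi

section Component

variable {V : Type*} {G : SimpleGraph V} {U A C D : Set V} {x z : V}

/-- `C` is the vertex set of a connected component of the subgraph induced on `U`. -/
structure IsComponent (G : SimpleGraph V) (U C : Set V) : Prop where
  subset : C ⊆ U
  connected : (G.induce C).Connected
  disjoint_outerBoundary : Disjoint (outerBoundary G C) U

theorem subset_of_disjoint_outerBoundary (hC : (G.induce C).Connected)
    (hD : Disjoint (outerBoundary G D) C) (hzC : z ∈ C) (hzD : z ∈ D) : C ⊆ D := by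
  intro y hy
  obtain ⟨L, hL⟩ := exists_hasWalkIn_of_connected 0 hC hzC hy
  exact (hL.inter_of_disjoint_outerBoundary hzD hD).right_mem.1

theorem exists_isComponent (hx : x ∈ U) : ∃ C, IsComponent G U C ∧ x ∈ C := by
  let C := {y | ∃ L, HasWalkIn G 0 U x y L}
  have hxC : x ∈ C := ⟨0, .refl hx le_rfl⟩
  have hC : Disjoint (outerBoundary G C) U := by
    refine Set.disjoint_left.2 ?_
    rintro z ⟨hz, y, ⟨M, hM⟩, hyz⟩ hzU
    exact hz ⟨_, hM.trans (.of_adj hM.right_mem hzU hyz)⟩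
  refine ⟨C, ⟨?_, connected_induce_of_hasWalkIn (w := 0) hxC ?_, hC⟩, hxC⟩
  · rintro y ⟨L, hL⟩
    exact hL.right_mem
  · rintro y ⟨L, hL⟩
    exact ⟨L, (hL.inter_of_disjoint_outerBoundary hxC hC).mono Set.inter_subset_left le_rfl⟩

namespace IsComponent

theorem nonempty (hC : IsComponent G U C) : C.Nonempty :=
  Set.nonempty_coe_sort.1 hC.connected.nonempty

theorem subset_of_mem (hC : IsComponent G U C) (hD : Disjoint (outerBoundary G D) U) (hzC : z ∈ C)
    (hzD : z ∈ D) : C ⊆ D :=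
  subset_of_disjoint_outerBoundary hC.connected (hD.mono_right hC.subset) hzC hzD

theorem eq_of_mem (hC : IsComponent G U C) (hD : IsComponent G U D) (hzC : z ∈ C) (hzD : z ∈ D) :
    C = D :=
  (hC.subset_of_mem hD.disjoint_outerBoundary hzC hzD).antisymm
    (hD.subset_of_mem hC.disjoint_outerBoundary hzD hzC)

theorem exists_superset_of_diff (hD : IsComponent G U D) (hAD : A ⊆ D)
    (hC : IsComponent G (U \ A) C) :
    ∃ C', IsComponent G U C' ∧ C ⊆ C' ∧
      ∀ u ∈ outerBoundary G C, u ∈ outerBoundary G C' ∨ u ∈ A ∧ C' = D := by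
  obtain ⟨z, hz⟩ := hC.nonempty
  obtain ⟨C', hC', hzC'⟩ := exists_isComponent (G := G) (hC.subset hz).1
  have hCC' : C ⊆ C' :=
    hC.subset_of_mem (hC'.disjoint_outerBoundary.mono_right Set.sdiff_subset) hz hzC'
  refine ⟨C', hC', hCC', fun u hu => or_iff_not_imp_left.2 fun huC' => ?_⟩
  obtain ⟨v, hv, hvu⟩ := hu.2
  have huC' : u ∈ C' := by_contra fun h => huC' ⟨h, v, hCC' hv, hvu⟩
  have huA : u ∈ A := by_contra fun h =>
    hC.disjoint_outerBoundary.notMem_of_mem_left hu ⟨hC'.subset huC', h⟩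
  exact ⟨huA, hC'.eq_of_mem hD huC' (hAD huA)⟩

end IsComponent

end Component

section Decomposition

variable {V : Type*} {G : SimpleGraph V} {w : Sym2 V → ℝ≥0} {γ : ℝ}

/-- A supernode of the decomposition: the component from which it was opened, the geodesics of the
skeleton from which it grew, indexed by the labels they lead to, and the distance to their common
root inside the component. -/
structure Supernode (V : Type*) where
  domain : Set V
  path : ℕ → Set V
  pos : V → ℝ

/-- The distance function of the supernode is `1`-Lipschitz on its domain and isometric on each path
of its skeleton. -/
structure Supernode.IsGeodesic (G : SimpleGraph V) (w : Sym2 V → ℝ≥0) (N : Supernode V) : Prop where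
  abs_pos_sub_le : ∀ x y L, HasWalkIn G w N.domain x y L → |N.pos x - N.pos y| ≤ L
  hasWalkIn_abs_pos_sub : ∀ a, ∀ x ∈ N.path a, ∀ y ∈ N.path a,
    HasWalkIn G w N.domain x y |N.pos x - N.pos y|

/-- A state of the construction of a buffered cop decomposition: `count` supernodes have been opened
so far, and every vertex outside `free` has been put into the supernode given by `label`. -/
structure PartialDecomp (V : Type*) where
  free : Set V
  label : V → ℕ
  count : ℕ
  node : ℕ → Supernode V

namespace PartialDecomp

variable {D D' : PartialDecomp V} {A C C₀ H : Set V} {a b i j : ℕ} {u v : V}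

/-- The vertices that have been put into the `j`-th supernode. -/
def part (D : PartialDecomp V) (j : ℕ) : Set V := {v | v ∉ D.free ∧ D.label v = j}

/-- The supernodes adjacent to `C`. -/
def boundaryLabels (G : SimpleGraph V) (D : PartialDecomp V) (C : Set V) : Set ℕ :=
  D.label '' outerBoundary G C

/-- The supernodes adjacent to the component from which the `j`-th supernode was opened. -/
def ancestors (G : SimpleGraph V) (D : PartialDecomp V) (j : ℕ) : Set ℕ :=
  D.boundaryLabels G (D.node j).domain

/-- `H` separates `C` from the `i`-th supernode, and `C` has distance at least `γ` from all
supernodes around `H` that are younger than `i`. -/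
structure IsBuffer (G : SimpleGraph V) (w : Sym2 V → ℝ≥0) (γ : ℝ) (D : PartialDecomp V)
    (H C : Set V) (i : ℕ) : Prop where
  subset : C ⊆ H
  disjoint_outerBoundary : Disjoint (outerBoundary G H) D.free
  disjoint_part : Disjoint H (D.part i)
  notMem_boundaryLabels : i ∉ D.boundaryLabels G H
  disjoint_nearSet : Disjoint C (nearSet G w H {u ∈ outerBoundary G H | i < D.label u} γ)

/-- Some set is a buffer between `C` and the `i`-th supernode. -/
def IsBuffered (G : SimpleGraph V) (w : Sym2 V → ℝ≥0) (γ : ℝ) (D : PartialDecomp V) (C : Set V)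
    (i : ℕ) : Prop :=
  ∃ H, IsBuffer G w γ D H C i

/-- `D'` arises from `D` by adding the vertices of `A`, taken from the component `C` of the free
vertices, to supernodes adjacent to `C` or to a new one opened from `C`. -/
structure Extends (G : SimpleGraph V) (D D' : PartialDecomp V) (C A : Set V) : Prop where
  isComponent : IsComponent G D.free C
  subset : A ⊆ C
  nonempty : A.Nonempty
  free_eq : D'.free = D.free \ A
  label_eq : ∀ v ∉ A, D'.label v = D.label v
  label_mem : ∀ v ∈ A, D'.label v ∈ D.boundaryLabels G C ∨
    D'.label v = D.count ∧ D.count < D'.count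
  count_le : D.count ≤ D'.count
  node_eq : ∀ j < D.count, D'.node j = D.node j
  domain_eq : ∀ j < D'.count, j < D.count ∨ j = D.count ∧ (D'.node j).domain = C

/-- If `C` is neither adjacent to nor buffered from the `i`-th supernode, its vertices close to
younger supernodes join these supernodes along short walks. -/
structure IsGrowth (G : SimpleGraph V) (w : Sym2 V → ℝ≥0) (γ : ℝ) (D D' : PartialDecomp V)
    (C : Set V) (i : ℕ) : Prop
    extends Extends G D D' C (nearSet G w C {u ∈ outerBoundary G C | i < D.label u} γ) where
  count_eq : D'.count = D.count
  lt_count : i < D.count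
  notMem_boundaryLabels : i ∉ D.boundaryLabels G C
  not_isBuffered : ¬ IsBuffered G w γ D C i
  exists_hasWalkIn : ∀ v ∈ nearSet G w C {u ∈ outerBoundary G C | i < D.label u} γ,
    ∃ z ∈ C, ∃ u ∈ outerBoundary G C, i < D.label u ∧ G.Adj z u ∧ D.label u = D'.label v ∧
      ∃ L, L + w s(z, u) < γ ∧ HasWalkIn G w
        {y ∈ nearSet G w C {u ∈ outerBoundary G C | i < D.label u} γ | D'.label y = D'.label v}
        v z L

/-- If `C` is adjacent to or buffered from every supernode, a new supernode is opened: it consists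
of geodesics of `C` from a common root to all supernodes adjacent to `C`. -/
structure IsOpening (G : SimpleGraph V) (w : Sym2 V → ℝ≥0) (γ : ℝ) (D D' : PartialDecomp V)
    (C A : Set V) : Prop extends Extends G D D' C A where
  count_eq : D'.count = D.count + 1
  domain_count : (D'.node D.count).domain = C
  isBuffered : ∀ i < D.count, i ∈ D.boundaryLabels G C ∨ IsBuffered G w γ D C i
  label_eq_count : ∀ v ∈ A, D'.label v = D.count
  connected : (G.induce A).Connected
  exists_adj : ∀ a ∈ D.boundaryLabels G C, ∃ v ∈ A, ∃ u ∈ outerBoundary G C,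
    D.label u = a ∧ G.Adj v u
  mem_path : ∀ v ∈ A, ∃ a ∈ insert D.count (D.boundaryLabels G C), v ∈ (D'.node D.count).path a
  isGeodesic : (D'.node D.count).IsGeodesic G w

/-- The partial decompositions reachable by the cop strategy. -/
inductive Constructible (G : SimpleGraph V) (w : Sym2 V → ℝ≥0) (γ : ℝ) : PartialDecomp V → Prop
  | init {D : PartialDecomp V} (hfree : D.free = Set.univ) (hcount : D.count = 0) :
      Constructible G w γ D
  | growth {D D' : PartialDecomp V} {C : Set V} {i : ℕ} (hD : Constructible G w γ D)
      (h : IsGrowth G w γ D D' C i) : Constructible G w γ D'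
  | opening {D D' : PartialDecomp V} {C A : Set V} (hD : Constructible G w γ D)
      (h : IsOpening G w γ D D' C A) : Constructible G w γ D'

theorem IsBuffered.anti {C' : Set V} (h : IsBuffered G w γ D C i) (hC : C' ⊆ C) :
    IsBuffered G w γ D C' i := by
  obtain ⟨H, hH⟩ := h
  exact ⟨H, { hH with
    subset := hC.trans hH.subset
    disjoint_nearSet := hH.disjoint_nearSet.mono_left hC }⟩

namespace Extends

theorem notMem_free_iff (E : Extends G D D' C A) : v ∉ D'.free ↔ v ∉ D.free ∨ v ∈ A := by
  rw [E.free_eq, Set.mem_sdiff, not_and_or, not_not]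

theorem label_eq_of_notMem_free (E : Extends G D D' C A) (hv : v ∉ D.free) :
    D'.label v = D.label v :=
  E.label_eq v fun h => hv (E.isComponent.subset (E.subset h))

theorem mem_part_iff (E : Extends G D D' C A) :
    v ∈ D'.part j ↔ v ∈ D.part j ∨ v ∈ A ∧ D'.label v = j := by
  rw [part, part, Set.mem_ofPred_eq, Set.mem_ofPred_eq, E.notMem_free_iff, or_and_right]
  exact or_congr_left (and_congr_right fun hv => by rw [E.label_eq_of_notMem_free hv])

theorem part_subset (E : Extends G D D' C A) (j : ℕ) : D.part j ⊆ D'.part j :=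
  fun _ hv => E.mem_part_iff.2 (.inl hv)

theorem disjoint_free (E : Extends G D D' C A) (h : Disjoint H D.free) : Disjoint H D'.free :=
  h.mono_right (E.free_eq ▸ Set.sdiff_subset)

theorem boundaryLabels_eq (E : Extends G D D' C A) (h : Disjoint (outerBoundary G H) D.free) :
    D'.boundaryLabels G H = D.boundaryLabels G H :=
  Set.image_congr fun _ hu => E.label_eq_of_notMem_free (h.notMem_of_mem_left hu)

theorem ancestors_eq_boundaryLabels
    (E : Extends G D D' C A) (hdomain : (D'.node j).domain = C) :
    D'.ancestors G j = D.boundaryLabels G C := by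
  rw [ancestors, hdomain, E.boundaryLabels_eq E.isComponent.disjoint_outerBoundary]

theorem isBuffered (E : Extends G D D' C A) (hi : i < D.count) (h : IsBuffered G w γ D H i) :
    IsBuffered G w γ D' H i := by
  obtain ⟨B, hB⟩ := h
  refine ⟨B, hB.subset, E.disjoint_free hB.disjoint_outerBoundary, ?_, ?_, ?_⟩
  · refine Set.disjoint_left.2 fun v hv hvi => ?_
    rcases E.mem_part_iff.1 hvi with hvi | ⟨hvA, hvi⟩
    · exact hB.disjoint_part.notMem_of_mem_left hv hvi
    rcases E.label_mem v hvA with ⟨u, hu, hlabel⟩ | hlabel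
    · have hCB : C ⊆ B :=
        E.isComponent.subset_of_mem hB.disjoint_outerBoundary (E.subset hvA) hv
      have hui : D.label u = i := hlabel.trans hvi
      by_cases huB : u ∈ B
      · exact hB.disjoint_part.notMem_of_mem_left huB
          ⟨E.isComponent.disjoint_outerBoundary.notMem_of_mem_left hu, hui⟩
      · obtain ⟨y, hy, hyu⟩ := hu.2
        exact hB.notMem_boundaryLabels ⟨u, ⟨huB, y, hCB hy, hyu⟩, hui⟩
    · exact hi.ne (hvi.symm.trans hlabel.1)
  · rw [E.boundaryLabels_eq hB.disjoint_outerBoundary]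
    exact hB.notMem_boundaryLabels
  · have : {u ∈ outerBoundary G B | i < D'.label u} = {u ∈ outerBoundary G B | i < D.label u} := by
      ext u
      refine and_congr_right fun hu => ?_
      rw [E.label_eq_of_notMem_free (hB.disjoint_outerBoundary.notMem_of_mem_left hu)]
    rw [this]
    exact hB.disjoint_nearSet

theorem exists_isComponent_superset (E : Extends G D D' C₀ A) (hC : IsComponent G D'.free C) :
    ∃ C', IsComponent G D.free C' ∧ C ⊆ C' ∧
      ∀ u ∈ outerBoundary G C, u ∈ outerBoundary G C' ∨ u ∈ A ∧ C' = C₀ :=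
  E.isComponent.exists_superset_of_diff E.subset (E.free_eq ▸ hC)

end Extends

theorem component_subset_domain (hC : IsComponent G D.free C)
    (hdisj : Disjoint (outerBoundary G H) D.free) (hu : u ∈ outerBoundary G C) (huH : u ∈ H) :
    C ⊆ H := by
  obtain ⟨z, hz, hzu⟩ := hu.2
  refine hC.subset_of_mem hdisj hz (by_contra fun hzH => ?_)
  exact hdisj.notMem_of_mem_left ⟨hzH, u, huH, hzu.symm⟩ (hC.subset hz)

namespace Constructible

@[elab_as_elim]
theorem induction_extends {motive : ∀ D : PartialDecomp V, Constructible G w γ D → Prop}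
    (init : ∀ (D : PartialDecomp V) (hfree : D.free = Set.univ) (hcount : D.count = 0),
      motive D (.init hfree hcount))
    (step : ∀ (D D' : PartialDecomp V) (C A : Set V) (hD : Constructible G w γ D)
      (hD' : Constructible G w γ D'), Extends G D D' C A → motive D hD → motive D' hD')
    {D : PartialDecomp V} (hD : Constructible G w γ D) : motive D hD := by
  induction hD with
  | init hfree hcount => exact init _ hfree hcount
  | growth hD h ih => exact step _ _ _ _ hD (.growth hD h) h.toExtends ih
  | opening hD h ih => exact step _ _ _ _ hD (.opening hD h) h.toExtends ih

theorem label_lt_count (hD : Constructible G w γ D) : ∀ v ∉ D.free, D.label v < D.count := by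
  induction hD using induction_extends with
  | init D hfree _ => exact fun v hv => (hv (hfree ▸ trivial)).elim
  | step D D' C A _ _ E ih =>
    intro v hv
    rcases E.notMem_free_iff.1 hv with hv | hv
    · exact (E.label_eq_of_notMem_free hv ▸ ih v hv).trans_le E.count_le
    rcases E.label_mem v hv with ⟨u, hu, huv⟩ | ⟨hlabel, hcount⟩
    · rw [← huv]
      have huf := E.isComponent.disjoint_outerBoundary.notMem_of_mem_left hu
      exact (ih u huf).trans_le E.count_le
    · rwa [hlabel]

theorem boundaryLabel_lt_count (hD : Constructible G w γ D)
    (hdisj : Disjoint (outerBoundary G H) D.free) (ha : a ∈ D.boundaryLabels G H) :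
    a < D.count := by
  obtain ⟨u, hu, rfl⟩ := ha
  exact hD.label_lt_count u (hdisj.notMem_of_mem_left hu)

theorem disjoint_outerBoundary_domain (hD : Constructible G w γ D) :
    ∀ j < D.count, Disjoint (outerBoundary G (D.node j).domain) D.free := by
  induction hD using induction_extends with
  | init D _ hcount => exact fun j hj => absurd hj (by lia)
  | step D D' C A _ _ E ih =>
    intro j hj
    rcases E.domain_eq j hj with hj | ⟨rfl, hdomain⟩
    · rw [E.node_eq j hj]
      exact E.disjoint_free (ih j hj)
    · rw [hdomain]
      exact E.disjoint_free E.isComponent.disjoint_outerBoundary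

theorem ancestors_eq_of_extends (hD : Constructible G w γ D) (E : Extends G D D' C A)
    (hj : j < D.count) : D'.ancestors G j = D.ancestors G j := by
  rw [ancestors, ancestors, E.node_eq j hj]
  exact E.boundaryLabels_eq (hD.disjoint_outerBoundary_domain j hj)

theorem ancestors_lt (hD : Constructible G w γ D) :
    ∀ j < D.count, ∀ a ∈ D.ancestors G j, a < j := by
  induction hD using induction_extends with
  | init D _ hcount => exact fun j hj => absurd hj (by lia)
  | step D D' C A hD _ E ih =>
    intro j hj a ha
    rcases E.domain_eq j hj with hj | ⟨rfl, hdomain⟩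
    · exact ih j hj a (hD.ancestors_eq_of_extends E hj ▸ ha)
    · rw [E.ancestors_eq_boundaryLabels hdomain] at ha
      exact hD.boundaryLabel_lt_count E.isComponent.disjoint_outerBoundary ha

theorem mem_domain_label (hD : Constructible G w γ D) :
    ∀ v ∉ D.free, v ∈ (D.node (D.label v)).domain := by
  induction hD using induction_extends with
  | init D hfree _ => exact fun v hv => (hv (hfree ▸ trivial)).elim
  | step D D' C A hD _ E ih =>
    intro v hv
    rcases E.notMem_free_iff.1 hv with hv | hv
    · rw [E.label_eq_of_notMem_free hv, E.node_eq _ (hD.label_lt_count v hv)]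
      exact ih v hv
    rcases E.label_mem v hv with ⟨u, hu, huv⟩ | ⟨hlabel, hcount⟩
    · have huf := E.isComponent.disjoint_outerBoundary.notMem_of_mem_left hu
      have hlt := hD.label_lt_count u huf
      rw [← huv, E.node_eq _ hlt]
      exact component_subset_domain E.isComponent (hD.disjoint_outerBoundary_domain _ hlt) hu
        (ih u huf) (E.subset hv)
    · rcases E.domain_eq _ hcount with h | ⟨-, hdomain⟩
      · exact absurd h (lt_irrefl _)
      · rw [hlabel, hdomain]
        exact E.subset hv

theorem subset_domain (hD : Constructible G w γ D) (hC : IsComponent G D.free C)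
    (ha : a ∈ D.boundaryLabels G C) : C ⊆ (D.node a).domain := by
  obtain ⟨u, hu, rfl⟩ := ha
  have huf := hC.disjoint_outerBoundary.notMem_of_mem_left hu
  exact component_subset_domain hC
    (hD.disjoint_outerBoundary_domain _ (hD.label_lt_count u huf)) hu (hD.mem_domain_label u huf)

theorem mem_ancestors_of_mem_boundaryLabels (hD : Constructible G w γ D) :
    ∀ C, IsComponent G D.free C → ∀ a ∈ D.boundaryLabels G C, ∀ b ∈ D.boundaryLabels G C,
      a < b → a ∈ D.ancestors G b := by
  induction hD using induction_extends with
  | init D hfree _ =>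
    rintro C hC _ ⟨u, hu, rfl⟩
    exact absurd (hfree ▸ trivial) (hC.disjoint_outerBoundary.notMem_of_mem_left hu)
  | step D D' C₀ A hD _ E ih =>
    intro C hC
    obtain ⟨C', hC', -, hboundary⟩ := E.exists_isComponent_superset hC
    have label_cases : ∀ a ∈ D'.boundaryLabels G C, a ∈ D.boundaryLabels G C' ∨
        C' = C₀ ∧ a = D.count ∧ D.count < D'.count := by
      rintro _ ⟨u, hu, rfl⟩
      rcases hboundary u hu with hu | ⟨hu, rfl⟩
      · have huf := hC'.disjoint_outerBoundary.notMem_of_mem_left hu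
        exact .inl ⟨u, hu, (E.label_eq_of_notMem_free huf).symm⟩
      · exact (E.label_mem u hu).imp_right (⟨rfl, ·⟩)
    intro a ha b hb hab
    have lt_count : ∀ {c}, c ∈ D.boundaryLabels G C' → c < D.count :=
      hD.boundaryLabel_lt_count hC'.disjoint_outerBoundary
    rcases label_cases a ha with ha | ⟨-, rfl, -⟩ <;>
      rcases label_cases b hb with hb | ⟨rfl, rfl, hcount⟩
    · rw [hD.ancestors_eq_of_extends E (lt_count hb)]
      exact ih C' hC' a ha b hb hab
    · rcases E.domain_eq _ hcount with h | ⟨-, hdomain⟩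
      · exact absurd h (lt_irrefl _)
      · rwa [E.ancestors_eq_boundaryLabels hdomain]
    · exact absurd (lt_count hb) hab.not_gt
    · exact absurd hab (lt_irrefl _)

theorem mem_ancestors_of_mem_ancestors (hD : Constructible G w γ D) :
    ∀ j < D.count, ∀ a ∈ D.ancestors G j, ∀ b ∈ D.ancestors G j, a < b → a ∈ D.ancestors G b := by
  induction hD using induction_extends with
  | init D _ hcount => exact fun j hj => absurd hj (by lia)
  | step D D' C A hD _ E ih =>
    intro j hj a ha b hb hab
    rcases E.domain_eq j hj with hj | ⟨rfl, hdomain⟩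
    · rw [hD.ancestors_eq_of_extends E hj] at ha hb
      rw [hD.ancestors_eq_of_extends E ((hD.ancestors_lt j hj b hb).trans hj)]
      exact ih j hj a ha b hb hab
    · rw [E.ancestors_eq_boundaryLabels hdomain] at ha hb
      rw [hD.ancestors_eq_of_extends E
        (hD.boundaryLabel_lt_count E.isComponent.disjoint_outerBoundary hb)]
      exact hD.mem_ancestors_of_mem_boundaryLabels C E.isComponent a ha b hb hab

theorem domain_subset_domain (hD : Constructible G w γ D) :
    ∀ j < D.count, ∀ a ∈ D.ancestors G j, (D.node j).domain ⊆ (D.node a).domain := by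
  induction hD using induction_extends with
  | init D _ hcount => exact fun j hj => absurd hj (by lia)
  | step D D' C A hD _ E ih =>
    intro j hj a ha
    rcases E.domain_eq j hj with hj | ⟨rfl, hdomain⟩
    · rw [hD.ancestors_eq_of_extends E hj] at ha
      rw [E.node_eq j hj, E.node_eq a ((hD.ancestors_lt j hj a ha).trans hj)]
      exact ih j hj a ha
    · rw [E.ancestors_eq_boundaryLabels hdomain] at ha
      rw [hdomain, E.node_eq a
        (hD.boundaryLabel_lt_count E.isComponent.disjoint_outerBoundary ha)]
      exact hD.subset_domain E.isComponent ha

theorem label_mem_ancestors (hD : Constructible G w γ D) :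
    ∀ j < D.count, ∀ v ∈ (D.node j).domain, v ∉ D.free → D.label v < j →
      D.label v ∈ D.ancestors G j := by
  induction hD using induction_extends with
  | init D _ hcount => exact fun j hj => absurd hj (by lia)
  | step D D' C A hD _ E ih =>
    intro j hj v hv hvf hlt
    rcases E.domain_eq j hj with hj | ⟨rfl, hdomain⟩
    · rw [E.node_eq j hj] at hv
      rw [hD.ancestors_eq_of_extends E hj]
      rcases E.notMem_free_iff.1 hvf with hvf | hvA
      · rw [E.label_eq_of_notMem_free hvf] at hlt ⊢
        exact ih j hj v hv hvf hlt
      rcases E.label_mem v hvA with ⟨u, hu, huv⟩ | hlabel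
      · rw [← huv] at hlt ⊢
        by_cases huj : u ∈ (D.node j).domain
        · exact ih j hj u huj (E.isComponent.disjoint_outerBoundary.notMem_of_mem_left hu) hlt
        · have hCj := E.isComponent.subset_of_mem (hD.disjoint_outerBoundary_domain j hj)
            (E.subset hvA) hv
          obtain ⟨y, hy, hyu⟩ := hu.2
          exact ⟨u, ⟨huj, y, hCj hy, hyu⟩, rfl⟩
      · lia
    · rw [hdomain] at hv
      rw [E.ancestors_eq_boundaryLabels hdomain]
      have hvA := (E.notMem_free_iff.1 hvf).resolve_left (not_not_intro (E.isComponent.subset hv))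
      exact (E.label_mem v hvA).resolve_right fun h => hlt.ne h.1

theorem part_connected (hD : Constructible G w γ D) :
    ∀ j < D.count, (G.induce (D.part j)).Connected := by
  induction hD with
  | init _ hcount => exact fun j hj => absurd hj (by lia)
  | @growth D D' C i _ E ih =>
    intro j hj
    have hpart := ih j (E.count_eq ▸ hj)
    obtain ⟨x, hx⟩ := hpart.nonempty
    refine connected_induce_of_hasWalkIn (w := w) (E.part_subset j hx) fun v hv => ?_
    rcases E.mem_part_iff.1 hv with hv | ⟨hvA, rfl⟩
    · obtain ⟨L, hL⟩ := exists_hasWalkIn_of_connected w hpart hx hv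
      exact ⟨L, hL.mono (E.part_subset j) le_rfl⟩
    · obtain ⟨z, -, u, hu, -, hzu, hlabel, L, -, hvz⟩ := E.exists_hasWalkIn v hvA
      have hu : u ∈ D.part (D'.label v) :=
        ⟨E.isComponent.disjoint_outerBoundary.notMem_of_mem_left hu, hlabel⟩
      obtain ⟨M, hM⟩ := exists_hasWalkIn_of_connected w hpart hx hu
      have hcell : HasWalkIn G w (D'.part (D'.label v)) v z L :=
        hvz.mono (fun y hy => E.mem_part_iff.2 (.inr hy)) le_rfl
      exact ⟨_, (hM.mono (E.part_subset _) le_rfl).trans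
        (hcell.trans (.of_adj hcell.right_mem (E.part_subset _ hu) hzu)).symm⟩
  | @opening D D' C A hD E ih =>
    intro j hj
    rcases (Nat.lt_succ_iff.1 (E.count_eq ▸ hj)).lt_or_eq with hj | rfl
    · have : D'.part j = D.part j := by
        refine (E.part_subset j).antisymm' fun v hv => (E.mem_part_iff.1 hv).resolve_right ?_
        exact fun h => hj.ne (h.2.symm.trans (E.label_eq_count v h.1))
      exact this ▸ ih j hj
    · have : D'.part D.count = A := by
        ext v
        rw [E.mem_part_iff]
        refine ⟨fun h => h.elim (fun h => ?_) And.left, fun h => .inr ⟨h, E.label_eq_count v h⟩⟩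
        exact absurd h.2 (hD.label_lt_count v h.1).ne
      exact this ▸ E.connected

theorem exists_adj_part (hD : Constructible G w γ D) :
    ∀ b < D.count, ∀ a ∈ D.ancestors G b, ∃ x ∈ D.part a, ∃ y ∈ D.part b, G.Adj x y := by
  have mono {D D' : PartialDecomp V} {C A : Set V} (E : Extends G D D' C A) {a b : ℕ}
      (h : ∃ x ∈ D.part a, ∃ y ∈ D.part b, G.Adj x y) :
      ∃ x ∈ D'.part a, ∃ y ∈ D'.part b, G.Adj x y := by
    obtain ⟨x, hx, y, hy, hxy⟩ := h
    exact ⟨x, E.part_subset a hx, y, E.part_subset b hy, hxy⟩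
  induction hD with
  | init _ hcount => exact fun j hj => absurd hj (by lia)
  | @growth D D' C i hD E ih =>
    intro b hb a ha
    rw [E.count_eq] at hb
    exact mono E.toExtends (ih b hb a (hD.ancestors_eq_of_extends E.toExtends hb ▸ ha))
  | @opening D D' C A hD E ih =>
    intro b hb a ha
    rcases (Nat.lt_succ_iff.1 (E.count_eq ▸ hb)).lt_or_eq with hb | rfl
    · exact mono E.toExtends (ih b hb a (hD.ancestors_eq_of_extends E.toExtends hb ▸ ha))
    · rw [E.ancestors_eq_boundaryLabels E.domain_count] at ha
      obtain ⟨v, hv, u, hu, hlabel, hvu⟩ := E.exists_adj a ha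
      have hua : u ∈ D.part a :=
        ⟨E.isComponent.disjoint_outerBoundary.notMem_of_mem_left hu, hlabel⟩
      exact ⟨u, E.part_subset a hua, v, E.mem_part_iff.2 (.inr ⟨hv, E.label_eq_count v hv⟩),
        hvu.symm⟩

theorem mem_ancestors_or_isBuffered_domain (hD : Constructible G w γ D) :
    ∀ b < D.count, ∀ i < b, i ∈ D.ancestors G b ∨ IsBuffered G w γ D (D.node b).domain i := by
  have step {D D' : PartialDecomp V} {C A : Set V} (hD : Constructible G w γ D)
      (E : Extends G D D' C A) {b i : ℕ} (hb : b < D.count) (hi : i < b)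
      (h : i ∈ D.ancestors G b ∨ IsBuffered G w γ D (D.node b).domain i) :
      i ∈ D'.ancestors G b ∨ IsBuffered G w γ D' (D'.node b).domain i := by
    rw [hD.ancestors_eq_of_extends E hb, E.node_eq b hb]
    exact h.imp_right (E.isBuffered (hi.trans hb))
  induction hD with
  | init _ hcount => exact fun j hj => absurd hj (by lia)
  | @growth D D' C i hD E ih =>
    intro b hb a ha
    rw [E.count_eq] at hb
    exact step hD E.toExtends hb ha (ih b hb a ha)
  | @opening D D' C A hD E ih =>
    intro b hb a ha
    rcases (Nat.lt_succ_iff.1 (E.count_eq ▸ hb)).lt_or_eq with hb | rfl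
    · exact step hD E.toExtends hb ha (ih b hb a ha)
    · rw [E.ancestors_eq_boundaryLabels E.domain_count, E.domain_count]
      exact (E.isBuffered a ha).imp_right (E.toExtends.isBuffered ha)

theorem isGeodesic (hD : Constructible G w γ D) : ∀ j < D.count, (D.node j).IsGeodesic G w := by
  induction hD with
  | init _ hcount => exact fun j hj => absurd hj (by lia)
  | growth _ E ih =>
    intro j hj
    rw [E.count_eq] at hj
    exact E.node_eq j hj ▸ ih j hj
  | opening _ E ih =>
    intro j hj
    rcases (Nat.lt_succ_iff.1 (E.count_eq ▸ hj)).lt_or_eq with hj | rfl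
    · exact E.node_eq j hj ▸ ih j hj
    · exact E.isGeodesic

theorem finite_ancestors (hD : Constructible G w γ D) (hj : j < D.count) :
    (D.ancestors G j).Finite :=
  (Set.finite_Iio j).subset (hD.ancestors_lt j hj)

end Constructible

/-- `v` has distance at most `ρ` from the skeleton of the `j`-th supernode, inside the component
from which that supernode was opened. -/
def NearSkeleton (G : SimpleGraph V) (w : Sym2 V → ℝ≥0) (D : PartialDecomp V) (j : ℕ) (v : V)
    (ρ : ℝ) : Prop :=
  ∃ a ∈ insert j (D.ancestors G j), ∃ t ∈ (D.node j).path a,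
    HasWalkIn G w (D.node j).domain v t ρ

/-- The ancestors of the `j`-th supernode from which `C` is buffered. -/
def bufferedAncestors (G : SimpleGraph V) (w : Sym2 V → ℝ≥0) (γ : ℝ) (D : PartialDecomp V) (j : ℕ)
    (C : Set V) : Set ℕ :=
  {i ∈ D.ancestors G j | IsBuffered G w γ D C i}

theorem NearSkeleton.mono {ρ ρ' : ℝ} (h : NearSkeleton G w D j v ρ) (hρ : ρ ≤ ρ') :
    NearSkeleton G w D j v ρ' := by
  obtain ⟨a, ha, t, ht, hL⟩ := h
  exact ⟨a, ha, t, ht, hL.mono subset_rfl hρ⟩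

namespace Constructible

theorem nearSkeleton_extends {ρ : ℝ} (hD : Constructible G w γ D) (E : Extends G D D' C A)
    (hv : v ∉ D.free) (h : NearSkeleton G w D (D.label v) v ρ) :
    NearSkeleton G w D' (D'.label v) v ρ := by
  have hlt := hD.label_lt_count v hv
  rw [E.label_eq_of_notMem_free hv, NearSkeleton, hD.ancestors_eq_of_extends E hlt,
    E.node_eq _ hlt]
  exact h

theorem bufferedAncestors_subset {C' : Set V} (hD : Constructible G w γ D)
    (E : Extends G D D' C₀ A) (hj : j < D.count) (hC : C ⊆ C') :
    D.bufferedAncestors G w γ j C' ⊆ D'.bufferedAncestors G w γ j C := by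
  rintro i ⟨hi, hbuf⟩
  exact ⟨hD.ancestors_eq_of_extends E hj ▸ hi,
    (E.isBuffered ((hD.ancestors_lt j hj i hi).trans hj) hbuf).anti hC⟩

end Constructible

namespace IsGrowth

theorem isBuffered (E : IsGrowth G w γ D D' C₀ i) (hC : C ⊆ C₀) (hfree : C ⊆ D'.free) :
    IsBuffered G w γ D' C i := by
  have hdisj := E.isComponent.disjoint_outerBoundary
  refine ⟨C₀, hC, E.disjoint_free hdisj, ?_, ?_, ?_⟩
  · refine Set.disjoint_left.2 fun v hv hvi => ?_
    rcases E.mem_part_iff.1 hvi with hvi | ⟨hvA, hvi⟩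
    · exact hvi.1 (E.isComponent.subset hv)
    · obtain ⟨z, -, u, -, hiu, -, hlabel, -⟩ := E.exists_hasWalkIn v hvA
      exact hiu.ne (hvi.symm.trans hlabel.symm)
  · rw [E.boundaryLabels_eq hdisj]
    exact E.notMem_boundaryLabels
  · have : {u ∈ outerBoundary G C₀ | i < D'.label u} =
        {u ∈ outerBoundary G C₀ | i < D.label u} := by
      ext u
      refine and_congr_right fun hu => ?_
      rw [E.label_eq_of_notMem_free (hdisj.notMem_of_mem_left hu)]
    rw [this]
    rw [E.free_eq] at hfree
    exact Set.disjoint_left.2 fun v hv => (hfree hv).2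

theorem mem_ancestors (E : IsGrowth G w γ D D' C₀ i) (hD : Constructible G w γ D)
    (hu : u ∈ outerBoundary G C₀) (hiu : i < D.label u) : i ∈ D.ancestors G (D.label u) := by
  have hlt := hD.label_lt_count u (E.isComponent.disjoint_outerBoundary.notMem_of_mem_left hu)
  refine (hD.mem_ancestors_or_isBuffered_domain _ hlt i hiu).resolve_right fun h => ?_
  exact E.not_isBuffered (h.anti (hD.subset_domain E.isComponent ⟨u, hu, rfl⟩))

theorem exists_nearSkeleton (E : IsGrowth G w γ D D' C₀ i) (hD : Constructible G w γ D)
    (h : ∀ u ∈ outerBoundary G C₀,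
      NearSkeleton G w D (D.label u) u (γ * (D.bufferedAncestors G w γ (D.label u) C₀).ncard))
    (hv : v ∈ nearSet G w C₀ {u ∈ outerBoundary G C₀ | i < D.label u} γ) :
    ∃ b < D.count, D'.label v = b ∧ i ∈ D.ancestors G b ∧
      NearSkeleton G w D' b v (γ * (insert i (D.bufferedAncestors G w γ b C₀)).ncard) := by
  obtain ⟨z, -, u, hu, hiu, hzu, hlabel, L, hL, hvz⟩ := E.exists_hasWalkIn v hv
  have huf := E.isComponent.disjoint_outerBoundary.notMem_of_mem_left hu
  have hlt := hD.label_lt_count u huf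
  refine ⟨D.label u, hlt, hlabel.symm, E.mem_ancestors hD hu hiu, ?_⟩
  have hfin : (D.bufferedAncestors G w γ (D.label u) C₀).Finite :=
    (hD.finite_ancestors hlt).subset (Set.sep_subset _ _)
  rw [Set.ncard_insert_of_notMem (fun hi => E.not_isBuffered hi.2) hfin]
  have hnear := hD.nearSkeleton_extends E.toExtends huf (h u hu)
  rw [E.label_eq_of_notMem_free huf] at hnear
  obtain ⟨a, ha, t, ht, hut⟩ := hnear
  refine ⟨a, ha, t, ht, ?_⟩
  rw [E.node_eq _ hlt] at hut ⊢
  have hvz' : HasWalkIn G w (D.node (D.label u)).domain v z L :=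
    hvz.mono ((Set.sep_subset _ _).trans
      (nearSet_subset.trans (hD.subset_domain E.isComponent ⟨u, hu, rfl⟩))) le_rfl
  refine ((hvz'.trans (.of_adj hvz'.right_mem hut.left_mem hzu)).trans hut).mono subset_rfl ?_
  push_cast
  linarith

end IsGrowth

theorem IsOpening.nearSkeleton {ρ : ℝ} (E : IsOpening G w γ D D' C A) (hρ : 0 ≤ ρ) (hv : v ∈ A) :
    NearSkeleton G w D' (D'.label v) v ρ := by
  obtain ⟨a, ha, hva⟩ := E.mem_path v hv
  rw [E.label_eq_count v hv]
  refine ⟨a, ?_, v, hva, .refl (E.domain_count ▸ E.subset hv) hρ⟩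
  rwa [E.ancestors_eq_boundaryLabels E.domain_count]

namespace Constructible

theorem nearSkeleton_outerBoundary (hD : Constructible G w γ D) (hγ : 0 ≤ γ) :
    ∀ C, IsComponent G D.free C → ∀ v ∈ outerBoundary G C,
      NearSkeleton G w D (D.label v) v (γ * (D.bufferedAncestors G w γ (D.label v) C).ncard) := by
  have old {D D' : PartialDecomp V} {C C' C₀ A : Set V} {v : V} (hD : Constructible G w γ D)
      (hD' : Constructible G w γ D') (E : Extends G D D' C₀ A) (hC' : IsComponent G D.free C')
      (hC : C ⊆ C') (hv : v ∈ outerBoundary G C')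
      (h : NearSkeleton G w D (D.label v) v
        (γ * (D.bufferedAncestors G w γ (D.label v) C').ncard)) :
      NearSkeleton G w D' (D'.label v) v
        (γ * (D'.bufferedAncestors G w γ (D'.label v) C).ncard) := by
    have hvf := hC'.disjoint_outerBoundary.notMem_of_mem_left hv
    have hlt := hD.label_lt_count v hvf
    refine (hD.nearSkeleton_extends E hvf h).mono ?_
    rw [E.label_eq_of_notMem_free hvf]
    gcongr
    · exact (hD'.finite_ancestors (hlt.trans_le E.count_le)).subset (Set.sep_subset _ _)
    · exact hD.bufferedAncestors_subset E hlt hC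
  induction hD with
  | init hfree _ =>
    intro C hC v hv
    exact absurd (hfree ▸ trivial) (hC.disjoint_outerBoundary.notMem_of_mem_left hv)
  | @growth D D' C₀ i hD E ih =>
    intro C hC v hv
    have hD' := hD.growth E
    obtain ⟨C', hC', hCC', hboundary⟩ := E.exists_isComponent_superset hC
    rcases hboundary v hv with hv | ⟨hvA, rfl⟩
    · exact old hD hD' E.toExtends hC' hCC' hv (ih C' hC' v hv)
    · obtain ⟨b, hb, rfl, hib, hnear⟩ := E.exists_nearSkeleton hD (ih C' hC') hvA
      refine hnear.mono ?_
      gcongr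
      · exact (hD'.finite_ancestors (E.count_eq ▸ hb)).subset (Set.sep_subset _ _)
      · refine Set.insert_subset ⟨?_, E.isBuffered hCC' hC.subset⟩
          (hD.bufferedAncestors_subset E.toExtends hb hCC')
        rwa [hD.ancestors_eq_of_extends E.toExtends hb]
  | @opening D D' C₀ A hD E ih =>
    intro C hC v hv
    obtain ⟨C', hC', hCC', hboundary⟩ := E.exists_isComponent_superset hC
    rcases hboundary v hv with hv | ⟨hvA, -⟩
    · exact old hD (hD.opening E) E.toExtends hC' hCC' hv (ih C' hC' v hv)
    · exact E.nearSkeleton (by positivity) hvA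

theorem nearSkeleton_label (hD : Constructible G w γ D) (hγ : 0 ≤ γ) :
    ∀ v ∉ D.free, NearSkeleton G w D (D.label v) v (γ * (D.ancestors G (D.label v)).ncard) := by
  have old {D D' : PartialDecomp V} {C A : Set V} {v : V} (hD : Constructible G w γ D)
      (E : Extends G D D' C A) (hv : v ∉ D.free)
      (h : NearSkeleton G w D (D.label v) v (γ * (D.ancestors G (D.label v)).ncard)) :
      NearSkeleton G w D' (D'.label v) v (γ * (D'.ancestors G (D'.label v)).ncard) := by
    have := hD.nearSkeleton_extends E hv h
    rw [E.label_eq_of_notMem_free hv] at this ⊢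
    rwa [hD.ancestors_eq_of_extends E (hD.label_lt_count v hv)]
  induction hD with
  | init hfree _ => exact fun v hv => absurd (hfree ▸ trivial) hv
  | @growth D D' C₀ i hD E ih =>
    intro v hv
    rcases E.notMem_free_iff.1 hv with hv | hvA
    · exact old hD E.toExtends hv (ih v hv)
    · obtain ⟨b, hb, rfl, hib, hnear⟩ :=
        E.exists_nearSkeleton hD (hD.nearSkeleton_outerBoundary hγ C₀ E.isComponent) hvA
      refine hnear.mono ?_
      rw [hD.ancestors_eq_of_extends E.toExtends hb]
      gcongr
      · exact hD.finite_ancestors hb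
      · exact Set.insert_subset hib (Set.sep_subset _ _)
  | @opening D D' C₀ A hD E ih =>
    intro v hv
    rcases E.notMem_free_iff.1 hv with hv | hvA
    · exact old hD E.toExtends hv (ih v hv)
    · exact E.nearSkeleton (by positivity) hvA

end Constructible

section Existence

variable [Finite V]

theorem exists_isGrowth (hC : IsComponent G D.free C) (hlt : i < D.count)
    (hi : i ∉ D.boundaryLabels G C) (hbuf : ¬ IsBuffered G w γ D C i) :
    ∃ D', IsGrowth G w γ D D' C i := by
  classical
  let Q := {u ∈ outerBoundary G C | i < D.label u}
  let A := nearSet G w C Q γ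
  let label := A.piecewise (voronoiLabel G w C Q D.label) D.label
  have hlabel {v} (hv : v ∈ A) : label v = voronoiLabel G w C Q D.label v :=
    Set.piecewise_eq_of_mem _ _ _ hv
  have hcell : ∀ v ∈ A, ∃ z ∈ C, ∃ u ∈ outerBoundary G C, i < D.label u ∧ G.Adj z u ∧
      D.label u = label v ∧ ∃ L, L + w s(z, u) < γ ∧
        HasWalkIn G w {y ∈ A | label y = label v} v z L := by
    intro v hv
    obtain ⟨z, hz, u, hu, hzu, huv, L, hL, hvz⟩ :=
      exists_hasWalkIn_voronoi_cell hC.connected D.label hv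
    rw [← hlabel hv] at huv hvz
    exact ⟨z, hz, u, hu.1, hu.2, hzu, huv, L, hL,
      hvz.mono (fun y hy => ⟨hy.1, (hlabel hy.1).trans hy.2⟩) le_rfl⟩
  refine ⟨⟨D.free \ A, label, D.count, D.node⟩, ?_⟩
  exact
    { isComponent := hC
      subset := nearSet_subset
      nonempty := Set.nonempty_iff_ne_empty.2 fun hA => hbuf ⟨C, subset_rfl,
        hC.disjoint_outerBoundary, Set.disjoint_left.2 fun v hv hvi => hvi.1 (hC.subset hv), hi,
        hA ▸ Set.disjoint_empty C⟩
      free_eq := rfl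
      label_eq := fun v hv => Set.piecewise_eq_of_notMem _ _ _ hv
      label_mem := fun v hv => by
        obtain ⟨z, -, u, hu, -, -, huv, -⟩ := hcell v hv
        exact .inl ⟨u, hu, huv⟩
      count_le := le_rfl
      node_eq := fun _ _ => rfl
      domain_eq := fun _ => .inl
      count_eq := rfl
      lt_count := hlt
      notMem_boundaryLabels := hi
      not_isBuffered := hbuf
      exists_hasWalkIn := hcell }

theorem exists_skeleton_path {r : V} (hC : (G.induce C).Connected) (hr : r ∈ C) (a : ℕ) :
    ∃ T ⊆ C, r ∈ T ∧ (G.induce T).Connected ∧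
      (∀ x ∈ T, ∀ y ∈ T, HasWalkIn G w C x y |distIn G w C r x - distIn G w C r y|) ∧
      (a ∈ D.boundaryLabels G C →
        ∃ v ∈ T, ∃ u ∈ outerBoundary G C, D.label u = a ∧ G.Adj v u) := by
  have path {v : V} (hv : v ∈ C) : ∃ T ⊆ C, r ∈ T ∧ v ∈ T ∧ (G.induce T).Connected ∧
      ∀ x ∈ T, ∀ y ∈ T, HasWalkIn G w C x y |distIn G w C r x - distIn G w C r y| := by
    obtain ⟨L, hL⟩ := exists_hasWalkIn_of_connected w hC hr hv
    exact exists_geodesic hL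
  by_cases ha : a ∈ D.boundaryLabels G C
  · obtain ⟨u, hu, hlabel⟩ := ha
    obtain ⟨v, hv, hvu⟩ := hu.2
    obtain ⟨T, hTC, hrT, hvT, hT, hgeo⟩ := path hv
    exact ⟨T, hTC, hrT, hT, hgeo, fun _ => ⟨v, hvT, u, hu, hlabel, hvu⟩⟩
  · obtain ⟨T, hTC, hrT, -, hT, hgeo⟩ := path hr
    exact ⟨T, hTC, hrT, hT, hgeo, fun h => absurd h ha⟩

theorem exists_supernode (D : PartialDecomp V) (hC : (G.induce C).Connected) :
    ∃ N : Supernode V, N.domain = C ∧ N.IsGeodesic G w ∧ (∀ a, N.path a ⊆ C) ∧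
      (∀ I : Set ℕ, I.Nonempty → (G.induce (⋃ a ∈ I, N.path a)).Connected) ∧
      ∀ a ∈ D.boundaryLabels G C, ∃ v ∈ N.path a, ∃ u ∈ outerBoundary G C,
        D.label u = a ∧ G.Adj v u := by
  obtain ⟨r, hr⟩ := Set.nonempty_coe_sort.1 hC.nonempty
  choose T hTC hrT hT hgeo hadj using exists_skeleton_path (w := w) (D := D) hC hr
  refine ⟨⟨C, T, distIn G w C r⟩, rfl, ⟨fun x y L h => ?_, hgeo⟩, hTC, fun I hI => ?_, hadj⟩
  · obtain ⟨M, hM⟩ := exists_hasWalkIn_of_connected w hC hr h.left_mem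
    exact abs_distIn_sub_distIn_le hM h
  · obtain ⟨b, hb⟩ := hI
    refine connected_induce_of_hasWalkIn (w := w) (Set.mem_biUnion hb (hrT b)) fun v hv => ?_
    obtain ⟨a, ha, hva⟩ := Set.mem_iUnion₂.1 hv
    obtain ⟨L, hL⟩ := exists_hasWalkIn_of_connected w (hT a) (hrT a) hva
    exact ⟨L, hL.mono (Set.subset_biUnion_of_mem (u := T) ha) le_rfl⟩

theorem exists_isOpening (hC : IsComponent G D.free C)
    (hbuf : ∀ i < D.count, i ∈ D.boundaryLabels G C ∨ IsBuffered G w γ D C i) :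
    ∃ D' A, IsOpening G w γ D D' C A := by
  classical
  obtain ⟨N, rfl, hN, hpath, hconn, hadj⟩ := exists_supernode (w := w) D hC.connected
  let A := ⋃ a ∈ insert D.count (D.boundaryLabels G N.domain), N.path a
  have hA : (G.induce A).Connected := hconn _ (Set.insert_nonempty _ _)
  have hnode : Function.update D.node D.count N D.count = N := Function.update_self ..
  have hlabel {v} (hv : v ∈ A) : A.piecewise (fun _ => D.count) D.label v = D.count :=
    Set.piecewise_eq_of_mem _ _ _ hv
  refine ⟨⟨D.free \ A, A.piecewise (fun _ => D.count) D.label, D.count + 1,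
    Function.update D.node D.count N⟩, A, ?_⟩
  exact
    { isComponent := hC
      subset := Set.iUnion₂_subset fun a _ => hpath a
      nonempty := Set.nonempty_coe_sort.1 hA.nonempty
      free_eq := rfl
      label_eq := fun v hv => Set.piecewise_eq_of_notMem A (fun _ => D.count) D.label hv
      label_mem := fun v hv => .inr ⟨hlabel hv, Nat.lt_succ_self _⟩
      count_le := Nat.le_succ _
      node_eq := fun j hj => Function.update_of_ne hj.ne _ _
      domain_eq := fun j hj => (Nat.lt_succ_iff_lt_or_eq.1 hj).imp_right fun h =>
        ⟨h, by simp only [h, hnode]⟩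
      count_eq := rfl
      domain_count := by simp only [hnode]
      isBuffered := hbuf
      label_eq_count := fun v hv => hlabel hv
      connected := hA
      exists_adj := fun a ha => by
        obtain ⟨v, hv, h⟩ := hadj a ha
        exact ⟨v, Set.mem_biUnion (Set.mem_insert_of_mem _ ha) hv, h⟩
      mem_path := fun v hv => by simpa only [hnode, A, Set.mem_iUnion, exists_prop] using hv
      isGeodesic := by simpa only [hnode] using hN }

theorem Constructible.exists_extends (hD : Constructible G w γ D) (hfree : D.free.Nonempty) :
    ∃ D' C A, Constructible G w γ D' ∧ Extends G D D' C A := by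
  obtain ⟨x, hx⟩ := hfree
  obtain ⟨C, hC, -⟩ := exists_isComponent (G := G) hx
  by_cases! h : ∀ i < D.count, i ∈ D.boundaryLabels G C ∨ IsBuffered G w γ D C i
  · obtain ⟨D', A, E⟩ := exists_isOpening hC h
    exact ⟨D', C, A, hD.opening E, E.toExtends⟩
  · obtain ⟨i, hlt, hi, hbuf⟩ := h
    obtain ⟨D', E⟩ := exists_isGrowth hC hlt hi hbuf
    exact ⟨D', C, _, hD.growth E, E.toExtends⟩

theorem exists_constructible_forall_notMem_free (G : SimpleGraph V) (w : Sym2 V → ℝ≥0) (γ : ℝ) :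
    ∃ D, Constructible G w γ D ∧ ∀ v, v ∉ D.free := by
  have complete (n : ℕ) : ∀ D : PartialDecomp V, Constructible G w γ D → D.free.ncard = n →
      ∃ D', Constructible G w γ D' ∧ ∀ v, v ∉ D'.free := by
    induction n using Nat.strong_induction_on with
    | _ n ih =>
      intro D hD hn
      rcases D.free.eq_empty_or_nonempty with hfree | hfree
      · exact ⟨D, hD, Set.eq_empty_iff_forall_notMem.1 hfree⟩
      obtain ⟨D', C, A, hD', E⟩ := hD.exists_extends hfree
      refine ih _ ?_ D' hD' rfl
      rw [← hn, E.free_eq]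
      exact Set.ncard_lt_ncard
        (sdiff_lt (E.subset.trans E.isComponent.subset) E.nonempty.ne_empty)
  exact complete _ ⟨.univ, 0, 0, fun _ => ⟨∅, fun _ => ∅, 0⟩⟩ (.init rfl rfl) rfl

end Existence

namespace Constructible

variable {x y : V} {L r : ℝ} {d M Y Z Z₁ Z₂ : ℕ}

theorem isEliminationOrder (hD : Constructible G w γ D)
    (hd : ∀ j < D.count, (D.ancestors G j).ncard ≤ d) :
    IsEliminationOrder (D.ancestors G) D.count d :=
  ⟨hD.ancestors_lt, hD.mem_ancestors_of_mem_ancestors, hd⟩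

theorem hasWalkIn_domain (hD : Constructible G w γ D) (hj : j < D.count)
    (hx : x ∈ (D.node j).domain) (h : HasWalkIn G w {u | j ≤ D.label u} x v L) :
    HasWalkIn G w (D.node j).domain x v L := by
  refine (h.inter_of_disjoint_outerBoundary hx ?_).mono Set.inter_subset_left le_rfl
  exact Set.disjoint_left.2 fun u hu => (hD.ancestors_lt j hj _ ⟨u, hu, rfl⟩).not_ge

variable (hD : Constructible G w γ D) (hfree : ∀ v, v ∉ D.free)
include hD hfree

theorem le_of_hasWalkIn_notMem_ancestors (hlt : D.label v < j) (hj : j < D.count)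
    (hv : D.label v ∉ D.ancestors G j) (hx : x ∈ (D.node j).domain)
    (h : HasWalkIn G w {u | D.label v ≤ D.label u} x v L) : γ ≤ L := by
  obtain ⟨H, hH⟩ := (hD.mem_ancestors_or_isBuffered_domain j hj _ hlt).resolve_left hv
  have hvH : v ∉ H := hH.disjoint_part.notMem_of_mem_right ⟨hfree v, rfl⟩
  obtain ⟨z, hz, y, hy, L₁, L₂, hzy, h₁, h₂, hL⟩ := h.exists_exit (hH.subset hx) hvH
  have hyH : y ∈ outerBoundary G H := ⟨hy, z, hz, hzy⟩
  have hlt : D.label v < D.label y :=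
    lt_of_le_of_ne h₂.left_mem fun h => hH.notMem_boundaryLabels ⟨y, hyH, h.symm⟩
  by_contra! hγ
  refine hH.disjoint_nearSet.notMem_of_mem_left hx ⟨z, hz, y, ⟨hyH, hlt⟩, hzy, L₁,
    h₁.mono Set.inter_subset_left le_rfl, ?_⟩
  linarith [h₂.nonneg]

theorem label_mem_ancestors_of_adj (hj : j < D.count) (hx : x ∈ (D.node j).domain)
    (hxy : G.Adj x y) (hlt : D.label y < j) : D.label y ∈ D.ancestors G j := by
  by_cases hy : y ∈ (D.node j).domain
  · exact hD.label_mem_ancestors j hj y hy (hfree y) hlt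
  · exact ⟨y, ⟨hy, x, hx, hxy⟩, rfl⟩

theorem exists_isLeast_ancestors (hj : j < D.count) (hlt : D.label v < j)
    (hx : x ∈ (D.node j).domain) (h : HasWalkIn G w {u | D.label v ≤ D.label u} x v L) :
    ∃ Z, IsLeast (D.ancestors G j ∩ Set.Ici (D.label v)) Z := by
  suffices (D.ancestors G j ∩ Set.Ici (D.label v)).Nonempty from ⟨_, isLeast_csInf this⟩
  by_cases hv : v ∈ (D.node j).domain
  · exact ⟨_, hD.label_mem_ancestors j hj v hv (hfree v) hlt, Set.self_mem_Ici⟩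
  · obtain ⟨z, hz, y, hy, L₁, L₂, hzy, -, h₂, -⟩ := h.exists_exit hx hv
    exact ⟨_, ⟨y, ⟨hy, z, hz, hzy⟩, rfl⟩, h₂.left_mem⟩

theorem mem_domain_of_le_label (hj : j < D.count) (hZ : Z ∈ D.ancestors G j)
    (hy : D.label y ∈ D.ancestors G j) (hle : Z ≤ D.label y) : y ∈ (D.node Z).domain := by
  have hydom := hD.mem_domain_label y (hfree y)
  rcases hle.eq_or_lt with rfl | hlt
  · exact hydom
  · exact hD.domain_subset_domain _ (hD.label_lt_count y (hfree y)) Z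
      (hD.mem_ancestors_of_mem_ancestors j hj Z hZ _ hy hlt) hydom

/-- The first vertex of the walk below `Z₁` is not adjacent to the component of `Z`, by minimality
of `Z₁`, so that component is buffered from it. -/
theorem exists_suffix_of_isLeast_ancestors (hZ : Z < D.count) (hx : x ∈ (D.node Z).domain)
    (h : HasWalkIn G w {u | D.label v ≤ D.label u} x v L)
    (hZ₁ : IsLeast (D.ancestors G Z ∩ Set.Ici (D.label v)) Z₁) (hlt : D.label v < Z₁) :
    ∃ y L', D.label y ∈ D.ancestors G Z₁ ∧ γ + L' ≤ L ∧
      HasWalkIn G w {u | D.label v ≤ D.label u} y v L' := by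
  have hZ₁Z : Z₁ < Z := hD.ancestors_lt Z hZ Z₁ hZ₁.1.1
  have hx₁ : x ∈ (D.node Z₁).domain := hD.domain_subset_domain Z hZ Z₁ hZ₁.1.1 hx
  have hxZ₁ : Z₁ ≤ D.label x := by
    rcases lt_or_ge (D.label x) Z with hxZ | hxZ
    · exact hZ₁.2 ⟨hD.label_mem_ancestors Z hZ x hx (hfree x) hxZ, h.left_mem⟩
    · exact hZ₁Z.le.trans hxZ
  obtain ⟨z, -, y, hy, L₁, L₂, hzy, h₁, h₂, hL⟩ :=
    h.exists_exit (H := {u | Z₁ ≤ D.label u}) hxZ₁ hlt.not_ge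
  have hyZ₁ : D.label y < Z₁ := lt_of_not_ge hy
  have hzdom : z ∈ (D.node Z₁).domain :=
    (hD.hasWalkIn_domain (hZ₁Z.trans hZ) hx₁ (h₁.mono Set.inter_subset_left le_rfl)).right_mem
  have hyZ : D.label y ∉ D.ancestors G Z := fun hmem => hyZ₁.not_ge (hZ₁.2 ⟨hmem, h₂.left_mem⟩)
  have h₁' : HasWalkIn G w {u | D.label y ≤ D.label u} x z L₁ :=
    h₁.mono (fun u hu => hyZ₁.le.trans hu.1) le_rfl
  have hγ : γ ≤ L₁ + w s(z, y) :=
    hD.le_of_hasWalkIn_notMem_ancestors hfree (hyZ₁.trans hZ₁Z) hZ hyZ hx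
      (h₁'.trans (.of_adj h₁'.right_mem (le_refl (D.label y)) hzy))
  exact ⟨y, L₂, hD.label_mem_ancestors_of_adj hfree (hZ₁Z.trans hZ) hzdom hzy hyZ₁,
    by linarith, h₂⟩

theorem hopReach_label (m : ℕ) (hZ : Z < D.count) (hle : D.label v ≤ Z)
    (hx : x ∈ (D.node Z).domain) (h : HasWalkIn G w {u | D.label v ≤ D.label u} x v L)
    (hL : L < m * γ) : HopReach (D.ancestors G) (2 * m) Z (D.label v) := by
  induction m generalizing Z x L with
  | zero => exact absurd hL (by simpa using h.nonneg)
  | succ m ih =>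
    rcases hle.eq_or_lt with heq | hlt
    · exact heq ▸ .refl _ _
    obtain ⟨Z₁, hZ₁⟩ := hD.exists_isLeast_ancestors hfree hZ hlt hx h
    have hZ₁D : Z₁ < D.count := (hD.ancestors_lt Z hZ Z₁ hZ₁.1.1).trans hZ
    refine .hop hZ₁ ?_
    rcases (show D.label v ≤ Z₁ from hZ₁.1.2).eq_or_lt with heq | hlt₁
    · exact heq ▸ .refl _ _
    obtain ⟨y, L', hy, hL', hW⟩ := hD.exists_suffix_of_isLeast_ancestors hfree hZ hx h hZ₁ hlt₁
    obtain ⟨Z₂, hZ₂⟩ : ∃ Z₂, IsLeast (D.ancestors G Z₁ ∩ Set.Ici (D.label v)) Z₂ :=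
      ⟨_, isLeast_csInf ⟨_, hy, hW.left_mem⟩⟩
    refine .hop hZ₂ (ih ((hD.ancestors_lt Z₁ hZ₁D Z₂ hZ₂.1.1).trans hZ₁D) hZ₂.1.2
      (hD.mem_domain_of_le_label hfree hZ₁D hZ₂.1.1 hy (hZ₂.2 ⟨hy, hW.left_mem⟩)) hW ?_)
    push_cast at hL
    linarith

end Constructible

/-- The supernodes that are weakly `r`-reachable from `p`: there is a walk of length at most `r`
from `p` to the supernode that visits no older supernode. -/
def weakReach (G : SimpleGraph V) (w : Sym2 V → ℝ≥0) (D : PartialDecomp V) (r : ℝ) (p : V) :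
    Set ℕ :=
  {i | ∃ y, D.label y = i ∧ HasWalkIn G w {u | i ≤ D.label u} p y r}

theorem Constructible.encard_weakReach_le {d M : ℕ} {r : ℝ} (hD : Constructible G w γ D)
    (hfree : ∀ v, v ∉ D.free) (hd : ∀ j < D.count, (D.ancestors G j).ncard ≤ d)
    (hr : r < M * γ) (p : V) :
    (D.weakReach G w r p).encard ≤ ((2 * M + d).choose d : ℕ) := by
  have hp := hD.label_lt_count p (hfree p)
  refine (Set.encard_le_encard ?_).trans
    ((hD.isEliminationOrder hd).encard_hopReachSet_le (j := 0) hp)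
  rintro _ ⟨y, rfl, h⟩
  exact ⟨hD.hopReach_label hfree M hp h.left_mem (hD.mem_domain_label p (hfree p)) h hr,
    Nat.zero_le _⟩

end PartialDecomp

end Decomposition

section Minors

variable {G G' : SimpleGraph V} {h : ℕ}

theorem HasCompleteMinor.mono (hG : HasCompleteMinor G h) (hle : G ≤ G') :
    HasCompleteMinor G' h := by
  obtain ⟨B, hconn, hdisj, hadj⟩ := hG
  refine ⟨B, fun i => (hconn i).mono fun _ _ huv => hle huv, hdisj, fun i j hij => ?_⟩
  obtain ⟨u, hu, v, hv, huv⟩ := hadj i j hij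
  exact ⟨u, hu, v, hv, hle huv⟩

theorem hasCompleteMinor_of_le_card {ι : Type*} {s : Finset ι} {B : ι → Set V} (hs : h ≤ s.card)
    (hconn : ∀ i ∈ s, (G.induce (B i)).Connected) (hdisj : (s : Set ι).PairwiseDisjoint B)
    (hadj : (s : Set ι).Pairwise fun i j => ∃ u ∈ B i, ∃ v ∈ B j, G.Adj u v) :
    HasCompleteMinor G h := by
  obtain ⟨f⟩ : Nonempty (Fin h ↪ s) := Function.Embedding.nonempty_of_card_le (by simpa using hs)
  have hne {i j : Fin h} (hij : i ≠ j) : (f i : ι) ≠ f j :=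
    fun hf => hij (f.injective (Subtype.ext hf))
  exact ⟨fun i => B (f i), fun i => hconn _ (f i).2,
    fun i j hij => hdisj (f i).2 (f j).2 (hne hij), fun i j hij => hadj (f i).2 (f j).2 (hne hij)⟩

theorem hasCompleteMinor_one [Nonempty V] (G : SimpleGraph V) : HasCompleteMinor G 1 := by
  obtain ⟨v⟩ := ‹Nonempty V›
  refine hasCompleteMinor_of_le_card (s := {()}) (B := fun _ => {v}) (by simp) (fun _ _ => ?_)
    (by simp) (by simp)
  exact SimpleGraph.Connected.mk (SimpleGraph.Preconnected.of_subsingleton)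

theorem PartialDecomp.Constructible.ncard_ancestors_add_one_lt {w : Sym2 V → ℝ≥0} {γ : ℝ}
    {D : PartialDecomp V} {j : ℕ} (hD : D.Constructible G w γ) (hminor : ¬ HasCompleteMinor G h)
    (hj : j < D.count) : (D.ancestors G j).ncard + 1 < h := by
  classical
  by_contra! hh
  have hfin := hD.finite_ancestors hj
  have hnotMem : j ∉ hfin.toFinset := fun hmem =>
    lt_irrefl j (hD.ancestors_lt j hj j (hfin.mem_toFinset.1 hmem))
  have hlt : ∀ i ∈ insert j hfin.toFinset, i < D.count := by
    simp only [Finset.mem_insert, hfin.mem_toFinset]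
    rintro i (rfl | hi)
    exacts [hj, (hD.ancestors_lt j hj i hi).trans hj]
  have hancestor : ∀ a ∈ insert j hfin.toFinset, ∀ b ∈ insert j hfin.toFinset, a < b →
      a ∈ D.ancestors G b := by
    simp only [Finset.mem_insert, hfin.mem_toFinset]
    rintro a (rfl | ha) b (rfl | hb) hab
    · exact absurd hab (lt_irrefl _)
    · exact absurd hab (hD.ancestors_lt a hj b hb).not_gt
    · exact ha
    · exact hD.mem_ancestors_of_mem_ancestors j hj a ha b hb hab
  refine hminor (hasCompleteMinor_of_le_card (s := insert j hfin.toFinset) (B := D.part) ?_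
    (fun i hi => hD.part_connected i (hlt i hi)) ?_ fun a ha b hb hab => ?_)
  · rwa [Finset.card_insert_of_notMem hnotMem, ← Set.ncard_eq_toFinset_card _ hfin]
  · exact fun a _ b _ hab => Set.disjoint_left.2 fun v hva hvb => hab (hva.2.symm.trans hvb.2)
  · rcases hab.lt_or_gt with hab | hab
    · exact hD.exists_adj_part b (hlt b hb) a (hancestor a ha b hb hab)
    · obtain ⟨x, hx, y, hy, hxy⟩ := hD.exists_adj_part a (hlt a ha) b (hancestor b hb a ha hab)
      exact ⟨y, hy, x, hx, hxy.symm⟩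

end Minors

section Hubs

/-- Every vertex has at most `m` hubs, and any two vertices joined by a walk of length at most `r`
have a common hub, represented by a vertex through which the detour costs at most `δ`. -/
def HasHubs {V : Type*} (G : SimpleGraph V) (w : Sym2 V → ℝ≥0) (r δ : ℝ) (m : ℕ) : Prop :=
  ∃ (ι : Type) (H : V → Finset ι) (rep : ι → V), (∀ p, (H p).card ≤ m) ∧
    ∀ p x, HasWalkIn G w Set.univ p x r → ∃ z ∈ H p, z ∈ H x ∧ ∃ L₁ L₂,
      HasWalkIn G w Set.univ p (rep z) L₁ ∧ HasWalkIn G w Set.univ (rep z) x L₂ ∧ L₁ + L₂ ≤ r + δ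

theorem card_Icc_floor_le {x b Δ : ℝ} (hΔ : 0 < Δ) (hb : 0 ≤ b) :
    (Finset.Icc ⌊(x - b) / Δ⌋ ⌊(x + b) / Δ⌋).card ≤ ⌊2 * b / Δ + 2⌋₊ := by
  have hle : ⌊(x - b) / Δ⌋ ≤ ⌊(x + b) / Δ⌋ := by gcongr; linarith
  have hcard : ((Finset.Icc ⌊(x - b) / Δ⌋ ⌊(x + b) / Δ⌋).card : ℝ) =
      ⌊(x + b) / Δ⌋ + 1 - ⌊(x - b) / Δ⌋ := by
    exact_mod_cast Int.card_Icc_of_le _ _ (hle.trans (Int.le_add_one le_rfl))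
  have hdiff : (x + b) / Δ - (x - b) / Δ = 2 * b / Δ := by ring
  apply Nat.le_floor
  linarith [Int.floor_le ((x + b) / Δ), Int.lt_floor_add_one ((x - b) / Δ)]

variable {V : Type*} {G : SimpleGraph V} {w : Sym2 V → ℝ≥0} {γ r Δ : ℝ}

theorem Supernode.IsGeodesic.hasWalkIn_of_floor_eq {N : Supernode V} (hN : N.IsGeodesic G w)
    (hΔ : 0 < Δ) {a : ℕ} {x y : V} (hx : x ∈ N.path a) (hy : y ∈ N.path a)
    (hxy : ⌊N.pos x / Δ⌋ = ⌊N.pos y / Δ⌋) : HasWalkIn G w N.domain x y Δ := by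
  refine (hN.hasWalkIn_abs_pos_sub a x hx y hy).mono subset_rfl ?_
  have := Int.abs_sub_lt_one_of_floor_eq_floor hxy
  rw [← sub_div, abs_div, abs_of_pos hΔ, div_lt_one hΔ] at this
  exact this.le

namespace PartialDecomp

variable {D : PartialDecomp V}

/-- The hubs of `p`: a hub is a segment of length `Δ` on the skeleton path of a weakly reachable
supernode, recorded as the label of the supernode, the index of the path and the number of the
segment; only segments whose position is close to that of `p` count. -/
def hubs (G : SimpleGraph V) (w : Sym2 V → ℝ≥0) (D : PartialDecomp V) (r Δ : ℝ) (p : V) :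
    Set (Σ _ : ℕ, ℕ × ℤ) :=
  (D.weakReach G w r p).sigma fun i => insert i (D.ancestors G i) ×ˢ
    Set.Icc ⌊((D.node i).pos p - (r + Δ)) / Δ⌋ ⌊((D.node i).pos p + (r + Δ)) / Δ⌋

namespace Constructible

variable (hD : D.Constructible G w γ) (hfree : ∀ v, v ∉ D.free)
include hD hfree

theorem exists_finset_coe_eq_hubs [Finite V] {d M : ℕ}
    (hd : ∀ j < D.count, (D.ancestors G j).ncard ≤ d) (hr : 0 ≤ r) (hrM : r < M * γ) (hΔ : 0 < Δ)
    (p : V) : ∃ s : Finset (Σ _ : ℕ, ℕ × ℤ), (s : Set _) = D.hubs G w r Δ p ∧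
      s.card ≤ (2 * M + d).choose d * ((d + 1) * ⌊2 * (r + Δ) / Δ + 2⌋₊) := by
  classical
  have hreach := hD.encard_weakReach_le hfree hd hrM p
  have hreach_fin : (D.weakReach G w r p).Finite := Set.finite_of_encard_le_coe hreach
  have hanc_fin (i : ℕ) : (D.ancestors G i).Finite := (Set.toFinite _).image _
  refine ⟨hreach_fin.toFinset.sigma fun i => insert i (hanc_fin i).toFinset ×ˢ
    Finset.Icc ⌊((D.node i).pos p - (r + Δ)) / Δ⌋ ⌊((D.node i).pos p + (r + Δ)) / Δ⌋, ?_, ?_⟩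
  · ext; simp [hubs]
  rw [Finset.card_sigma]
  refine (Finset.sum_le_card_nsmul _ _ ((d + 1) * ⌊2 * (r + Δ) / Δ + 2⌋₊) fun i hi => ?_).trans ?_
  · obtain ⟨y, rfl, -⟩ := hreach_fin.mem_toFinset.1 hi
    rw [Finset.card_product]
    refine Nat.mul_le_mul ((Finset.card_insert_le _ _).trans (Nat.succ_le_succ ?_))
      (card_Icc_floor_le hΔ (by positivity))
    rw [← Set.ncard_eq_toFinset_card _ (hanc_fin _)]
    exact hd _ (hD.label_lt_count y (hfree y))
  · rw [smul_eq_mul, ← Set.ncard_eq_toFinset_card _ hreach_fin]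
    exact Nat.mul_le_mul_right _ (ENat.toNat_le_of_le_natCast hreach)

theorem hasWalkIn_domain_label {y v : V} {L : ℝ}
    (h : HasWalkIn G w {u | D.label y ≤ D.label u} y v L) :
    HasWalkIn G w (D.node (D.label y)).domain y v L :=
  hD.hasWalkIn_domain (hD.label_lt_count y (hfree y)) (hD.mem_domain_label y (hfree y)) h

theorem mem_hubs {a : ℕ} {y v t : V} {L : ℝ} (hL : L ≤ r)
    (h : HasWalkIn G w {u | D.label y ≤ D.label u} y v L)
    (ha : a ∈ insert (D.label y) (D.ancestors G (D.label y)))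
    (hyt : HasWalkIn G w (D.node (D.label y)).domain y t Δ) (hΔ : 0 < Δ) :
    ⟨D.label y, a, ⌊(D.node (D.label y)).pos t / Δ⌋⟩ ∈ D.hubs G w r Δ v := by
  have hpos := (hD.isGeodesic _ (hD.label_lt_count y (hfree y))).abs_pos_sub_le v t _
    ((hD.hasWalkIn_domain_label hfree h).symm.trans hyt)
  rw [abs_sub_le_iff] at hpos
  refine ⟨⟨y, rfl, h.symm.mono subset_rfl hL⟩, ha, ?_, ?_⟩ <;>
  · dsimp only
    gcongr
    linarith

/-- The hub of a walk is the segment next to its vertex of least label. -/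
theorem hasHubs [Finite V] [Nonempty V] {d M : ℕ}
    (hd : ∀ j < D.count, (D.ancestors G j).ncard ≤ d) (hγ : 0 ≤ γ) (hr : 0 ≤ r) (hrM : r < M * γ)
    (hΔ : 0 < Δ) (hγd : γ * d ≤ Δ) :
    HasHubs G w r (4 * Δ) ((2 * M + d).choose d * ((d + 1) * ⌊2 * (r + Δ) / Δ + 2⌋₊)) := by
  choose H hH hcard using hD.exists_finset_coe_eq_hubs hfree hd hr hrM hΔ
  let IsRep (z : Σ _ : ℕ, ℕ × ℤ) (t : V) : Prop :=
    t ∈ (D.node z.1).path z.2.1 ∧ ⌊(D.node z.1).pos t / Δ⌋ = z.2.2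
  refine ⟨_, H, fun z => Classical.epsilon (IsRep z), hcard, fun p x hpx => ?_⟩
  obtain ⟨y, L₁, L₂, h₁, h₂, hL⟩ := hpx.exists_split_min D.label
  simp only [Set.mem_univ, true_and] at h₁ h₂
  have hy := hD.label_lt_count y (hfree y)
  obtain ⟨a, ha, t, ht, hyt⟩ : NearSkeleton G w D (D.label y) y Δ := by
    refine (hD.nearSkeleton_label hγ y (hfree y)).mono (le_trans ?_ hγd)
    gcongr
    exact hd _ hy
  let z : Σ _ : ℕ, ℕ × ℤ := ⟨D.label y, a, ⌊(D.node (D.label y)).pos t / Δ⌋⟩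
  obtain ⟨hrep, hfloor⟩ : IsRep z (Classical.epsilon (IsRep z)) :=
    Classical.epsilon_spec ⟨t, ht, rfl⟩
  have hyz := hyt.trans ((hD.isGeodesic _ hy).hasWalkIn_of_floor_eq hΔ ht hrep hfloor.symm)
  have mem_H {v : V} {L : ℝ} (hL : L ≤ r) (h : HasWalkIn G w {u | D.label y ≤ D.label u} y v L) :
      z ∈ H v := by
    rw [← Finset.mem_coe, hH]
    exact hD.mem_hubs hfree hL h ha hyt hΔ
  refine ⟨z, mem_H (by linarith [h₂.nonneg]) h₁.symm, mem_H (by linarith [h₁.nonneg]) h₂,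
    L₁ + (Δ + Δ), Δ + Δ + L₂, ?_, ?_, by linarith⟩
  · exact (h₁.mono (Set.subset_univ _) le_rfl).trans (hyz.mono (Set.subset_univ _) le_rfl)
  · exact (hyz.symm.mono (Set.subset_univ _) le_rfl).trans (h₂.mono (Set.subset_univ _) le_rfl)

end Constructible

end PartialDecomp

/-- The number of hubs per vertex for scale `r` and detour `ε * r / 6`. -/
noncomputable def hubBound (h : ℕ) (ε : ℝ) : ℕ :=
  (2 * ⌈36 * (h : ℝ) / ε⌉₊ + (h - 2)).choose (h - 2) * ((h - 1) * ⌊48 / ε + 4⌋₊)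

theorem hasHubs_of_not_hasCompleteMinor {V : Type} [Finite V] [Nonempty V] {G : SimpleGraph V}
    {h : ℕ} (hh : 2 ≤ h) (hminor : ¬ HasCompleteMinor G h) (w : Sym2 V → ℝ≥0) {ε : ℝ} (hε : 0 < ε)
    (hr : 0 < r) : HasHubs G w r (ε * r / 6) (hubBound h ε) := by
  have : (0 : ℝ) < h := by exact_mod_cast two_pos.trans_le hh
  have hsub : ((h - 2 : ℕ) : ℝ) ≤ h := by exact_mod_cast Nat.sub_le h 2
  obtain ⟨D, hD, hfree⟩ :=
    PartialDecomp.exists_constructible_forall_notMem_free G w (ε * r / 24 / h)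
  have hd : ∀ j < D.count, (D.ancestors G j).ncard ≤ h - 2 := fun j hj => by
    have := hD.ncard_ancestors_add_one_lt hminor hj
    lia
  have hrM : r < ⌈36 * (h : ℝ) / ε⌉₊ * (ε * r / 24 / h) := calc
    r < 36 * (h : ℝ) / ε * (ε * r / 24 / h) := by field_simp; norm_num
    _ ≤ _ := by gcongr; exact Nat.le_ceil _
  have hγd : ε * r / 24 / h * (h - 2 : ℕ) ≤ ε * r / 24 := calc
    _ ≤ ε * r / 24 / h * h := by gcongr
    _ = _ := by field_simp
  have hubs := hD.hasHubs hfree hd (by positivity) hr.le hrM (by positivity) hγd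
  have hcount : 2 * (r + ε * r / 24) / (ε * r / 24) + 2 = 48 / ε + 4 := by field_simp; ring
  rwa [hcount, show h - 2 + 1 = h - 1 by lia, show 4 * (ε * r / 24) = ε * r / 6 by ring] at hubs

end Hubs

section HittingKernel

variable {α β : Type*} {A : α → Finset β} {P S : Finset α} {K a : ℕ}

/-- Every set of at most `K` elements that meets all `A s` with `s ∈ S` meets all `A p` with
`p ∈ P`. -/
def IsHittingKernel (A : α → Finset β) (K : ℕ) (P S : Finset α) : Prop :=
  ∀ B : Finset β, B.card ≤ K → (∀ s ∈ S, ¬ Disjoint (A s) B) → ∀ p ∈ P, ¬ Disjoint (A p) B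

theorem isHittingKernel_of_eq_empty {s : α} (hs : s ∈ S) (hA : A s = ∅) :
    IsHittingKernel A K P S :=
  fun B _ h => absurd (hA ▸ Finset.disjoint_empty_left B) (h s hs)

theorem isHittingKernel_of_pairwiseDisjoint (hS : (S : Set α).PairwiseDisjoint A)
    (hK : K < S.card) : IsHittingKernel A K P S := by
  classical
  intro B hB h
  have hcard : S.card ≤ (S.biUnion fun s => A s ∩ B).card :=
    Finset.card_le_card_biUnion
      (hS.mono fun s => Finset.inter_subset_left)
      fun s hs => Finset.not_disjoint_iff_nonempty_inter.1 (h s hs)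
  have hsub : (S.biUnion fun s => A s ∩ B) ⊆ B :=
    Finset.biUnion_subset.2 fun s _ => Finset.inter_subset_right
  exact absurd (hcard.trans (Finset.card_le_card hsub)) (hB.trans_lt hK).not_ge

theorem isHittingKernel_biUnion [DecidableEq α] [DecidableEq β] {U : Finset β} {S : β → Finset α}
    (hU : ∀ p ∈ P, ∃ u ∈ U, u ∈ A p)
    (hS : ∀ u, IsHittingKernel (fun p => (A p).erase u) K {p ∈ P | u ∈ A p} (S u)) :
    IsHittingKernel A K P (U.biUnion S) := by
  intro B hB h p hp
  obtain ⟨u, hu, hup⟩ := hU p hp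
  by_cases huB : u ∈ B
  · exact Finset.not_disjoint_iff.2 ⟨u, hup, huB⟩
  have disjoint_erase (s : α) : Disjoint ((A s).erase u) B ↔ Disjoint (A s) B := by
    rw [Finset.disjoint_erase_comm, Finset.erase_eq_of_notMem huB]
  exact mt (disjoint_erase p).2 (hS u B hB
    (fun s hs => mt (disjoint_erase s).1 (h s (Finset.mem_biUnion.2 ⟨u, hu, hs⟩))) p
    (Finset.mem_filter.2 ⟨hp, hup⟩))

theorem exists_maximal_pairwiseDisjoint (A : α → Finset β) (P : Finset α) :
    ∃ T ⊆ P, (T : Set α).PairwiseDisjoint A ∧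
      ∀ p ∈ P, (A p).Nonempty → ∃ t ∈ T, ¬ Disjoint (A t) (A p) := by
  classical
  obtain ⟨T, hT, hmax⟩ :=
    (P.powerset.filter fun T : Finset α => (↑T : Set α).PairwiseDisjoint A).exists_max_image
      Finset.card ⟨∅, by simp⟩
  simp only [Finset.mem_filter, Finset.mem_powerset] at hT hmax
  refine ⟨T, hT.1, hT.2, fun p hp hne => ?_⟩
  by_contra! hdisj
  have hpT : p ∉ T := fun h => hne.ne_empty (Finset.disjoint_self_iff_empty _ |>.1 (hdisj p h))
  have := hmax (insert p T) ⟨Finset.insert_subset hp hT.1, by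
    rw [Finset.coe_insert]
    exact hT.2.insert fun t ht _ => (hdisj t ht).symm⟩
  rw [Finset.card_insert_of_notMem hpT] at this
  lia

theorem exists_isHittingKernel (K : ℕ) (P : Finset α) (hA : ∀ p ∈ P, (A p).card ≤ a) :
    ∃ S ⊆ P, S.card ≤ (K * a + 1) ^ a ∧ IsHittingKernel A K P S := by
  classical
  induction a generalizing P A with
  | zero =>
    rcases P.eq_empty_or_nonempty with rfl | ⟨p, hp⟩
    · exact ⟨∅, subset_rfl, by simp, by simp [IsHittingKernel]⟩
    · exact ⟨{p}, by simpa using hp, by simp, isHittingKernel_of_eq_empty (by simp)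
        (Finset.card_eq_zero.1 (Nat.le_zero.1 (hA p hp)))⟩
  | succ a ih =>
    by_cases! hempty : ∃ p ∈ P, A p = ∅
    · obtain ⟨p, hp, hAp⟩ := hempty
      exact ⟨{p}, by simpa using hp, by simpa using Nat.one_le_pow _ _ (Nat.succ_pos _),
        isHittingKernel_of_eq_empty (by simp) hAp⟩
    obtain ⟨T, hTP, hT, hmeet⟩ := exists_maximal_pairwiseDisjoint A P
    rcases lt_or_ge K T.card with hK | hK
    · obtain ⟨S, hST, hS⟩ := Finset.exists_subset_card_eq (Nat.succ_le_of_lt hK)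
      refine ⟨S, hST.trans hTP, ?_,
        isHittingKernel_of_pairwiseDisjoint (hT.subset hST) (hS ▸ Nat.lt_succ_self K)⟩
      exact hS.le.trans ((Nat.succ_le_succ (Nat.le_mul_of_pos_right K a.succ_pos)).trans
        (Nat.le_self_pow a.succ_ne_zero _))
    have hU : (T.biUnion A).card ≤ K * (a + 1) :=
      (Finset.card_biUnion_le_card_mul _ _ (a + 1) fun p hp => hA p (hTP hp)).trans
        (Nat.mul_le_mul_right _ hK)
    have ih_erase (u : β) := ih (A := fun p => (A p).erase u) {p ∈ P | u ∈ A p} fun p hp => by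
      obtain ⟨hp, hu⟩ := Finset.mem_filter.1 hp
      rw [Finset.card_erase_of_mem hu]
      exact Nat.sub_le_of_le_add (hA p hp)
    choose S hSP hScard hS using ih_erase
    refine ⟨(T.biUnion A).biUnion S, ?_, ?_, isHittingKernel_biUnion (fun p hp => ?_) hS⟩
    · exact Finset.biUnion_subset.2 fun u _ => (hSP u).trans (Finset.filter_subset _ _)
    · calc ((T.biUnion A).biUnion S).card
          ≤ (T.biUnion A).card * (K * a + 1) ^ a :=
            Finset.card_biUnion_le_card_mul _ _ _ fun u _ => hScard u
        _ ≤ (K * (a + 1) + 1) * (K * (a + 1) + 1) ^ a := by gcongr <;> lia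
        _ = (K * (a + 1) + 1) ^ (a + 1) := (pow_succ' _ _).symm
    · obtain ⟨t, ht, htp⟩ := hmeet p hp (hempty p hp)
      obtain ⟨u, hut, hup⟩ := Finset.not_disjoint_iff.1 htp
      exact ⟨u, Finset.mem_biUnion.2 ⟨t, ht, hut⟩, hup⟩

end HittingKernel

section Scale

variable {V ι : Type*} {G : SimpleGraph V} {w : Sym2 V → ℝ≥0} {r δ : ℝ} {H : V → Finset ι}
  {rep : ι → V} {p x : V}

open Classical in
/-- The reachable hubs of a client, together with their distance rounded down to a multiple of
`δ`. -/
noncomputable def clientKeys (G : SimpleGraph V) (w : Sym2 V → ℝ≥0) (δ : ℝ) (H : V → Finset ι)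
    (rep : ι → V) (p : V) : Finset (ι × ℕ) :=
  {z ∈ H p | ∃ L, HasWalkIn G w Set.univ p (rep z) L}.image fun z =>
    (z, ⌊distIn G w Set.univ p (rep z) / δ⌋₊)

open Classical in
/-- The hubs of a center, together with those multiples of `δ` for which a client at this distance
from the hub has distance at most `r + δ` from the center. -/
noncomputable def centerKeys (G : SimpleGraph V) (w : Sym2 V → ℝ≥0) (r δ : ℝ) (H : V → Finset ι)
    (rep : ι → V) (x : V) : Finset (ι × ℕ) :=
  {zj ∈ H x ×ˢ Finset.range ⌊r / δ + 2⌋₊ |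
    HasWalkIn G w Set.univ (rep zj.1) x (r + δ - zj.2 * δ)}

theorem not_disjoint_keys [Finite V] {z : ι} {L₁ L₂ : ℝ} (hδ : 0 < δ) (hp : z ∈ H p) (hx : z ∈ H x)
    (h₁ : HasWalkIn G w Set.univ p (rep z) L₁) (h₂ : HasWalkIn G w Set.univ (rep z) x L₂)
    (hL : L₁ + L₂ ≤ r + δ) :
    ¬ Disjoint (clientKeys G w δ H rep p) (centerKeys G w r δ H rep x) := by
  classical
  have hdist : (⌊distIn G w Set.univ p (rep z) / δ⌋₊ : ℝ) * δ ≤ L₁ := by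
    refine le_trans ?_ (distIn_le h₁)
    rw [← le_div_iff₀ hδ]
    exact Nat.floor_le (div_nonneg (hasWalkIn_distIn h₁).nonneg hδ.le)
  refine Finset.not_disjoint_iff.2 ⟨(z, ⌊distIn G w Set.univ p (rep z) / δ⌋₊),
    Finset.mem_image.2 ⟨z, Finset.mem_filter.2 ⟨hp, L₁, h₁⟩, rfl⟩, Finset.mem_filter.2
      ⟨Finset.mem_product.2 ⟨hx, Finset.mem_range.2 ?_⟩, h₂.mono subset_rfl (by linarith)⟩⟩
  refine Nat.succ_le_iff.1 (Nat.le_floor ?_)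
  have : (⌊distIn G w Set.univ p (rep z) / δ⌋₊ : ℝ) ≤ (r + δ) / δ := by
    rw [le_div_iff₀ hδ]
    linarith [h₂.nonneg]
  rw [add_div, div_self hδ.ne'] at this
  push_cast
  linarith

theorem hasWalkIn_of_not_disjoint_keys [Finite V] (hδ : 0 < δ)
    (h : ¬ Disjoint (clientKeys G w δ H rep p) (centerKeys G w r δ H rep x)) :
    HasWalkIn G w Set.univ p x (r + 2 * δ) := by
  classical
  obtain ⟨zj, hp, hx⟩ := Finset.not_disjoint_iff.1 h
  obtain ⟨z, hz, rfl⟩ := Finset.mem_image.1 hp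
  obtain ⟨-, L, hpz⟩ := Finset.mem_filter.1 hz
  refine ((hasWalkIn_distIn hpz).trans (Finset.mem_filter.1 hx).2).mono subset_rfl ?_
  have := Nat.lt_floor_add_one (distIn G w Set.univ p (rep z) / δ)
  rw [div_lt_iff₀ hδ] at this
  linarith

/-- A client is covered by `X` iff its keys meet those of `X`, up to an error of `2 * δ`. -/
theorem HasHubs.exists_subset_forall_cover [Finite V] {m : ℕ} (hubs : HasHubs G w r δ m)
    (hδ : 0 < δ) (k : ℕ) (P : Finset V) :
    ∃ S ⊆ P, S.card ≤ (k * (m * ⌊r / δ + 2⌋₊) * m + 1) ^ m ∧ ∀ X : Finset V, X.card ≤ k →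
      (∀ s ∈ S, ∃ x ∈ X, HasWalkIn G w Set.univ s x r) →
      ∀ p ∈ P, ∃ x ∈ X, HasWalkIn G w Set.univ p x (r + 2 * δ) := by
  classical
  obtain ⟨ι, H, rep, hcard, hH⟩ := hubs
  obtain ⟨S, hSP, hScard, hS⟩ := exists_isHittingKernel (A := clientKeys G w δ H rep)
    (k * (m * ⌊r / δ + 2⌋₊)) P fun p _ =>
      Finset.card_image_le.trans ((Finset.card_filter_le _ _).trans (hcard p))
  refine ⟨S, hSP, hScard, fun X hX hcover p hp => ?_⟩
  have hkeys (x : V) : (centerKeys G w r δ H rep x).card ≤ m * ⌊r / δ + 2⌋₊ := by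
    refine (Finset.card_filter_le _ _).trans ?_
    rw [Finset.card_product, Finset.card_range]
    exact Nat.mul_le_mul_right _ (hcard x)
  have hB : (X.biUnion (centerKeys G w r δ H rep)).card ≤ k * (m * ⌊r / δ + 2⌋₊) :=
    (Finset.card_biUnion_le_card_mul _ _ _ fun x _ => hkeys x).trans (Nat.mul_le_mul_right _ hX)
  have hmeet := hS _ hB (fun s hs => ?_) p hp
  · simp only [Finset.disjoint_biUnion_right, not_forall] at hmeet
    obtain ⟨x, hx, hpx⟩ := hmeet
    exact ⟨x, hx, hasWalkIn_of_not_disjoint_keys hδ hpx⟩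
  · obtain ⟨x, hx, hsx⟩ := hcover s hs
    obtain ⟨z, hzs, hzx, L₁, L₂, h₁, h₂, hL⟩ := hH s x hsx
    simp only [Finset.disjoint_biUnion_right, not_forall]
    exact ⟨x, hx, not_disjoint_keys hδ hzs hzx h₁ h₂ hL⟩

end Scale

section Coreset

open Metric

variable {α : Type*} [PseudoEMetricSpace α] {P Q X : Finset α} {k N : ℕ}

/-- Any `X` with at most `k` points and within distance `r` of every point of `S` is within
distance `r'` of every point of `P`: a coreset for the `k`-Center problem at the single scale
`r`. -/
def IsCoverCoreset (k : ℕ) (P S : Finset α) (r r' : ℝ) : Prop :=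
  ∀ X : Finset α, X.card ≤ k → (∀ s ∈ S, infEDist s X ≤ ENNReal.ofReal r) →
    ∀ p ∈ P, infEDist p X ≤ ENNReal.ofReal r'

theorem exists_infEDist_eq_edist (hX : X.Nonempty) (p : α) :
    ∃ x ∈ X, infEDist p X = edist p x :=
  X.finite_toSet.isCompact.exists_infEDist_eq_edist hX p

theorem infEDist_le_ofReal_iff {p : α} {r : ℝ} :
    infEDist p X ≤ ENNReal.ofReal r ↔ ∃ x ∈ X, edist p x ≤ ENNReal.ofReal r := by
  refine ⟨fun h => ?_, fun ⟨x, hx, hpx⟩ => (infEDist_le_edist_of_mem hx).trans hpx⟩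
  rcases X.eq_empty_or_nonempty with rfl | hX
  · simp at h
  · obtain ⟨x, hx, hpx⟩ := exists_infEDist_eq_edist hX p
    exact ⟨x, hx, hpx ▸ h⟩

/-- The points of `Q` are chosen one by one, each as far as possible from the previous ones. -/
theorem exists_separated_cover (hP : P.Nonempty) (k : ℕ) :
    ∃ Q ⊆ P, Q.Nonempty ∧ Q.card ≤ k + 1 ∧ ∃ R, (∀ p ∈ P, infEDist p Q ≤ R) ∧
      (R = 0 ∨ Q.card = k + 1 ∧ (Q : Set α).Pairwise fun x y => R ≤ edist x y) := by
  classical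
  induction k with
  | zero =>
    obtain ⟨p, hp⟩ := hP
    exact ⟨{p}, by simpa using hp, by simp, by simp, ⊤, fun _ _ => le_top, .inr (by simp)⟩
  | succ k ih =>
    obtain ⟨Q, hQP, hQ, hcard, R, hcover, hR⟩ := ih
    obtain ⟨q, hq, hmax⟩ := P.exists_max_image (fun p => infEDist p Q) hP
    rcases eq_or_ne (infEDist q Q) 0 with h0 | h0
    · exact ⟨Q, hQP, hQ, hcard.trans k.succ.le_succ, _, hmax, .inl h0⟩
    have hqQ : q ∉ Q := fun h => h0 (infEDist_zero_of_mem h)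
    have hR0 : R ≠ 0 := fun h => h0 (le_zero_iff.1 (h ▸ hcover q hq))
    obtain ⟨hcard, hsep⟩ := hR.resolve_left hR0
    have hcard' : (insert q Q).card = k + 1 + 1 := by rw [Finset.card_insert_of_notMem hqQ, hcard]
    refine ⟨insert q Q, Finset.insert_subset hq hQP, Finset.insert_nonempty q Q, hcard'.le,
      infEDist q Q, fun p hp => ?_, .inr ⟨hcard', ?_⟩⟩
    · exact (infEDist_anti (Finset.coe_subset.2 (Finset.subset_insert q Q))).trans (hmax p hp)
    · rw [Finset.coe_insert, Set.pairwise_insert]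
      refine ⟨hsep.imp fun x y => (hcover q hq).trans, fun x hx _ => ?_⟩
      rw [edist_comm x q, and_self_iff]
      exact infEDist_le_edist_of_mem hx

theorem separation_le_add {R D : ℝ≥0∞} (hX : X.Nonempty) (hcard : X.card < Q.card)
    (hsep : (Q : Set α).Pairwise fun x y => R ≤ edist x y) (hD : ∀ q ∈ Q, infEDist q X ≤ D) :
    R ≤ D + D := by
  choose f hfX hf using exists_infEDist_eq_edist hX
  obtain ⟨s, hs, t, ht, hst, hfst⟩ :=
    Finset.exists_ne_map_eq_of_card_lt_of_maps_to hcard (f := f) fun s _ => hfX s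
  calc R ≤ edist s t := hsep hs ht hst
    _ ≤ edist s (f s) + edist t (f s) := edist_triangle_right s t (f s)
    _ = infEDist s X + infEDist t X := by rw [hf s, hf t, hfst]
    _ ≤ D + D := add_le_add (hD s hs) (hD t ht)

theorem infEDist_le_add_of_forall {R D : ℝ≥0∞} {p : α} (hQ : Q.Nonempty) (hp : infEDist p Q ≤ R)
    (hD : ∀ q ∈ Q, infEDist q X ≤ D) : infEDist p X ≤ R + D := by
  obtain ⟨q, hq, hpq⟩ := exists_infEDist_eq_edist hQ p
  exact infEDist_le_edist_add_infEDist.trans (add_le_add (hpq ▸ hp) (hD q hq))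

/-- The `l`-th scale at which clients are sampled, for a separation `R` of the farthest-first
traversal. -/
noncomputable def sampleScale (R ε : ℝ) (l : ℕ) : ℝ := R / 2 * (1 + l * ε / 4)

theorem sampleScale_pos {R ε : ℝ} (hR : 0 < R) (hε : 0 < ε) (l : ℕ) : 0 < sampleScale R ε l := by
  unfold sampleScale
  positivity

theorem exists_sampleScale {R D ε : ℝ} (hR : 0 < R) (hε : 0 < ε) (hRD : R ≤ 2 * D)
    (hDR : ε * D ≤ R) : ∃ l ≤ ⌈8 / ε ^ 2⌉₊,
      D ≤ sampleScale R ε l ∧ sampleScale R ε l ≤ D * (1 + ε / 4) := by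
  have hstep : 0 < R * ε / 8 := by positivity
  have hscale (l : ℕ) : sampleScale R ε l = R / 2 + l * (R * ε / 8) := by
    unfold sampleScale
    ring
  have hbound : (D - R / 2) / (R * ε / 8) ≤ 8 / ε ^ 2 := by
    rw [div_le_div_iff₀ hstep (by positivity)]
    nlinarith [mul_le_mul_of_nonneg_left hDR hε.le, mul_pos hR hε]
  refine ⟨⌈(D - R / 2) / (R * ε / 8)⌉₊, Nat.ceil_le_ceil hbound, ?_, ?_⟩
  · have := (div_le_iff₀ hstep).1 (Nat.le_ceil ((D - R / 2) / (R * ε / 8)))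
    rw [hscale]
    linarith
  · have := Nat.ceil_lt_add_one (div_nonneg (by linarith : 0 ≤ D - R / 2) hstep.le)
    rw [← sub_lt_iff_lt_add, lt_div_iff₀ hstep] at this
    rw [hscale]
    nlinarith

theorem infEDist_le_of_forall_isCoverCoreset {S : ℕ → Finset α} {R D ε : ℝ} (hε : 0 < ε)
    (hε₁ : ε ≤ 1) (hR : 0 < R) (hRD : R ≤ 2 * D) (hDR : ε * D ≤ R)
    (hS : ∀ l, IsCoverCoreset k P (S l) (sampleScale R ε l) (sampleScale R ε l * (1 + ε / 3)))
    (hX : X.card ≤ k)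
    (hD : ∀ l ≤ ⌈8 / ε ^ 2⌉₊, ∀ s ∈ S l, infEDist s X ≤ ENNReal.ofReal D) :
    ∀ p ∈ P, infEDist p X ≤ ENNReal.ofReal ((1 + ε) * D) := by
  obtain ⟨l, hl, hDl, hlD⟩ := exists_sampleScale hR hε hRD hDR
  intro p hp
  refine (hS l X hX (fun s hs => (hD l hl s hs).trans (ENNReal.ofReal_le_ofReal hDl)) p hp).trans
    (ENNReal.ofReal_le_ofReal ?_)
  have hD₀ : 0 ≤ D := by linarith
  calc sampleScale R ε l * (1 + ε / 3) ≤ D * (1 + ε / 4) * (1 + ε / 3) := by gcongr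
    _ = (1 + ε * (7 / 12 + ε / 12)) * D := by ring
    _ ≤ (1 + ε) * D := by
      gcongr
      nlinarith

/-- If `R ≤ ε * D`, going through a point of `Q` costs at most `R` more than `D`; otherwise `D` lies
between `R / 2` and `R / ε`, the range of the sampled scales. -/
theorem infEDist_le_of_separated_cover {S : ℕ → Finset α} {R D : ℝ≥0∞} {ε : ℝ} (hε : 0 < ε)
    (hε₁ : ε ≤ 1) (hQ : Q.Nonempty) (hcover : ∀ p ∈ P, infEDist p Q ≤ R)
    (hR : R = 0 ∨ Q.card = k + 1 ∧ (Q : Set α).Pairwise fun x y => R ≤ edist x y)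
    (hS : 0 < R.toReal → ∀ l, IsCoverCoreset k P (S l) (sampleScale R.toReal ε l)
      (sampleScale R.toReal ε l * (1 + ε / 3)))
    (hXn : X.Nonempty) (hX : X.card ≤ k) (hDQ : ∀ q ∈ Q, infEDist q X ≤ D)
    (hDS : ∀ l ≤ ⌈8 / ε ^ 2⌉₊, ∀ s ∈ S l, infEDist s X ≤ D) :
    ∀ p ∈ P, infEDist p X ≤ ENNReal.ofReal (1 + ε) * D := by
  intro p hp
  rcases le_or_gt R (ENNReal.ofReal ε * D) with hRD | hDR
  · refine (infEDist_le_add_of_forall hQ (hcover p hp) hDQ).trans ?_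
    rw [add_comm 1, ENNReal.ofReal_add hε.le zero_le_one, ENNReal.ofReal_one, add_mul, one_mul]
    gcongr
  obtain ⟨hcard, hsep⟩ := hR.resolve_left (pos_of_gt hDR).ne'
  have hRD : R ≤ D + D := separation_le_add hXn (by lia) hsep hDQ
  have hD : D ≠ ⊤ := by
    rintro rfl
    simp [ENNReal.mul_top, hε] at hDR
  have hR : R ≠ ⊤ := ne_top_of_le_ne_top (ENNReal.add_ne_top.2 ⟨hD, hD⟩) hRD
  have hR₀ : 0 < R.toReal := ENNReal.toReal_pos (pos_of_gt hDR).ne' hR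
  have hRD' : R.toReal ≤ 2 * D.toReal := by
    rw [two_mul, ← ENNReal.toReal_add hD hD]
    exact ENNReal.toReal_mono (ENNReal.add_ne_top.2 ⟨hD, hD⟩) hRD
  have hDR' : ε * D.toReal ≤ R.toReal := by
    rw [← ENNReal.toReal_ofReal hε.le, ← ENNReal.toReal_mul]
    exact ENNReal.toReal_mono hR hDR.le
  have hcovered := infEDist_le_of_forall_isCoverCoreset (D := D.toReal) hε hε₁ hR₀ hRD' hDR'
    (hS hR₀) hX (by rwa [ENNReal.ofReal_toReal hD]) p hp
  rwa [ENNReal.ofReal_mul (by positivity), ENNReal.ofReal_toReal hD] at hcovered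

theorem exists_coreset {ε : ℝ} (hε : 0 < ε) (hε₁ : ε ≤ 1) (hP : P.Nonempty)
    (hscale : ∀ r > 0, ∃ S ⊆ P, S.card ≤ N ∧ IsCoverCoreset k P S r (r * (1 + ε / 3))) :
    ∃ S ⊆ P, S.card ≤ k + 1 + (⌈8 / ε ^ 2⌉₊ + 1) * N ∧ ∀ X : Finset α, X.Nonempty → X.card ≤ k →
      ∀ p ∈ P, infEDist p X ≤ ENNReal.ofReal (1 + ε) * ⨆ s ∈ S, infEDist s X := by
  classical
  obtain ⟨Q, hQP, hQ, hcard, R, hcover, hR⟩ := exists_separated_cover hP k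
  have hsample (r : ℝ) : ∃ S ⊆ P, S.card ≤ N ∧
      (0 < r → IsCoverCoreset k P S r (r * (1 + ε / 3))) := by
    rcases lt_or_ge 0 r with hr | hr
    · obtain ⟨S, hSP, hSN, hS⟩ := hscale r hr
      exact ⟨S, hSP, hSN, fun _ => hS⟩
    · exact ⟨∅, by simp, by simp, fun h => absurd h hr.not_gt⟩
  choose S hSP hSN hS using fun l => hsample (sampleScale R.toReal ε l)
  let I := Finset.range (⌈8 / ε ^ 2⌉₊ + 1)
  have hSU {l : ℕ} (hl : l ≤ ⌈8 / ε ^ 2⌉₊) : S l ⊆ I.biUnion S :=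
    Finset.subset_biUnion_of_mem S (Finset.mem_range.2 (Nat.lt_succ_of_le hl))
  refine ⟨Q ∪ I.biUnion S, Finset.union_subset hQP (Finset.biUnion_subset.2 fun l _ => hSP l),
    ?_, fun X hXn hX => ?_⟩
  · refine (Finset.card_union_le _ _).trans (Nat.add_le_add hcard ?_)
    exact (Finset.card_biUnion_le_card_mul _ _ N fun l _ => hSN l).trans (by simp [I])
  have hD {s : α} (hs : s ∈ Q ∪ I.biUnion S) :
      infEDist s X ≤ ⨆ s ∈ Q ∪ I.biUnion S, infEDist s X :=
    le_iSup₂ (f := fun s (_ : s ∈ Q ∪ I.biUnion S) => infEDist s X) s hs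
  exact infEDist_le_of_separated_cover hε hε₁ hQ hcover hR
    (fun hR l => hS l (sampleScale_pos hR hε l)) hXn hX
    (fun q hq => hD (Finset.mem_union_left _ hq))
    fun l hl s hs => hD (Finset.mem_union_right _ (hSU hl hs))

end Coreset

section FiniteWeights

variable {G : SimpleGraph V} {w : Sym2 V → ℝ≥0∞} {u v : V} {L : ℝ}

/-- The subgraph of the edges of finite weight. -/
def finiteWeightSubgraph (G : SimpleGraph V) (w : Sym2 V → ℝ≥0∞) : SimpleGraph V where
  Adj u v := G.Adj u v ∧ w s(u, v) ≠ ⊤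
  symm := ⟨fun _ _ h => ⟨h.1.symm, Sym2.eq_swap ▸ h.2⟩⟩
  loopless := ⟨fun _ h => h.1.ne rfl⟩

/-- Infinite weights become `0`, but they do not occur in `finiteWeightSubgraph`. -/
noncomputable def finiteWeight (w : Sym2 V → ℝ≥0∞) (e : Sym2 V) : ℝ≥0 := (w e).toNNReal

theorem finiteWeightSubgraph_le : finiteWeightSubgraph G w ≤ G := fun _ _ h => h.1

theorem walkWeight_cons {x : V} (h : G.Adj u v) (p : G.Walk v x) :
    walkWeight w (p.cons h) = w s(u, v) + walkWeight w p := by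
  simp [walkWeight]

theorem exists_walkWeight_eq_walkLength (p : (finiteWeightSubgraph G w).Walk u v) :
    ∃ q : G.Walk u v, walkWeight w q = walkLength (finiteWeight w) p := by
  induction p with
  | nil => exact ⟨.nil, by simp [walkWeight, walkLength]⟩
  | cons hadj p ih =>
    obtain ⟨q, hq⟩ := ih
    refine ⟨.cons hadj.1 q, ?_⟩
    rw [walkWeight_cons, walkLength_cons, hq, ENNReal.coe_add, finiteWeight,
      ENNReal.coe_toNNReal hadj.2]

theorem exists_walkLength_eq_walkWeight (q : G.Walk u v) (hq : walkWeight w q ≠ ⊤) :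
    ∃ p : (finiteWeightSubgraph G w).Walk u v, walkLength (finiteWeight w) p = walkWeight w q := by
  induction q with
  | nil => exact ⟨.nil, by simp [walkWeight, walkLength]⟩
  | cons hadj q ih =>
    rw [walkWeight_cons, ENNReal.add_ne_top] at hq
    obtain ⟨p, hp⟩ := ih hq.2
    have hadj' : (finiteWeightSubgraph G w).Adj _ _ := ⟨hadj, hq.1⟩
    refine ⟨.cons hadj' p, ?_⟩
    rw [walkWeight_cons, walkLength_cons, ENNReal.coe_add, hp, finiteWeight,
      ENNReal.coe_toNNReal hq.1]

theorem gdist_le_of_hasWalkIn {A : Set V}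
    (h : HasWalkIn (finiteWeightSubgraph G w) (finiteWeight w) A u v L) :
    gdist G w u v ≤ ENNReal.ofReal L := by
  obtain ⟨p, -, hp⟩ := h
  obtain ⟨q, hq⟩ := exists_walkWeight_eq_walkLength p
  refine (iInf_le _ q).trans (hq.trans_le ?_)
  rw [← ENNReal.ofReal_coe_nnreal]
  exact ENNReal.ofReal_le_ofReal hp

theorem hasWalkIn_of_gdist_le [Finite V] (hL : 0 ≤ L) (h : gdist G w u v ≤ ENNReal.ofReal L) :
    HasWalkIn (finiteWeightSubgraph G w) (finiteWeight w) Set.univ u v L := by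
  have exists_walk {q : G.Walk u v} (hq : walkWeight w q ≠ ⊤) :
      ∃ M : ℝ, HasWalkIn (finiteWeightSubgraph G w) (finiteWeight w) Set.univ u v M ∧
        ENNReal.ofReal M = walkWeight w q := by
    obtain ⟨p, hp⟩ := exists_walkLength_eq_walkWeight q hq
    exact ⟨_, ⟨p, fun _ _ => Set.mem_univ _, le_rfl⟩, by rw [ENNReal.ofReal_coe_nnreal, hp]⟩
  obtain ⟨q, hq⟩ := iInf_lt_iff.1 (h.trans_lt ENNReal.ofReal_lt_top)
  obtain ⟨M, hM, -⟩ := exists_walk hq.ne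
  refine (hasWalkIn_distIn hM).mono subset_rfl ?_
  rw [← ENNReal.ofReal_le_ofReal_iff hL]
  refine le_trans (le_iInf fun q' => ?_) h
  rcases eq_or_ne (walkWeight w q') ⊤ with hq' | hq'
  · exact hq' ▸ le_top
  · obtain ⟨M', hM', hMq⟩ := exists_walk hq'
    exact hMq ▸ ENNReal.ofReal_le_ofReal (distIn_le hM')

theorem gdist_le_gdist_swap (G : SimpleGraph V) (w : Sym2 V → ℝ≥0∞) (u v : V) :
    gdist G w u v ≤ gdist G w v u := by
  refine le_iInf fun p => (iInf_le _ p.reverse).trans_eq ?_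
  simp [walkWeight, SimpleGraph.Walk.edges_reverse, List.sum_reverse]

/-- The shortest-path pseudometric, for which `pdist` is `Metric.infEDist`. -/
@[reducible]
noncomputable def pathPseudoEMetricSpace (G : SimpleGraph V) (w : Sym2 V → ℝ≥0∞) :
    PseudoEMetricSpace V where
  edist := gdist G w
  edist_self u := le_zero_iff.1 ((iInf_le _ .nil).trans_eq (by simp [walkWeight]))
  edist_comm u v := le_antisymm (gdist_le_gdist_swap G w u v) (gdist_le_gdist_swap G w v u)
  edist_triangle u v x := by
    simp only [gdist, ENNReal.iInf_add, ENNReal.add_iInf]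
    refine le_iInf₂ fun q p => (iInf_le _ (p.append q)).trans_eq ?_
    simp [walkWeight, SimpleGraph.Walk.edges_append]

end FiniteWeights

section SingleScale

/-- The size of the coreset for `k` centers at a single scale. -/
noncomputable def scaleCoresetBound (h k : ℕ) (ε : ℝ) : ℕ :=
  (k * (hubBound h ε * ⌊6 / ε + 2⌋₊) * hubBound h ε + 1) ^ hubBound h ε

theorem exists_isCoverCoreset [Finite V] [Nonempty V] {G : SimpleGraph V} {h : ℕ} (hh : 2 ≤ h)
    (hminor : ¬ HasCompleteMinor G h) (w : Sym2 V → ℝ≥0∞) {ε r : ℝ} (hε : 0 < ε) (hr : 0 < r)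
    (k : ℕ) (P : Finset V) :
    letI := pathPseudoEMetricSpace G w
    ∃ S ⊆ P, S.card ≤ scaleCoresetBound h k ε ∧ IsCoverCoreset k P S r (r * (1 + ε / 3)) := by
  let := pathPseudoEMetricSpace G w
  have hubs := hasHubs_of_not_hasCompleteMinor (G := finiteWeightSubgraph G w) hh
    (mt (·.mono finiteWeightSubgraph_le) hminor) (finiteWeight w) hε hr
  obtain ⟨S, hSP, hcard, hS⟩ := hubs.exists_subset_forall_cover (by positivity) k P
  refine ⟨S, hSP, hcard.trans_eq ?_, fun X hX hcover p hp => ?_⟩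
  · rw [scaleCoresetBound, show r / (ε * r / 6) = 6 / ε by field_simp]
  simp only [infEDist_le_ofReal_iff] at hcover ⊢
  obtain ⟨x, hx, hpx⟩ := hS X hX (fun s hs => (hcover s hs).imp fun x hx =>
    ⟨hx.1, hasWalkIn_of_gdist_le hr.le hx.2⟩) p hp
  exact ⟨x, hx, gdist_le_of_hasWalkIn (hpx.mono subset_rfl (by linarith))⟩

end SingleScale

section Estimates

variable {h k : ℕ} {ε c Γ : ℝ}

theorem choose_le_choose_ceil (hε : 0 < ε) (hε₁ : ε ≤ 1) :
    (2 * ⌈36 * (h : ℝ) / ε⌉₊ + (h - 2)).choose (h - 2) ≤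
      (h - 2 + 2 * ⌈36 * (h : ℝ) / ε⌉₊).choose (h - 1) := by
  have hle : h ≤ ⌈36 * (h : ℝ) / ε⌉₊ := by
    refine Nat.cast_le.1 (((le_div_iff₀ hε).2 ?_).trans (Nat.le_ceil (36 * (h : ℝ) / ε)))
    nlinarith [h.cast_nonneg (α := ℝ)]
  rcases lt_or_ge h 2 with hh | hh
  · rw [Nat.sub_eq_zero_of_le hh.le, Nat.sub_eq_zero_of_le (Nat.le_of_lt_succ hh),
      Nat.choose_zero_right, Nat.choose_zero_right]
  rw [add_comm, show h - 1 = h - 2 + 1 by lia]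
  exact Nat.choose_le_succ_of_lt_half_left (by lia)

theorem hubBound_le (hh : 1 ≤ h) (hε : 0 < ε) (hε₁ : ε ≤ 1) :
    (hubBound h ε : ℝ) ≤ ((h - 2 + 2 * ⌈36 * (h : ℝ) / ε⌉₊).choose (h - 1) : ℝ) *
      (12 + 72 / ε) * ((h : ℝ) - 1) := by
  have hfloor : (⌊48 / ε + 4⌋₊ : ℝ) ≤ 12 + 72 / ε := by
    refine (Nat.floor_le (by positivity)).trans ?_
    rw [add_comm]
    gcongr <;> norm_num
  have hchoose := choose_le_choose_ceil (h := h) hε hε₁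
  rw [hubBound, mul_assoc, mul_comm (12 + 72 / ε), ← Nat.cast_pred hh]
  push_cast
  gcongr

theorem one_le_choose_mul (hh : 2 ≤ h) (hε : 0 < ε) :
    1 ≤ ((h - 2 + 2 * ⌈36 * (h : ℝ) / ε⌉₊).choose (h - 1) : ℝ) *
      (12 + 72 / ε) * ((h : ℝ) - 1) := by
  have hceil : 0 < ⌈36 * (h : ℝ) / ε⌉₊ := Nat.ceil_pos.2 (by positivity)
  have hchoose : 0 < (h - 2 + 2 * ⌈36 * (h : ℝ) / ε⌉₊).choose (h - 1) :=
    Nat.choose_pos (by lia)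
  have hh' : (2 : ℝ) ≤ h := by exact_mod_cast hh
  have hdiv : 0 < 72 / ε := by positivity
  exact one_le_mul_of_one_le_of_one_le (one_le_mul_of_one_le_of_one_le
    (by exact_mod_cast hchoose) (by linarith)) (by linarith)

theorem two_mul_le_three_mul (hk : 1 ≤ k) (hε : 0 < ε) (hc : 0 ≤ c) :
    2 * c ≤ 3 * (c + 1) * (2 * (k : ℝ) + c * (4 + 3 / ε + 2 * (k : ℝ))) := by
  have hk' : (1 : ℝ) ≤ k := by exact_mod_cast hk
  have : 0 ≤ c * (4 + 3 / ε + 2 * (k : ℝ)) := by positivity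
  nlinarith

theorem kernelBase_le {a : ℕ} (hε : 0 < ε) (ha : (a : ℝ) ≤ c) (hc : 1 ≤ c) (hΓ : 2 * c ≤ Γ) :
    ((k * (a * ⌊6 / ε + 2⌋₊) * a + 1 : ℕ) : ℝ) ≤
      2 * c * (Γ * (k : ℝ) + 2) * (3 / ε + 2) ^ c := by
  have hΓ₀ : 0 ≤ Γ := by linarith
  have hfloor : (⌊6 / ε + 2⌋₊ : ℝ) ≤ 2 * (3 / ε + 2) := calc
    (⌊6 / ε + 2⌋₊ : ℝ) ≤ 6 / ε + 2 := Nat.floor_le (by positivity)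
    _ ≤ 6 / ε + 4 := by linarith
    _ = 2 * (3 / ε + 2) := by ring
  have hb : 2 ≤ 3 / ε + 2 := le_add_of_nonneg_left (by positivity)
  have hb' : 3 / ε + 2 ≤ (3 / ε + 2) ^ c := Real.self_le_rpow_of_one_le (by linarith) hc
  calc ((k * (a * ⌊6 / ε + 2⌋₊) * a + 1 : ℕ) : ℝ)
      ≤ k * (c * (2 * (3 / ε + 2))) * c + 1 * 1 * 1 := by push_cast; gcongr; norm_num
    _ = c * (2 * c * k) * (3 / ε + 2) + 1 * 1 * 1 := by ring
    _ ≤ 2 * c * (Γ * k) * (3 / ε + 2) + 2 * c * 2 * (3 / ε + 2) := by gcongr <;> linarith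
    _ = 2 * c * (Γ * k + 2) * (3 / ε + 2) := by ring
    _ ≤ 2 * c * (Γ * (k : ℝ) + 2) * (3 / ε + 2) ^ c := by gcongr

theorem two_le_kernelBase (hε : 0 < ε) (hc : 1 ≤ c) (hΓ : 2 * c ≤ Γ) :
    2 ≤ 2 * c * (Γ * (k : ℝ) + 2) * (3 / ε + 2) ^ c := by
  have hΓk : 0 ≤ Γ * k := mul_nonneg (by linarith) k.cast_nonneg
  have hb : 1 ≤ (3 / ε + 2) ^ c :=
    Real.one_le_rpow (by linarith [show 0 ≤ 3 / ε by positivity]) (by linarith)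
  nlinarith [mul_nonneg (by linarith : 0 ≤ c) hΓk]

theorem coresetSize_le {n a : ℕ} {q : ℝ} (hε : 0 < ε) (hε₁ : ε ≤ 1) (hq : 2 ≤ q)
    (hn : (n : ℝ) ≤ q) (ha : (a : ℝ) ≤ c) :
    ((k + 1 + (⌈8 / ε ^ 2⌉₊ + 1) * n ^ a : ℕ) : ℝ) ≤ k + 9 / ε ^ 3 * q ^ (c + 1) := by
  have hpow : (n : ℝ) ^ a ≤ q ^ c := calc
    (n : ℝ) ^ a ≤ q ^ a := by gcongr
    _ = q ^ (a : ℝ) := (Real.rpow_natCast q a).symm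
    _ ≤ q ^ c := Real.rpow_le_rpow_of_exponent_le (by linarith) ha
  have hqc : 1 ≤ q ^ c := Real.one_le_rpow (by linarith) (a.cast_nonneg.trans ha)
  have hceil : (⌈8 / ε ^ 2⌉₊ : ℝ) ≤ 8 / ε ^ 2 + 1 := (Nat.ceil_lt_add_one (by positivity)).le
  have hε3 : 8 / ε ^ 2 + 3 ≤ 9 / ε ^ 3 * 2 := by
    have h₂ : 1 ≤ 1 / ε ^ 3 := one_le_one_div (by positivity) (pow_le_one₀ hε.le hε₁)
    have h₃ : 1 / ε ^ 2 ≤ 1 / ε ^ 3 :=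
      one_div_le_one_div_of_le (by positivity) (pow_le_pow_of_le_one hε.le hε₁ (by norm_num))
    rw [div_eq_mul_one_div 8, div_eq_mul_one_div 9]
    linarith
  push_cast
  rw [add_assoc]
  gcongr (k : ℝ) + ?_
  calc 1 + (⌈8 / ε ^ 2⌉₊ + 1) * (n : ℝ) ^ a ≤ q ^ c + (8 / ε ^ 2 + 1 + 1) * q ^ c := by gcongr
    _ = (8 / ε ^ 2 + 3) * q ^ c := by ring
    _ ≤ 9 / ε ^ 3 * 2 * q ^ c := by gcongr
    _ ≤ 9 / ε ^ 3 * q * q ^ c := by gcongr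
    _ = 9 / ε ^ 3 * q ^ (c + 1) := by
      rw [Real.rpow_add (by linarith), Real.rpow_one]
      ring

end Estimates

theorem stmt_13 {V : Type} [Fintype V] (h : ℕ) (hh : 1 ≤ h) (k : ℕ) (hk : 1 ≤ k)
    (G : SimpleGraph V) (w : Sym2 V → ℝ≥0∞) (hminor : ¬ HasCompleteMinor G h)
    (P F : Set V) (hP : P.Nonempty)
    (ε : ℝ) (hε0 : 0 < ε) (hε1 : ε < 1)
    (c Γ : ℝ)
    (hc : c = ((h - 2 + 2 * ⌈36 * (h : ℝ) / ε⌉₊).choose (h - 1) : ℝ) *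
      (12 + 72 / ε) * ((h : ℝ) - 1))
    (hΓ : Γ = 3 * (c + 1) * (2 * (k : ℝ) + c * (4 + 3 / ε + 2 * (k : ℝ)))) :
    ∃ S : Set V, S ⊆ P ∧
      (S.ncard : ℝ) ≤ (k : ℝ) +
        9 / ε ^ 3 * (2 * c * (Γ * (k : ℝ) + 2) * (3 / ε + 2) ^ c) ^ (c + 1) ∧
      ∀ X : Set V, X ⊆ F → X.Nonempty → X.ncard ≤ k →
        ∀ q ∈ P, pdist G w q X ≤ ENNReal.ofReal (1 + ε) * ⨆ s ∈ S, pdist G w s X := by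
  have : Nonempty V := hP.to_type
  have hh2 : 2 ≤ h := by
    have : h ≠ 1 := fun h1 => hminor (h1 ▸ hasCompleteMinor_one G)
    lia
  lift P to Finset V using P.toFinite
  let := pathPseudoEMetricSpace G w
  obtain ⟨S, hSP, hcard, hS⟩ := exists_coreset hε0 hε1.le hP fun r hr =>
    exists_isCoverCoreset hh2 hminor w hε0 hr k P
  refine ⟨S, Finset.coe_subset.2 hSP, ?_, fun X _ hXn hX => ?_⟩
  · have ha : (hubBound h ε : ℝ) ≤ c := hc ▸ hubBound_le hh hε0 hε1.le
    have hc1 : 1 ≤ c := hc ▸ one_le_choose_mul hh2 hε0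
    have hΓc : 2 * c ≤ Γ := hΓ ▸ two_mul_le_three_mul hk hε0 (by linarith)
    rw [Set.ncard_coe_finset]
    exact (Nat.cast_le.2 hcard).trans (coresetSize_le hε0 hε1.le (two_le_kernelBase hε0 hc1 hΓc)
      (kernelBase_le hε0 ha hc1 hΓc) ha)
  · lift X to Finset V using X.toFinite
    exact hS X hXn (Set.ncard_coe_finset X ▸ hX)

end ScatterDim
end
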